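/- Let (K_{i(e)}, w_e, p_e)_{e∈E} be an irreducible contractive Markov system with average contracting rate a ∈ (0,1) on a metric space in which every set of finite diameter is relatively compact, with K_1,…,K_N nonempty open sets, such that each p_e|_{K_{i(e)}} is Dini-continuous and bounded below by some δ > 0 (E finite, i : E → V surjective). Then, with μ its unique invariant Borel probability measure and M the associated generalized Markov measure: (i) M is the unique equilibrium state for the energy function u; (ii) P(u) = 0; (iii) F(M) = μ; and (iv) h_M(S) = −∑_{e∈E} ∫_{K_{i(e)}} p_e log p_e dμ. -/

import Mathlib

open MeasureTheory Filter Topology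
open scoped ENNReal

/-- A contractive Markov system (CMS) on a metric space `K`, with vertex set `Fin N`
and (finite) edge set `E`. -/
structure CMS (K : Type*) [MetricSpace K] [MeasurableSpace K]
    (N : ℕ) (E : Type*) [Fintype E] where
  ι : E → Fin N
  τ : E → Fin N
  Ks : Fin N → Set K
  Ks_nonempty : ∀ i, (Ks i).Nonempty
  Ks_meas : ∀ i, MeasurableSet (Ks i)
  Ks_disj : ∀ i j, i ≠ j → Disjoint (Ks i) (Ks j)
  Ks_cover : (⋃ i, Ks i) = Set.univ
  w : E → K → K
  w_meas : ∀ e, Measurable (w e)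
  w_maps : ∀ e, Set.MapsTo (w e) (Ks (ι e)) (Ks (τ e))
  p : E → K → ℝ
  p_meas : ∀ e, Measurable (p e)
  p_nonneg : ∀ e x, 0 ≤ p e x
  p_sum_one : ∀ x, ∑ e, p e x = 1
  p_zero : ∀ e x, x ∉ Ks (ι e) → p e x = 0
  a : ℝ
  a_pos : 0 < a
  a_lt_one : a < 1
  contractive : ∀ i, ∀ x ∈ Ks i, ∀ y ∈ Ks i,
    ∑ e, p e x * dist (w e x) (w e y) ≤ a * dist x y

namespace CMS

variable {K : Type*} [MetricSpace K] [MeasurableSpace K]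
  {N : ℕ} {E : Type*} [Fintype E]

/-- The Markov operator `U` acting on functions. -/
noncomputable def Ufun (S : CMS K N E) (f : K → ℝ) : K → ℝ :=
  fun x => ∑ e, S.p e x * f (S.w e x)

/-- The adjoint Markov operator `U*` acting on measures. -/
noncomputable def adjoint (S : CMS K N E) (ν : Measure K) : Measure K :=
  ν.bind fun x => ∑ e, ENNReal.ofReal (S.p e x) • Measure.dirac (S.w e x)

/-- The weight `p_{e₁}(x) p_{e₂}(w_{e₁} x) ⋯` of a cylinder `[e₁, …, e_k]` started at `x`. -/
noncomputable def cylWeight (S : CMS K N E) : K → List E → ℝ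
  | _, [] => 1
  | x, e :: es => S.p e x * S.cylWeight (S.w e x) es

/-- `M` is the generalized Markov measure associated with the CMS and invariant measure `μ`. -/
def IsGMarkovMeasure [MeasurableSpace E] (S : CMS K N E)
    (μ : Measure K) (M : Measure (ℤ → E)) : Prop :=
  IsProbabilityMeasure M ∧
  ∀ (m : ℤ) (es : List E),
    M {σ | ∀ j : Fin es.length, σ (m + (j : ℕ)) = es.get j} =
      ENNReal.ofReal (∫ x, S.cylWeight x es ∂μ)

/-- `comp S σ n = w_{σ 0} ∘ w_{σ (-1)} ∘ ⋯ ∘ w_{σ (-n)}`. -/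
noncomputable def comp (S : CMS K N E) (σ : ℤ → E) : ℕ → K → K
  | 0, x => S.w (σ 0) x
  | n + 1, x => S.comp σ n (S.w (σ (-((n : ℤ) + 1))) x)

/-- `codeSeq S xs σ n = w_{σ 0} ∘ ⋯ ∘ w_{σ (-n)} (x_{i(σ (-n))})`. -/
noncomputable def codeSeq (S : CMS K N E) (xs : Fin N → K) (σ : ℤ → E) (n : ℕ) : K :=
  S.comp σ n (xs (S.ι (σ (-(n : ℤ)))))

end CMS

/-- The left shift `S` on `Σ = E^ℤ`. -/
def shiftL (E : Type*) : (ℤ → E) → ℤ → E := fun σ j => σ (j + 1)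

/-- The `n`-fold left shift `S^n` on `Σ = E^ℤ`, `n ∈ ℤ`. -/
def shiftZ (E : Type*) (n : ℤ) : (ℤ → E) → ℤ → E := fun σ j => σ (j + n)

namespace CMS

variable {K : Type*} [MetricSpace K] [MeasurableSpace K]
  {N : ℕ} {E : Type*} [Fintype E]

/-- The subshift `Σ_G` of (two-sided) paths of the directed multigraph. -/
def SigmaG (S : CMS K N E) : Set (ℤ → E) :=
  {σ | ∀ j : ℤ, S.τ (σ j) = S.ι (σ (j + 1))}

/-- The set `D` of paths where the coding limit exists. -/
def Dset (S : CMS K N E) (xs : Fin N → K) : Set (ℤ → E) :=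
  {σ ∈ S.SigmaG | ∃ L : K, Tendsto (S.codeSeq xs σ) atTop (nhds L)}

/-- `Y = ⋂_{n ∈ ℤ} S^n(D)`. -/
def Yset (S : CMS K N E) (xs : Fin N → K) : Set (ℤ → E) :=
  ⋂ n : ℤ, shiftZ E n '' S.Dset xs

/-- The coding map `F`. -/
noncomputable def F [Nonempty K] (S : CMS K N E) (xs : Fin N → K) (σ : ℤ → E) : K :=
  limUnder atTop (S.codeSeq xs σ)

end CMS

/-- The modulus of uniform continuity of `f` on the set `A`. -/
noncomputable def modulusOn {K : Type*} [MetricSpace K] (f : K → ℝ) (A : Set K) (t : ℝ) : ℝ :=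
  sSup {s | ∃ x ∈ A, ∃ y ∈ A, dist x y ≤ t ∧ s = |f x - f y|}

/-- Dini-continuity of `f` on `A`: `∫_0^c φ(t)/t dt < ∞` for some `c > 0`. -/
def DiniOn {K : Type*} [MetricSpace K] (f : K → ℝ) (A : Set K) : Prop :=
  ∃ c > 0, ∫⁻ t in Set.Ioc (0 : ℝ) c, ENNReal.ofReal (modulusOn f A t / t) < ⊤

/-- Entropy of the partition of `Σ = E^ℤ` into cylinders `[e₀, …, e_{n-1}]₀`. -/
noncomputable def cylEnt {E : Type*} [Fintype E] [MeasurableSpace E]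
    (Λ : Measure (ℤ → E)) (n : ℕ) : ℝ :=
  ∑ es : Fin n → E, Real.negMulLog ((Λ {σ | ∀ j : Fin n, σ ((j : ℕ) : ℤ) = es j}).toReal)

/-- Kolmogorov–Sinai entropy of the left shift with respect to an invariant measure,
via the generating zero-time partition. -/
noncomputable def KSEntropy {E : Type*} [Fintype E] [MeasurableSpace E]
    (Λ : Measure (ℤ → E)) : ℝ :=
  ⨅ n : ℕ, cylEnt Λ (n + 1) / ((n : ℝ) + 1)

def ShiftInvariant {E : Type*} [MeasurableSpace E] (Λ : Measure (ℤ → E)) : Prop :=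
  Measure.map (shiftL E) Λ = Λ

/-- `∫⁻ (-u) dΘ` for an extended-real valued energy function `u ≤ 0`. -/
noncomputable def negPartInt {α : Type*} [MeasurableSpace α]
    (u : α → EReal) (Θ : Measure α) : ℝ≥0∞ :=
  ∫⁻ x, (if u x = ⊥ then (⊤ : ℝ≥0∞) else ENNReal.ofReal (-(u x).toReal)) ∂Θ

/-- The free energy `h_Θ(S) + Θ(u)`, as an extended real number. -/
noncomputable def freeEnergy {E : Type*} [Fintype E] [MeasurableSpace E]
    (u : (ℤ → E) → EReal) (Θ : Measure (ℤ → E)) : EReal :=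
  (KSEntropy Θ : EReal) - ((negPartInt u Θ : ℝ≥0∞) : EReal)

/-- The pressure `P(u) = sup_Θ (h_Θ(S) + Θ(u))` over shift-invariant probability measures. -/
noncomputable def pressure {E : Type*} [Fintype E] [MeasurableSpace E]
    (u : (ℤ → E) → EReal) : EReal :=
  ⨆ (Θ : Measure (ℤ → E)) (_ : IsProbabilityMeasure Θ ∧ ShiftInvariant Θ), freeEnergy u Θ

/-- `Λ` is an equilibrium state for the energy function `u`. -/
def IsEquilibrium {E : Type*} [Fintype E] [MeasurableSpace E]
    (u : (ℤ → E) → EReal) (Λ : Measure (ℤ → E)) : Prop :=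
  IsProbabilityMeasure Λ ∧ ShiftInvariant Λ ∧ freeEnergy u Λ = pressure u

/-- Extended-real logarithm, `elog x = ⊥` for `x ≤ 0`. -/
noncomputable def elog (x : ℝ) : EReal :=
  if x ≤ 0 then (⊥ : EReal) else ((Real.log x : ℝ) : EReal)

/-- The σ-algebra `𝓕` on `E^ℤ` generated by the coordinates `σ_j`, `j ≤ 0`. -/
def pastAlg (E : Type*) [MeasurableSpace E] : MeasurableSpace (ℤ → E) :=
  MeasurableSpace.comap (fun (σ : ℤ → E) (j : {j : ℤ // j ≤ 0}) => σ j.1) inferInstance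

/-- `g_Λ(σ) = g_{Λ σ₁}(σ)` where `g_{Λ e} = E_Λ(1_{{σ₁ = e}} | 𝓕)`. -/
noncomputable def gfun {E : Type*} [Fintype E] [MeasurableSpace E]
    (Λ : Measure (ℤ → E)) (σ : ℤ → E) : ℝ :=
  (Λ[Set.indicator {τ : ℤ → E | τ 1 = σ 1} (fun _ => (1 : ℝ)) | pastAlg E]) σ

open Classical in
/-- The energy function `u(σ) = log p_{σ₁}(F(σ))` on `Y`, `-∞` off `Y`. -/
noncomputable def CMS.energyU {K : Type*} [MetricSpace K] [MeasurableSpace K] [Nonempty K]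
    {N : ℕ} {E : Type*} [Fintype E]
    (S : CMS K N E) (xs : Fin N → K) (σ : ℤ → E) : EReal :=
  if σ ∈ S.Yset xs then elog (S.p (σ 1) (S.F xs σ)) else ⊥

/-- Irreducibility (strong connectedness) of the directed multigraph of the system. -/
def CMS.IrreducibleGraph {K : Type*} [MetricSpace K] [MeasurableSpace K]
    {N : ℕ} {E : Type*} [Fintype E] (S : CMS K N E) : Prop :=
  ∀ i j : Fin N, ∃ (n : ℕ) (f : Fin (n + 1) → E),
    S.ι (f 0) = i ∧ S.τ (f (Fin.last n)) = j ∧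
    ∀ k : Fin n, S.τ (f k.castSucc) = S.ι (f k.succ)

/-!
If `μ` and `ν` are invariant, then so are the mutually singular measures `μ - μ ⊓ ν` and
`ν - μ ⊓ ν`; hence uniqueness follows once nonzero invariant measures are never mutually singular.
By irreducibility both charge a common vertex set, and then Dini continuity makes the probabilities
of words read off from two nearby points comparable, while contraction on average brings the two
orbits together. Existence follows from the tightness of Cesàro means, the distance to the base
point of the vertex set being a Lyapunov function.

For a shift-invariant `Λ`, compare the law of the letters `σ 1` after a word `v` with the weights
`Λ(v) * p_e(codePoint v)`. The relative entropies of the two are nonnegative, and their Cesàro mean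
tends to `-∫ u dΛ - h(Λ)`; hence `P(u) ≤ 0`. By Pinsker's inequality, equality forces the `ℓ¹`
distances to be Cesàro null, that is, `σ 1` has conditional law `p_•(F σ)` given the past. Then
`F(Λ)` is invariant, so it is `μ`, and the cylinder masses of `Λ` are those of `M`. Contraction on
average shows conversely that `M` has Cesàro null distances, so that it is an equilibrium state.
-/

open ProbabilityTheory (Kernel IsMarkovKernel)
open scoped ProbabilityTheory

section InvariantMeasures

variable {α : Type*} [MeasurableSpace α] {κ : Kernel α α} {μ ν : Measure α}

lemma kernel_comp_mono (κ : Kernel α α) (h : μ ≤ ν) : κ ∘ₘ μ ≤ κ ∘ₘ ν := by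
  refine Measure.le_iff.2 fun s hs ↦ ?_
  simp only [Measure.bind_apply hs κ.aemeasurable]
  exact lintegral_mono' h le_rfl

lemma kernel_invariant_inf [IsMarkovKernel κ] [IsFiniteMeasure μ]
    (hμ : κ.Invariant μ) (hν : κ.Invariant ν) : κ.Invariant (μ ⊓ ν) := by
  have hle : κ ∘ₘ (μ ⊓ ν) ≤ μ ⊓ ν :=
    le_inf ((kernel_comp_mono κ inf_le_left).trans_eq hμ)
      ((kernel_comp_mono κ inf_le_right).trans_eq hν)
  have : IsFiniteMeasure (κ ∘ₘ (μ ⊓ ν)) :=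
    isFiniteMeasure_of_le μ (hle.trans inf_le_left)
  exact Measure.eq_of_le_of_measure_univ_eq hle Measure.comp_apply_univ

lemma measure_add_right_cancel [IsFiniteMeasure ν] {μ₁ μ₂ : Measure α}
    (h : μ₁ + ν = μ₂ + ν) : μ₁ = μ₂ := by
  ext s _
  have hs := congrArg (fun m : Measure α ↦ m s) h
  simpa only [Measure.add_apply, ENNReal.add_left_inj (measure_ne_top ν s)] using hs

lemma kernel_invariant_of_add_right [IsFiniteMeasure ν]
    (h : κ.Invariant (μ + ν)) (hν : κ.Invariant ν) : κ.Invariant μ := by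
  refine measure_add_right_cancel (ν := ν) ?_
  calc κ ∘ₘ μ + ν = κ ∘ₘ (μ + ν) := by rw [Measure.comp_add, hν.def]
    _ = μ + ν := h

lemma mutuallySingular_sub_inf (μ ν : Measure α) [IsFiniteMeasure μ] [IsFiniteMeasure ν] :
    (μ - μ ⊓ ν) ⟂ₘ (ν - μ ⊓ ν) := by
  have : IsFiniteMeasure (μ ⊓ ν) := isFiniteMeasure_of_le μ inf_le_left
  rw [Measure.mutuallySingular_iff_disjoint, disjoint_iff_inf_le]
  set ξ := (μ - μ ⊓ ν) ⊓ (ν - μ ⊓ ν)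
  have hξ : ξ + μ ⊓ ν ≤ 0 + μ ⊓ ν := by
    rw [zero_add]
    refine le_inf ?_ ?_
    · exact (add_le_add_left inf_le_left _).trans_eq (Measure.sub_add_cancel_of_le inf_le_left)
    · exact (add_le_add_left inf_le_right _).trans_eq (Measure.sub_add_cancel_of_le inf_le_right)
  refine Measure.le_iff.2 fun s hs ↦ ?_
  have h := Measure.le_iff.1 hξ s hs
  rw [Measure.add_apply, Measure.add_apply] at h
  exact (ENNReal.add_le_add_iff_right (measure_ne_top _ s)).1 h

theorem eq_of_invariant_of_not_mutuallySingular [IsMarkovKernel κ]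
    (hκ : ∀ ν₁ ν₂ : Measure α, IsFiniteMeasure ν₁ → IsFiniteMeasure ν₂ → ν₁ ≠ 0 → ν₂ ≠ 0 →
      κ.Invariant ν₁ → κ.Invariant ν₂ → ¬ ν₁ ⟂ₘ ν₂)
    [IsProbabilityMeasure μ] [IsProbabilityMeasure ν]
    (hμ : κ.Invariant μ) (hν : κ.Invariant ν) : μ = ν := by
  have : IsFiniteMeasure (μ ⊓ ν) := isFiniteMeasure_of_le μ inf_le_left
  have hinf := kernel_invariant_inf hμ hν
  have hμ_add : μ - μ ⊓ ν + μ ⊓ ν = μ := Measure.sub_add_cancel_of_le inf_le_left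
  have hν_add : ν - μ ⊓ ν + μ ⊓ ν = ν := Measure.sub_add_cancel_of_le inf_le_right
  have hμ' : κ.Invariant (μ - μ ⊓ ν) := kernel_invariant_of_add_right (by rwa [hμ_add]) hinf
  have hν' : κ.Invariant (ν - μ ⊓ ν) := kernel_invariant_of_add_right (by rwa [hν_add]) hinf
  have hzero : μ - μ ⊓ ν = 0 ∨ ν - μ ⊓ ν = 0 := by
    by_contra! h
    exact hκ _ _ inferInstance inferInstance h.1 h.2 hμ' hν' (mutuallySingular_sub_inf μ ν)
  rcases hzero with h | h
  · rw [h, zero_add] at hμ_add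
    exact Measure.eq_of_le_of_measure_univ_eq (inf_eq_left.1 hμ_add) (by simp only [measure_univ])
  · rw [h, zero_add] at hν_add
    exact (Measure.eq_of_le_of_measure_univ_eq (inf_eq_right.1 hν_add)
      (by simp only [measure_univ])).symm

end InvariantMeasures

lemma integrable_of_mem_Icc {α : Type*} [MeasurableSpace α] {ν : Measure α} [IsFiniteMeasure ν]
    {f : α → ℝ} (hf : Measurable f) {a b : ℝ} (h : ∀ x, f x ∈ Set.Icc a b) : Integrable f ν :=
  Integrable.of_mem_Icc a b hf.aemeasurable (Eventually.of_forall h)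

section LipschitzSeparation

variable {X : Type*} [PseudoMetricSpace X] [MeasurableSpace X] [BorelSpace X]

lemma exists_lipschitzWith_eq_one_integral_lt {ν : Measure X} [IsFiniteMeasure ν] {C : Set X}
    (hC : IsClosed C) (hνC : ν C = 0) {ε : ℝ} (hε : 0 < ε) :
    ∃ (L : NNReal) (f : X → ℝ), LipschitzWith L f ∧ (∀ x, f x ∈ Set.Icc 0 1) ∧
      (∀ x ∈ C, f x = 1) ∧ ∫ x, f x ∂ν < ε := by
  obtain ⟨u, -, u_pos, u_lim⟩ := exists_seq_strictAnti_tendsto (0 : ℝ)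
  have hlim := tendsto_lintegral_thickenedIndicator_of_isClosed ν hC u_pos u_lim
  rw [hνC] at hlim
  obtain ⟨m, hm⟩ := (hlim.eventually (gt_mem_nhds (ENNReal.ofReal_pos.2 hε))).exists
  have hlip := lipschitzWith_thickenedIndicator (u_pos m) C
  refine ⟨_, fun x ↦ thickenedIndicator (u_pos m) C x, NNReal.isometry_coe.lipschitz.comp hlip,
    fun x ↦ ⟨NNReal.coe_nonneg _, mod_cast thickenedIndicator_le_one (u_pos m) C x⟩,
    fun x hx ↦ by simp only [thickenedIndicator_one (u_pos m) C hx, NNReal.coe_one], ?_⟩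
  rw [integral_eq_lintegral_of_nonneg_ae (Eventually.of_forall fun x ↦ NNReal.coe_nonneg _)
    (NNReal.continuous_coe.comp hlip.continuous).aestronglyMeasurable]
  simp only [ENNReal.ofReal_coe_nnreal]
  exact (ENNReal.lt_ofReal_iff_toReal_lt hm.ne_top).1 hm

lemma exists_lipschitzWith_integral_lt_of_mutuallySingular {ν₁ ν₂ : Measure X}
    [IsFiniteMeasure ν₁] [IsFiniteMeasure ν₂] (h : ν₁ ⟂ₘ ν₂) {ε : ℝ} (hε : 0 < ε) :
    ∃ (L : NNReal) (f : X → ℝ), LipschitzWith L f ∧ (∀ x, f x ∈ Set.Icc 0 1) ∧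
      ∫ x, (1 - f x) ∂ν₁ < ε ∧ ∫ x, f x ∂ν₂ < ε := by
  obtain ⟨s, hs, hν₁, hν₂⟩ := h.symm
  obtain ⟨C, hCs, hC, hCε⟩ := hs.exists_isClosed_sdiff_lt (μ := ν₁) (measure_ne_top _ _)
    (ENNReal.ofReal_pos.2 hε).ne'
  obtain ⟨L, f, hlip, hf, hfC, hfε⟩ :=
    exists_lipschitzWith_eq_one_integral_lt hC (measure_mono_null hCs hν₁) hε
  refine ⟨L, f, hlip, hf, ?_, hfε⟩
  have hfi : Integrable f ν₁ := integrable_of_mem_Icc hlip.continuous.measurable hf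
  calc ∫ x, (1 - f x) ∂ν₁ ≤ ∫ x, Cᶜ.indicator (fun _ ↦ (1 : ℝ)) x ∂ν₁ := by
        refine integral_mono ((integrable_const _).sub hfi)
          ((integrable_const _).indicator hC.measurableSet.compl) fun x ↦ ?_
        by_cases hx : x ∈ C
        · simp [hx, hfC x hx]
        · simp [hx, (hf x).1]
    _ = ν₁.real Cᶜ := integral_indicator_one hC.measurableSet.compl
    _ < ε := ?_
  refine (ENNReal.lt_ofReal_iff_toReal_lt (measure_ne_top _ _)).1 (lt_of_le_of_lt ?_ hCε)
  calc ν₁ Cᶜ ≤ ν₁ (s \ C ∪ sᶜ) := measure_mono fun x hx ↦ by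
        by_cases hxs : x ∈ s
        exacts [Or.inl ⟨hxs, hx⟩, Or.inr hxs]
    _ ≤ ν₁ (s \ C) + ν₁ sᶜ := measure_union_le _ _
    _ = ν₁ (s \ C) := by rw [hν₂, add_zero]

end LipschitzSeparation

lemma exists_mem_le_of_integral_lt {X : Type*} [MeasurableSpace X] {ν : Measure X}
    [IsFiniteMeasure ν] {g : X → ℝ} (hg : Integrable g ν) (hg0 : ∀ x, 0 ≤ g x) {B : Set X}
    (hB : MeasurableSet B) {t : ℝ} (ht : ∫ x, g x ∂ν < t * ν.real B) : ∃ x ∈ B, g x ≤ t := by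
  by_contra! hlt
  refine ht.not_ge ?_
  calc t * ν.real B = ∫ _ in B, t ∂ν := by rw [setIntegral_const, smul_eq_mul, mul_comm]
    _ ≤ ∫ x in B, g x ∂ν :=
        setIntegral_mono_on (by simp) hg.integrableOn hB fun x hx ↦ (hlt x hx).le
    _ ≤ ∫ x, g x ∂ν := setIntegral_le_integral hg (Eventually.of_forall hg0)

lemma eventually_measure_inter_ball_pos {X : Type*} [PseudoMetricSpace X] [MeasurableSpace X]
    {ν : Measure X} {A : Set X} (hA : ν A ≠ 0) (z : X) :
    ∀ᶠ R : ℕ in atTop, 0 < ν (A ∩ Metric.ball z R) := by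
  have hmono : Monotone fun R : ℕ ↦ A ∩ Metric.ball z R := fun a b hab ↦
    Set.inter_subset_inter_right _ (Metric.ball_subset_ball (mod_cast hab))
  have hlim := tendsto_measure_iUnion_atTop (μ := ν) hmono
  rw [← Set.inter_iUnion, Metric.iUnion_ball_nat, Set.inter_univ] at hlim
  exact hlim.eventually (lt_mem_nhds (pos_iff_ne_zero.2 hA))

section Dini

lemma ofReal_mul_one_sub_le_setLIntegral_div {φ : ℝ → ℝ} (hφ0 : ∀ t, 0 ≤ φ t)
    (hφ : MonotoneOn φ (Set.Ioi 0)) {a b : ℝ} (ha : 0 < a) (hb : 0 < b) :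
    ENNReal.ofReal (φ (b * a) * (1 - a)) ≤
      ∫⁻ t in Set.Ioc (b * a) b, ENNReal.ofReal (φ t / t) := by
  have hba : 0 < b * a := mul_pos hb ha
  calc ENNReal.ofReal (φ (b * a) * (1 - a))
      = ∫⁻ _ in Set.Ioc (b * a) b, ENNReal.ofReal (φ (b * a) / b) := by
        rw [setLIntegral_const, Real.volume_Ioc,
          ← ENNReal.ofReal_mul (div_nonneg (hφ0 _) hb.le)]
        congr 1
        field_simp
    _ ≤ _ := setLIntegral_mono' measurableSet_Ioc fun t ht ↦
        ENNReal.ofReal_le_ofReal (div_le_div₀ (hφ0 t)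
          (hφ hba (hba.trans ht.1) ht.1.le) (hba.trans ht.1) ht.2)

lemma tsum_ofReal_mul_one_sub_le_setLIntegral_div {φ : ℝ → ℝ} (hφ0 : ∀ t, 0 ≤ φ t)
    (hφ : MonotoneOn φ (Set.Ioi 0)) {a c : ℝ} (ha : 0 < a) (ha1 : a < 1) (hc : 0 < c) :
    ∑' k : ℕ, ENNReal.ofReal (φ (c * a ^ (k + 1)) * (1 - a)) ≤
      ∫⁻ t in Set.Ioc 0 c, ENNReal.ofReal (φ t / t) := by
  have hanti : Antitone fun k : ℕ ↦ c * a ^ k := fun m n hmn ↦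
    mul_le_mul_of_nonneg_left (pow_le_pow_of_le_one ha.le ha1.le hmn) hc.le
  have hdisj : Pairwise
      (Function.onFun Disjoint fun k : ℕ ↦ Set.Ioc (c * a ^ (k + 1)) (c * a ^ k)) := by
    simpa only [Order.succ_eq_add_one] using hanti.pairwise_disjoint_on_Ioc_succ
  have hsub : ⋃ k : ℕ, Set.Ioc (c * a ^ (k + 1)) (c * a ^ k) ⊆ Set.Ioc 0 c :=
    Set.iUnion_subset fun k ↦ Set.Ioc_subset_Ioc (by positivity)
      (mul_le_of_le_one_right hc.le (pow_le_one₀ ha.le ha1.le))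
  calc ∑' k : ℕ, ENNReal.ofReal (φ (c * a ^ (k + 1)) * (1 - a))
      ≤ ∑' k : ℕ, ∫⁻ t in Set.Ioc (c * a ^ (k + 1)) (c * a ^ k), ENNReal.ofReal (φ t / t) := by
        refine ENNReal.tsum_le_tsum fun k ↦ ?_
        simpa only [pow_succ, ← mul_assoc] using
          ofReal_mul_one_sub_le_setLIntegral_div hφ0 hφ ha (b := c * a ^ k) (by positivity)
    _ = ∫⁻ t in ⋃ k : ℕ, Set.Ioc (c * a ^ (k + 1)) (c * a ^ k), ENNReal.ofReal (φ t / t) :=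
        (lintegral_iUnion (fun _ ↦ measurableSet_Ioc) hdisj _).symm
    _ ≤ _ := lintegral_mono_set hsub

lemma summable_comp_mul_pow_of_setLIntegral_div_lt_top {φ : ℝ → ℝ} (hφ0 : ∀ t, 0 ≤ φ t)
    (hφ : MonotoneOn φ (Set.Ioi 0)) {c : ℝ} (hc : 0 < c)
    (hint : ∫⁻ t in Set.Ioc 0 c, ENNReal.ofReal (φ t / t) < ⊤)
    {a : ℝ} (ha : 0 < a) (ha1 : a < 1) {C : ℝ} (hC : 0 < C) :
    Summable fun k : ℕ ↦ φ (C * a ^ k) := by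
  have hsum : Summable fun k : ℕ ↦ φ (c * a ^ (k + 1)) := by
    have hfin := ne_top_of_le_ne_top hint.ne
      (tsum_ofReal_mul_one_sub_le_setLIntegral_div hφ0 hφ ha ha1 hc)
    refine (summable_mul_right_iff (sub_pos.2 ha1).ne').1
      ((ENNReal.summable_toReal hfin).congr fun k ↦ ?_)
    exact ENNReal.toReal_ofReal (mul_nonneg (hφ0 _) (sub_pos.2 ha1).le)
  have hlim : Tendsto (fun m : ℕ ↦ C * a ^ m) atTop (𝓝 0) := by
    simpa only [mul_zero] using (tendsto_pow_atTop_nhds_zero_of_lt_one ha.le ha1).const_mul C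
  obtain ⟨m, hm⟩ := (hlim.eventually (gt_mem_nhds (mul_pos hc ha))).exists
  refine (summable_nat_add_iff m).1 (Summable.of_nonneg_of_le (fun _ ↦ hφ0 _) (fun k ↦ ?_) hsum)
  have hle : C * a ^ (k + m) ≤ c * a ^ (k + 1) := by
    calc C * a ^ (k + m) = C * a ^ m * a ^ k := by ring
      _ ≤ c * a * a ^ k := by gcongr
      _ = c * a ^ (k + 1) := by ring
  exact hφ (Set.mem_Ioi.2 (by positivity)) (Set.mem_Ioi.2 (by positivity)) hle

variable {K : Type*} [MetricSpace K] {f : K → ℝ} {A : Set K}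

lemma modulusOn_nonneg (f : K → ℝ) (A : Set K) (t : ℝ) : 0 ≤ modulusOn f A t := by
  refine Real.sSup_nonneg ?_
  rintro s ⟨x, _, y, _, _, rfl⟩
  exact abs_nonneg _

lemma bddAbove_oscillation (hf : Bornology.IsBounded (f '' A)) (t : ℝ) :
    BddAbove {s | ∃ x ∈ A, ∃ y ∈ A, dist x y ≤ t ∧ s = |f x - f y|} := by
  refine ⟨Metric.diam (f '' A), ?_⟩
  rintro s ⟨x, hx, y, hy, _, rfl⟩
  exact Metric.dist_le_diam_of_mem hf (Set.mem_image_of_mem f hx) (Set.mem_image_of_mem f hy)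

lemma abs_sub_le_modulusOn (hf : Bornology.IsBounded (f '' A)) {x y : K} (hx : x ∈ A)
    (hy : y ∈ A) {t : ℝ} (h : dist x y ≤ t) : |f x - f y| ≤ modulusOn f A t :=
  le_csSup (bddAbove_oscillation hf t) ⟨x, hx, y, hy, h, rfl⟩

lemma monotoneOn_modulusOn (hf : Bornology.IsBounded (f '' A)) :
    MonotoneOn (modulusOn f A) (Set.Ioi 0) := by
  intro s hs t _ hst
  rcases A.eq_empty_or_nonempty with rfl | ⟨z, hz⟩
  · simp [modulusOn]
  refine csSup_le_csSup (bddAbove_oscillation hf t)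
    ⟨_, z, hz, z, hz, by simpa using (Set.mem_Ioi.1 hs).le, rfl⟩ ?_
  rintro r ⟨x, hx, y, hy, hd, rfl⟩
  exact ⟨x, hx, y, hy, hd.trans hst, rfl⟩

lemma DiniOn.summable_modulusOn (hD : DiniOn f A) (hf : Bornology.IsBounded (f '' A))
    {a : ℝ} (ha : 0 < a) (ha1 : a < 1) {C : ℝ} (hC : 0 < C) :
    Summable fun k : ℕ ↦ modulusOn f A (C * a ^ k) := by
  obtain ⟨c, hc, hint⟩ := hD
  exact summable_comp_mul_pow_of_setLIntegral_div_lt_top (modulusOn_nonneg f A)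
    (monotoneOn_modulusOn hf) hc hint ha ha1 hC

lemma DiniOn.uniformContinuousOn (hD : DiniOn f A) (hf : Bornology.IsBounded (f '' A)) :
    UniformContinuousOn f A := by
  refine Metric.uniformContinuousOn_iff.2 fun ε hε ↦ ?_
  have hlim :=
    (hD.summable_modulusOn hf one_half_pos one_half_lt_one one_pos).tendsto_atTop_zero
  obtain ⟨k, hk⟩ := (hlim.eventually (gt_mem_nhds hε)).exists
  exact ⟨1 * (1 / 2) ^ k, by positivity, fun x hx y hy h ↦
    (abs_sub_le_modulusOn hf hx hy h.le).trans_lt hk⟩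

end Dini

namespace CMS

variable {K : Type*} [MetricSpace K] [MeasurableSpace K] {N : ℕ} {E : Type*} [Fintype E]
  (S : CMS K N E)

section Basic

lemma p_le_one (e : E) (x : K) : S.p e x ≤ 1 := by
  rw [← S.p_sum_one x]
  exact Finset.single_le_sum (f := fun e ↦ S.p e x) (fun e _ ↦ S.p_nonneg e x) (Finset.mem_univ e)

lemma exists_mem_Ks (x : K) : ∃ i, x ∈ S.Ks i :=
  Set.mem_iUnion.1 (S.Ks_cover ▸ Set.mem_univ x)

/-- The index of the cell of the partition `K_1, …, K_N` containing a point. -/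
noncomputable def vtx (x : K) : Fin N := (S.exists_mem_Ks x).choose

lemma mem_Ks_vtx (x : K) : x ∈ S.Ks (S.vtx x) := (S.exists_mem_Ks x).choose_spec

variable {S}

lemma eq_of_mem_Ks {x : K} {i j : Fin N} (hi : x ∈ S.Ks i) (hj : x ∈ S.Ks j) : i = j := by
  by_contra h
  exact Set.disjoint_left.1 (S.Ks_disj i j h) hi hj

lemma vtx_eq {x : K} {i : Fin N} (hi : x ∈ S.Ks i) : S.vtx x = i :=
  eq_of_mem_Ks (S.mem_Ks_vtx x) hi

lemma mem_Ks_of_p_ne_zero {e : E} {x : K} (h : S.p e x ≠ 0) : x ∈ S.Ks (S.ι e) := by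
  by_contra h'
  exact h (S.p_zero e x h')

lemma p_eq_zero_of_ne {e : E} {i : Fin N} {x : K} (hx : x ∈ S.Ks i) (he : S.ι e ≠ i) :
    S.p e x = 0 :=
  S.p_zero e x fun h ↦ he (eq_of_mem_Ks h hx)

variable (S)

lemma sum_ofReal_p (x : K) : ∑ e, ENNReal.ofReal (S.p e x) = 1 := by
  rw [← ENNReal.ofReal_sum_of_nonneg fun e _ ↦ S.p_nonneg e x, S.p_sum_one, ENNReal.ofReal_one]

end Basic

section Kernel

/-- The transition kernel `x ↦ ∑ p_e(x) δ_{w_e x}` of the system; `U` and `U*` are its actions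
on functions and on measures. -/
noncomputable def kernel : Kernel K K where
  toFun x := ∑ e, ENNReal.ofReal (S.p e x) • Measure.dirac (S.w e x)
  measurable' := by
    refine Measure.measurable_of_measurable_coe _ fun s hs ↦ ?_
    simp only [Measure.coe_finsetSum, Finset.sum_apply, Measure.smul_apply, smul_eq_mul]
    exact Finset.measurable_sum _ fun e _ ↦ (S.p_meas e).ennreal_ofReal.mul
      ((Measure.measurable_coe hs).comp (Measure.measurable_dirac.comp (S.w_meas e)))

lemma kernel_apply (x : K) :
    S.kernel x = ∑ e, ENNReal.ofReal (S.p e x) • Measure.dirac (S.w e x) := rfl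

lemma adjoint_eq_comp (ν : Measure K) : S.adjoint ν = S.kernel ∘ₘ ν := rfl

instance isMarkovKernel_kernel : IsMarkovKernel S.kernel where
  isProbabilityMeasure x := ⟨by
    simpa only [kernel_apply, Measure.coe_finsetSum, Finset.sum_apply, Measure.smul_apply,
      measure_univ, smul_eq_mul, mul_one] using S.sum_ofReal_p x⟩

instance isProbabilityMeasure_adjoint (ν : Measure K) [IsProbabilityMeasure ν] :
    IsProbabilityMeasure (S.adjoint ν) :=
  inferInstanceAs (IsProbabilityMeasure (S.kernel ∘ₘ ν))

lemma lintegral_kernel {f : K → ℝ≥0∞} (hf : Measurable f) (x : K) :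
    ∫⁻ y, f y ∂S.kernel x = ∑ e, ENNReal.ofReal (S.p e x) * f (S.w e x) := by
  simp only [kernel_apply, lintegral_finsetSum_measure, lintegral_smul_measure,
    lintegral_dirac' _ hf, smul_eq_mul]

lemma lintegral_adjoint (ν : Measure K) {f : K → ℝ≥0∞} (hf : Measurable f) :
    ∫⁻ x, f x ∂S.adjoint ν = ∫⁻ x, ∑ e, ENNReal.ofReal (S.p e x) * f (S.w e x) ∂ν := by
  rw [adjoint_eq_comp, Measure.lintegral_bind S.kernel.aemeasurable hf.aemeasurable]
  exact lintegral_congr fun x ↦ S.lintegral_kernel hf x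

lemma integral_kernel {f : K → ℝ} (hf : StronglyMeasurable f) (x : K) :
    ∫ y, f y ∂S.kernel x = S.Ufun f x := by
  have hfin (e : E) : Integrable f (ENNReal.ofReal (S.p e x) • Measure.dirac (S.w e x)) :=
    (integrable_dirac' hf (by finiteness)).smul_measure ENNReal.ofReal_ne_top
  simp only [kernel_apply, integral_finsetSum_measure fun e _ ↦ hfin e, integral_smul_measure,
    integral_dirac' _ _ hf, ENNReal.toReal_ofReal (S.p_nonneg _ x), smul_eq_mul, Ufun]

lemma integral_adjoint {ν : Measure K} {f : K → ℝ}
    (hf : StronglyMeasurable f) (hfi : Integrable f (S.adjoint ν)) :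
    ∫ x, f x ∂S.adjoint ν = ∫ x, S.Ufun f x ∂ν := by
  rw [adjoint_eq_comp, Measure.comp_eq_comp_const_apply] at hfi ⊢
  rw [ProbabilityTheory.Kernel.integral_comp hfi]
  simp only [Kernel.const_apply, S.integral_kernel hf]

lemma measurable_Ufun {f : K → ℝ} (hf : Measurable f) : Measurable (S.Ufun f) :=
  Finset.measurable_sum _ fun e _ ↦ (S.p_meas e).mul (hf.comp (S.w_meas e))

lemma Ufun_mem_Icc {f : K → ℝ} {a b : ℝ} (hf : ∀ x, f x ∈ Set.Icc a b) (x : K) :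
    S.Ufun f x ∈ Set.Icc a b := by
  have hsum (c : ℝ) : ∑ e, S.p e x * c = c := by rw [← Finset.sum_mul, S.p_sum_one, one_mul]
  constructor
  · rw [← hsum a]
    exact Finset.sum_le_sum fun e _ ↦ mul_le_mul_of_nonneg_left (hf _).1 (S.p_nonneg e x)
  · rw [← hsum b]
    exact Finset.sum_le_sum fun e _ ↦ mul_le_mul_of_nonneg_left (hf _).2 (S.p_nonneg e x)

lemma iterate_Ufun_mem_Icc {f : K → ℝ} {a b : ℝ} (hf : ∀ x, f x ∈ Set.Icc a b) (n : ℕ) (x : K) :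
    (S.Ufun^[n] f) x ∈ Set.Icc a b := by
  induction n generalizing x with
  | zero => exact hf x
  | succ n ih =>
    rw [Function.iterate_succ_apply']
    exact S.Ufun_mem_Icc ih x

lemma measurable_iterate_Ufun {f : K → ℝ} (hf : Measurable f) (n : ℕ) :
    Measurable (S.Ufun^[n] f) := by
  induction n with
  | zero => exact hf
  | succ n ih =>
    rw [Function.iterate_succ_apply']
    exact S.measurable_Ufun ih

lemma integral_iterate_Ufun {ν : Measure K} [IsFiniteMeasure ν] (hν : S.adjoint ν = ν)
    {f : K → ℝ} (hfm : Measurable f) {a b : ℝ} (hf : ∀ x, f x ∈ Set.Icc a b) (n : ℕ) :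
    ∫ x, (S.Ufun^[n] f) x ∂ν = ∫ x, f x ∂ν := by
  induction n with
  | zero => rfl
  | succ n ih =>
    have hm := S.measurable_iterate_Ufun hfm n
    rw [Function.iterate_succ_apply', ← ih]
    conv_rhs => rw [← hν]
    refine (S.integral_adjoint hm.stronglyMeasurable ?_).symm
    rw [hν]
    exact integrable_of_mem_Icc hm (S.iterate_Ufun_mem_Icc hf n)

end Kernel

section Positivity

/-- The probability functions are bounded below by `δ > 0` on the cells where they live. -/
def ProbBddBelow (δ : ℝ) : Prop :=
  0 < δ ∧ ∀ e, ∀ x ∈ S.Ks (S.ι e), δ ≤ S.p e x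

variable {S} {δ : ℝ}

lemma ProbBddBelow.mul_measure_Ks_le (hp : S.ProbBddBelow δ) (ν : Measure K) (e : E) :
    ENNReal.ofReal δ * ν (S.Ks (S.ι e)) ≤ S.adjoint ν (S.Ks (S.τ e)) := by
  have hτ := S.Ks_meas (S.τ e)
  rw [← lintegral_indicator_one hτ, S.lintegral_adjoint ν (measurable_one.indicator hτ),
    ← lintegral_indicator_const (S.Ks_meas _)]
  refine lintegral_mono fun x ↦ Set.indicator_apply_le' (fun hx ↦ ?_) fun _ ↦ zero_le
  calc ENNReal.ofReal δ
      ≤ ENNReal.ofReal (S.p e x) * (S.Ks (S.τ e)).indicator 1 (S.w e x) := by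
        rw [Set.indicator_of_mem (S.w_maps e hx), Pi.one_apply, mul_one]
        exact ENNReal.ofReal_le_ofReal (hp.2 e x hx)
    _ ≤ _ := Finset.single_le_sum
        (f := fun e' ↦ ENNReal.ofReal (S.p e' x) * (S.Ks (S.τ e)).indicator 1 (S.w e' x))
        (fun _ _ ↦ zero_le) (Finset.mem_univ e)

lemma ProbBddBelow.measure_Ks_τ_ne_zero (hp : S.ProbBddBelow δ) {ν : Measure K}
    (hν : S.adjoint ν = ν) {e : E} (he : ν (S.Ks (S.ι e)) ≠ 0) : ν (S.Ks (S.τ e)) ≠ 0 := by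
  have hle := hp.mul_measure_Ks_le ν e
  rw [hν] at hle
  intro h0
  rw [h0, nonpos_iff_eq_zero, mul_eq_zero] at hle
  exact hle.elim (ENNReal.ofReal_pos.2 hp.1).ne' he

lemma ProbBddBelow.measure_Ks_ne_zero (hp : S.ProbBddBelow δ) (hirr : S.IrreducibleGraph)
    {ν : Measure K} (hν0 : ν ≠ 0) (hν : S.adjoint ν = ν) (i : Fin N) : ν (S.Ks i) ≠ 0 := by
  obtain ⟨j, hj⟩ : ∃ j, ν (S.Ks j) ≠ 0 := by
    by_contra! h
    refine hν0 (Measure.measure_univ_eq_zero.1 ?_)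
    rw [← S.Ks_cover]
    exact measure_iUnion_null h
  obtain ⟨n, f, rfl, rfl, hpath⟩ := hirr j i
  have hpos (k : Fin (n + 1)) : ν (S.Ks (S.τ (f k))) ≠ 0 := by
    induction k using Fin.induction with
    | zero => exact hp.measure_Ks_τ_ne_zero hν hj
    | succ k ih => exact hp.measure_Ks_τ_ne_zero hν (hpath k ▸ ih)
  exact hpos _

end Positivity

end CMS

namespace CMS

variable {K : Type*} [MetricSpace K] [MeasurableSpace K] {N : ℕ} {E : Type*} [Fintype E]
  {S : CMS K N E} {δ : ℝ}

section Continuity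

lemma isClopen_Ks (hOpen : ∀ i, IsOpen (S.Ks i)) (i : Fin N) : IsClopen (S.Ks i) := by
  refine ⟨isOpen_compl_iff.1 ?_, hOpen i⟩
  have hcompl : (S.Ks i)ᶜ = ⋃ j ≠ i, S.Ks j := by
    ext x
    simp only [Set.mem_compl_iff, Set.mem_iUnion, exists_prop]
    refine ⟨fun hx ↦ ⟨S.vtx x, fun h ↦ hx (h ▸ S.mem_Ks_vtx x), S.mem_Ks_vtx x⟩, ?_⟩
    rintro ⟨j, hj, hxj⟩ hxi
    exact hj (eq_of_mem_Ks hxj hxi)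
  rw [hcompl]
  exact isOpen_biUnion fun j _ ↦ hOpen j

lemma ProbBddBelow.dist_w_le (hp : S.ProbBddBelow δ) (e : E) {x y : K}
    (hx : x ∈ S.Ks (S.ι e)) (hy : y ∈ S.Ks (S.ι e)) :
    dist (S.w e x) (S.w e y) ≤ S.a / δ * dist x y := by
  rw [div_mul_eq_mul_div, le_div_iff₀ hp.1, mul_comm]
  calc δ * dist (S.w e x) (S.w e y) ≤ S.p e x * dist (S.w e x) (S.w e y) :=
        mul_le_mul_of_nonneg_right (hp.2 e x hx) dist_nonneg
    _ ≤ ∑ e, S.p e x * dist (S.w e x) (S.w e y) :=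
        Finset.single_le_sum (f := fun e ↦ S.p e x * dist (S.w e x) (S.w e y))
          (fun e _ ↦ mul_nonneg (S.p_nonneg e x) dist_nonneg) (Finset.mem_univ e)
    _ ≤ S.a * dist x y := S.contractive _ x hx y hy

lemma ProbBddBelow.continuousOn_w (hp : S.ProbBddBelow δ) (e : E) :
    ContinuousOn (S.w e) (S.Ks (S.ι e)) := by
  have hlip : LipschitzOnWith (S.a / δ).toNNReal (S.w e) (S.Ks (S.ι e)) := by
    refine LipschitzOnWith.of_dist_le_mul fun x hx y hy ↦ ?_
    rw [Real.coe_toNNReal _ (div_nonneg S.a_pos.le hp.1.le)]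
    exact hp.dist_w_le e hx hy
  exact hlip.continuousOn

lemma isBounded_image_p (S : CMS K N E) (e : E) (A : Set K) :
    Bornology.IsBounded (S.p e '' A) :=
  (Metric.isBounded_Icc 0 1).subset
    (Set.image_subset_iff.2 fun x _ ↦ ⟨S.p_nonneg e x, S.p_le_one e x⟩)

lemma continuous_p_mul (hOpen : ∀ i, IsOpen (S.Ks i))
    (hDini : ∀ e, DiniOn (S.p e) (S.Ks (S.ι e))) (e : E) {f : K → ℝ}
    (hf : ContinuousOn f (S.Ks (S.ι e))) : Continuous fun x ↦ S.p e x * f x := by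
  have hclopen := isClopen_Ks hOpen (S.ι e)
  refine continuous_iff_continuousAt.2 fun x ↦ ?_
  by_cases hx : x ∈ S.Ks (S.ι e)
  · exact (((hDini e).uniformContinuousOn (S.isBounded_image_p e _)).continuousOn.mul
      hf).continuousAt (hclopen.isOpen.mem_nhds hx)
  · refine ContinuousOn.continuousAt (s := (S.Ks (S.ι e))ᶜ) ?_ (hclopen.compl.isOpen.mem_nhds hx)
    exact continuousOn_const.congr fun y hy ↦ by rw [S.p_zero e y hy, zero_mul]

lemma continuous_p (hOpen : ∀ i, IsOpen (S.Ks i)) (hDini : ∀ e, DiniOn (S.p e) (S.Ks (S.ι e)))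
    (e : E) : Continuous (S.p e) := by
  simpa only [mul_one] using
    continuous_p_mul hOpen hDini e (f := fun _ ↦ 1) continuousOn_const

lemma continuous_p_mul_comp_w (hOpen : ∀ i, IsOpen (S.Ks i))
    (hDini : ∀ e, DiniOn (S.p e) (S.Ks (S.ι e))) (hp : S.ProbBddBelow δ) (e : E) {f : K → ℝ}
    (hf : Continuous f) : Continuous fun x ↦ S.p e x * f (S.w e x) :=
  continuous_p_mul hOpen hDini e (hf.comp_continuousOn (hp.continuousOn_w e))

lemma continuous_Ufun (hOpen : ∀ i, IsOpen (S.Ks i))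
    (hDini : ∀ e, DiniOn (S.p e) (S.Ks (S.ι e))) (hp : S.ProbBddBelow δ) {f : K → ℝ}
    (hf : Continuous f) : Continuous (S.Ufun f) :=
  continuous_finsetSum _ fun e _ ↦ continuous_p_mul_comp_w hOpen hDini hp e hf

end Continuity

section Overlap

variable (S)

/-- The mass of paths of length `n` shared by the chains started at `x` and `y`: at every step the
smaller of the two transition probabilities is kept. -/
noncomputable def overlap : ℕ → K → K → ℝ
  | 0, _, _ => 1
  | n + 1, x, y => ∑ e, min (S.p e x) (S.p e y) * overlap n (S.w e x) (S.w e y)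

lemma overlap_nonneg (n : ℕ) (x y : K) : 0 ≤ S.overlap n x y := by
  induction n generalizing x y with
  | zero => exact zero_le_one
  | succ n ih =>
    exact Finset.sum_nonneg fun e _ ↦
      mul_nonneg (le_min (S.p_nonneg e x) (S.p_nonneg e y)) (ih _ _)

/-- A common modulus of continuity of the probability functions on their cells. -/
noncomputable def modulus (t : ℝ) : ℝ := ∑ e, modulusOn (S.p e) (S.Ks (S.ι e)) t

lemma modulus_nonneg (t : ℝ) : 0 ≤ S.modulus t :=
  Finset.sum_nonneg fun _ _ ↦ modulusOn_nonneg _ _ _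

lemma abs_p_sub_p_le_modulus {e : E} {x y : K} (hx : x ∈ S.Ks (S.ι e)) (hy : y ∈ S.Ks (S.ι e))
    {t : ℝ} (h : dist x y ≤ t) : |S.p e x - S.p e y| ≤ S.modulus t :=
  (abs_sub_le_modulusOn (S.isBounded_image_p e _) hx hy h).trans <|
    Finset.single_le_sum (f := fun e ↦ modulusOn (S.p e) (S.Ks (S.ι e)) t)
      (fun _ _ ↦ modulusOn_nonneg _ _ _) (Finset.mem_univ e)

variable {S}

lemma summable_modulus (hDini : ∀ e, DiniOn (S.p e) (S.Ks (S.ι e))) {C : ℝ} (hC : 0 < C) :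
    Summable fun k : ℕ ↦ S.modulus (C * S.a ^ k) :=
  summable_sum fun e _ ↦
    (hDini e).summable_modulusOn (S.isBounded_image_p e _) S.a_pos S.a_lt_one hC

lemma ProbBddBelow.exp_mul_p_le_p (hp : S.ProbBddBelow δ) {e : E} {x y : K}
    (hx : x ∈ S.Ks (S.ι e)) (hy : y ∈ S.Ks (S.ι e)) {t : ℝ} (h : dist x y ≤ t) :
    Real.exp (-(S.modulus t / δ)) * S.p e x ≤ S.p e y := by
  have hdiff := (abs_le.1 (S.abs_p_sub_p_le_modulus hx hy h)).2
  rw [Real.exp_neg, inv_mul_le_iff₀ (Real.exp_pos _)]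
  calc S.p e x ≤ S.modulus t / δ * δ + S.p e y := by
        rw [div_mul_cancel₀ _ hp.1.ne']
        linarith
    _ ≤ S.modulus t / δ * S.p e y + S.p e y := by
        gcongr
        exacts [div_nonneg (S.modulus_nonneg t) hp.1.le, hp.2 e y hy]
    _ = (S.modulus t / δ + 1) * S.p e y := by ring
    _ ≤ Real.exp (S.modulus t / δ) * S.p e y := by
        gcongr
        exacts [S.p_nonneg e y, Real.add_one_le_exp _]

lemma ProbBddBelow.exp_mul_p_le_min (hp : S.ProbBddBelow δ) {e : E} {x y : K}
    (hx : x ∈ S.Ks (S.ι e)) (hy : y ∈ S.Ks (S.ι e)) {t : ℝ} (h : dist x y ≤ t) :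
    Real.exp (-(S.modulus t / δ)) * S.p e x ≤ min (S.p e x) (S.p e y) := by
  refine le_min (mul_le_of_le_one_left (S.p_nonneg e x) ?_) (hp.exp_mul_p_le_p hx hy h)
  exact Real.exp_le_one_iff.2 (neg_nonpos.2 (div_nonneg (S.modulus_nonneg t) hp.1.le))

lemma one_sub_dist_div_le {i : Fin N} {x y : K} (hx : x ∈ S.Ks i) (hy : y ∈ S.Ks i) {C : ℝ}
    (hC : 0 < C) :
    1 - dist x y / C ≤ ∑ e, S.p e x * (1 - dist (S.w e x) (S.w e y) / (C * S.a)) := by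
  have hCa : 0 < C * S.a := mul_pos hC S.a_pos
  calc 1 - dist x y / C = 1 - S.a * dist x y / (C * S.a) := by
        rw [mul_comm S.a, mul_div_mul_right _ _ S.a_pos.ne']
    _ ≤ 1 - (∑ e, S.p e x * dist (S.w e x) (S.w e y)) / (C * S.a) := by
        gcongr
        exact S.contractive i x hx y hy
    _ = _ := by
        simp only [mul_sub, mul_one, Finset.sum_sub_distrib, S.p_sum_one, Finset.sum_div,
          mul_div_assoc]

lemma ProbBddBelow.exp_mul_le_overlap (hp : S.ProbBddBelow δ) (n : ℕ) {C : ℝ} (hC : 0 < C)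
    {i : Fin N} {x y : K} (hx : x ∈ S.Ks i) (hy : y ∈ S.Ks i) :
    Real.exp (-((∑ k ∈ Finset.range n, S.modulus (C * S.a ^ k)) / δ)) * (1 - dist x y / C) ≤
      S.overlap n x y := by
  induction n generalizing C i x y with
  | zero => simpa [overlap] using div_nonneg (dist_nonneg (x := x) (y := y)) hC.le
  | succ n ih =>
    rcases lt_or_ge C (dist x y) with hd | hd
    · refine le_trans ?_ (S.overlap_nonneg _ _ _)
      exact mul_nonpos_of_nonneg_of_nonpos (Real.exp_pos _).le
        (sub_nonpos.2 ((one_le_div hC).2 hd.le))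
    set A := Real.exp (-(S.modulus C / δ)) with hA
    set B := Real.exp (-((∑ k ∈ Finset.range n, S.modulus (C * S.a * S.a ^ k)) / δ)) with hB
    have hsplit : Real.exp (-((∑ k ∈ Finset.range (n + 1), S.modulus (C * S.a ^ k)) / δ)) =
        A * B := by
      rw [hA, hB, ← Real.exp_add, Finset.sum_range_succ', pow_zero, mul_one, ← neg_add, ← add_div,
        add_comm]
      simp only [pow_succ', mul_assoc]
    rw [hsplit]
    calc A * B * (1 - dist x y / C)
        ≤ A * B * ∑ e, S.p e x * (1 - dist (S.w e x) (S.w e y) / (C * S.a)) :=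
          mul_le_mul_of_nonneg_left (one_sub_dist_div_le hx hy hC) (by positivity)
      _ = ∑ e, A * S.p e x * (B * (1 - dist (S.w e x) (S.w e y) / (C * S.a))) := by
          rw [Finset.mul_sum]
          exact Finset.sum_congr rfl fun e _ ↦ by ring
      _ ≤ ∑ e, min (S.p e x) (S.p e y) * S.overlap n (S.w e x) (S.w e y) := by
          refine Finset.sum_le_sum fun e _ ↦ ?_
          rcases eq_or_ne (S.ι e) i with rfl | he
          · have hind := ih (mul_pos hC S.a_pos) (S.w_maps e hx) (S.w_maps e hy)
            exact (mul_le_mul_of_nonneg_left hind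
              (mul_nonneg (Real.exp_pos _).le (S.p_nonneg e x))).trans
              (mul_le_mul_of_nonneg_right (hp.exp_mul_p_le_min hx hy hd) (S.overlap_nonneg _ _ _))
          · simp [p_eq_zero_of_ne hx he, p_eq_zero_of_ne hy he]

lemma ProbBddBelow.exists_pos_le_overlap (hp : S.ProbBddBelow δ)
    (hDini : ∀ e, DiniOn (S.p e) (S.Ks (S.ι e))) {D : ℝ} (hD : 0 < D) :
    ∃ c > 0, ∀ n : ℕ, ∀ i, ∀ x ∈ S.Ks i, ∀ y ∈ S.Ks i, dist x y ≤ D → c ≤ S.overlap n x y := by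
  refine ⟨Real.exp (-((∑' k : ℕ, S.modulus (2 * D * S.a ^ k)) / δ)) * (1 / 2), by positivity,
    fun n i x hx y hy hxy ↦
      le_trans ?_ (hp.exp_mul_le_overlap n (C := 2 * D) (by positivity) hx hy)⟩
  have hsum : ∑ k ∈ Finset.range n, S.modulus (2 * D * S.a ^ k) ≤
      ∑' k : ℕ, S.modulus (2 * D * S.a ^ k) :=
    (summable_modulus hDini (by positivity)).sum_le_tsum _ fun k _ ↦ S.modulus_nonneg _
  have hhalf : (1 : ℝ) / 2 ≤ 1 - dist x y / (2 * D) := by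
    have : dist x y / (2 * D) ≤ 1 / 2 := by
      rw [div_le_iff₀ (by positivity)]
      linarith
    linarith
  have := hp.1
  gcongr

end Overlap

section Uniqueness

lemma mul_sub_mul_le_sub_min_mul {p q g h r o : ℝ} (hp : 0 ≤ p) (hq : 0 ≤ q) (hg : g ≤ 1)
    (hh : 0 ≤ h) (hr : 0 ≤ r) (hgh : g - h ≤ r + 1 - o) :
    p * g - q * h ≤ r * p + p - min p q * o := by
  set m := min p q
  have hmp : m ≤ p := min_le_left _ _
  have hmq : m ≤ q := min_le_right _ _
  calc p * g - q * h = (p - m) * g - (q - m) * h + m * (g - h) := by ring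
    _ ≤ (p - m) * 1 - 0 + m * (r + 1 - o) := by
        gcongr
        exact mul_nonneg (sub_nonneg.2 hmq) hh
    _ = m * r + p - m * o := by ring
    _ ≤ r * p + p - m * o := by
        rw [mul_comm r]
        gcongr

lemma iterate_Ufun_sub_le {f : K → ℝ} (hf : ∀ x, f x ∈ Set.Icc 0 1) {L : NNReal}
    (hL : LipschitzWith L f) (n : ℕ) {i : Fin N} {x y : K} (hx : x ∈ S.Ks i) (hy : y ∈ S.Ks i) :
    (S.Ufun^[n] f) x - (S.Ufun^[n] f) y ≤ L * S.a ^ n * dist x y + 1 - S.overlap n x y := by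
  induction n generalizing i x y with
  | zero => simpa [overlap] using (le_abs_self _).trans (hL.dist_le_mul x y)
  | succ n ih =>
    have ha := S.a_pos
    have hU := S.iterate_Ufun_mem_Icc hf n
    rw [Function.iterate_succ_apply']
    set g := S.Ufun^[n] f
    calc S.Ufun g x - S.Ufun g y
        = ∑ e, (S.p e x * g (S.w e x) - S.p e y * g (S.w e y)) := by
          rw [Finset.sum_sub_distrib, Ufun, Ufun]
      _ ≤ ∑ e, (L * S.a ^ n * dist (S.w e x) (S.w e y) * S.p e x + S.p e x -
            min (S.p e x) (S.p e y) * S.overlap n (S.w e x) (S.w e y)) := by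
          refine Finset.sum_le_sum fun e _ ↦ ?_
          rcases eq_or_ne (S.ι e) i with rfl | he
          · exact mul_sub_mul_le_sub_min_mul (S.p_nonneg e x) (S.p_nonneg e y) (hU _).2 (hU _).1
              (by positivity) (ih (S.w_maps e hx) (S.w_maps e hy))
          · simp [p_eq_zero_of_ne hx he, p_eq_zero_of_ne hy he]
      _ = L * S.a ^ n * ∑ e, S.p e x * dist (S.w e x) (S.w e y) + 1 - S.overlap (n + 1) x y := by
          rw [Finset.sum_sub_distrib, Finset.sum_add_distrib, S.p_sum_one, overlap, Finset.mul_sum]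
          simp only [mul_assoc, mul_comm (dist _ _)]
      _ ≤ L * S.a ^ n * (S.a * dist x y) + 1 - S.overlap (n + 1) x y := by
          gcongr
          exact S.contractive i x hx y hy
      _ = L * S.a ^ (n + 1) * dist x y + 1 - S.overlap (n + 1) x y := by ring

variable [BorelSpace K]

lemma exists_iterate_Ufun_of_mutuallySingular {ν₁ ν₂ : Measure K} [IsFiniteMeasure ν₁]
    [IsFiniteMeasure ν₂] (h₁ : S.adjoint ν₁ = ν₁) (h₂ : S.adjoint ν₂ = ν₂) (hs : ν₁ ⟂ₘ ν₂)
    {B : Set K} (hB : MeasurableSet B) (hB₁ : ν₁ B ≠ 0) (hB₂ : ν₂ B ≠ 0) {t : ℝ} (ht : 0 < t) :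
    ∃ (L : NNReal) (f : K → ℝ), LipschitzWith L f ∧ (∀ x, f x ∈ Set.Icc 0 1) ∧
      ∀ n : ℕ, (∃ x ∈ B, 1 - (S.Ufun^[n] f) x ≤ t) ∧ ∃ y ∈ B, (S.Ufun^[n] f) y ≤ t := by
  have hpos₁ : 0 < ν₁.real B := ENNReal.toReal_pos hB₁ (measure_ne_top _ _)
  have hpos₂ : 0 < ν₂.real B := ENNReal.toReal_pos hB₂ (measure_ne_top _ _)
  obtain ⟨L, f, hL, hf, hf₁, hf₂⟩ := exists_lipschitzWith_integral_lt_of_mutuallySingular hs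
    (mul_pos ht (lt_min hpos₁ hpos₂))
  have hfm := hL.continuous.measurable
  refine ⟨L, f, hL, hf, fun n ↦ ?_⟩
  have hU := S.iterate_Ufun_mem_Icc hf n
  have hUm := S.measurable_iterate_Ufun hfm n
  constructor
  · refine exists_mem_le_of_integral_lt (ν := ν₁) (g := fun x ↦ 1 - (S.Ufun^[n] f) x)
      ((integrable_const _).sub (integrable_of_mem_Icc hUm hU))
      (fun x ↦ sub_nonneg.2 (hU x).2) hB ?_
    rw [integral_sub (integrable_const _) (integrable_of_mem_Icc hUm hU),
      S.integral_iterate_Ufun h₁ hfm hf,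
      ← integral_sub (integrable_const _) (integrable_of_mem_Icc hfm hf)]
    exact hf₁.trans_le (mul_le_mul_of_nonneg_left (min_le_left _ _) ht.le)
  · refine exists_mem_le_of_integral_lt (ν := ν₂) (integrable_of_mem_Icc hUm hU)
      (fun x ↦ (hU x).1) hB ?_
    rw [S.integral_iterate_Ufun h₂ hfm hf]
    exact hf₂.trans_le (mul_le_mul_of_nonneg_left (min_le_right _ _) ht.le)

theorem not_mutuallySingular_of_invariant [Nonempty K] (hirr : S.IrreducibleGraph)
    (hDini : ∀ e, DiniOn (S.p e) (S.Ks (S.ι e))) (hp : S.ProbBddBelow δ) {ν₁ ν₂ : Measure K}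
    [IsFiniteMeasure ν₁] [IsFiniteMeasure ν₂] (hν₁ : ν₁ ≠ 0) (hν₂ : ν₂ ≠ 0)
    (h₁ : S.adjoint ν₁ = ν₁) (h₂ : S.adjoint ν₂ = ν₂) : ¬ ν₁ ⟂ₘ ν₂ := by
  intro hs
  obtain ⟨z⟩ := ‹Nonempty K›
  set i := S.vtx z
  obtain ⟨R, ⟨hR₁, hR₂⟩, hR⟩ :=
    (((eventually_measure_inter_ball_pos (hp.measure_Ks_ne_zero hirr hν₁ h₁ i) z).and
      (eventually_measure_inter_ball_pos (hp.measure_Ks_ne_zero hirr hν₂ h₂ i) z)).and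
      (eventually_gt_atTop 0)).exists
  replace hR : (0 : ℝ) < R := mod_cast hR
  obtain ⟨c, hc, hover⟩ := hp.exists_pos_le_overlap hDini (D := 2 * R) (by positivity)
  obtain ⟨L, f, hL, hf, hxy⟩ := exists_iterate_Ufun_of_mutuallySingular h₁ h₂ hs
    ((S.Ks_meas i).inter Metric.isOpen_ball.measurableSet) hR₁.ne' hR₂.ne'
    (show 0 < c / 4 by positivity)
  have hlim : Tendsto (fun n : ℕ ↦ L * S.a ^ n * (2 * R)) atTop (𝓝 0) := by
    simpa only [mul_zero, zero_mul] using ((tendsto_pow_atTop_nhds_zero_of_lt_one S.a_pos.le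
      S.a_lt_one).const_mul (L : ℝ)).mul_const (2 * (R : ℝ))
  obtain ⟨n, hn⟩ := (hlim.eventually (gt_mem_nhds (half_pos hc))).exists
  obtain ⟨⟨x, ⟨hx, hxR⟩, hxU⟩, y, ⟨hy, hyR⟩, hyU⟩ := hxy n
  have hdist : dist x y ≤ 2 * R := by
    linarith [dist_triangle_right x y z, Metric.mem_ball.1 hxR, Metric.mem_ball.1 hyR]
  have hcontr : L * S.a ^ n * dist x y ≤ L * S.a ^ n * (2 * R) :=
    mul_le_mul_of_nonneg_left hdist (mul_nonneg L.2 (pow_nonneg S.a_pos.le n))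
  linarith [iterate_Ufun_sub_le hf hL n hx hy, hover n i x hx y hy hdist]

theorem invariant_measure_unique [Nonempty K] (hirr : S.IrreducibleGraph)
    (hDini : ∀ e, DiniOn (S.p e) (S.Ks (S.ι e))) (hp : S.ProbBddBelow δ) {μ ν : Measure K}
    [IsProbabilityMeasure μ] [IsProbabilityMeasure ν] (hμ : S.adjoint μ = μ)
    (hν : S.adjoint ν = ν) : μ = ν :=
  eq_of_invariant_of_not_mutuallySingular (κ := S.kernel)
    (fun _ _ _ _ h₁ h₂ hi₁ hi₂ ↦ not_mutuallySingular_of_invariant hirr hDini hp h₁ h₂ hi₁ hi₂)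
    hμ hν

end Uniqueness

end CMS

lemma properSpace_of_isCompact_closure {X : Type*} [PseudoMetricSpace X]
    (h : ∀ A : Set X, Bornology.IsBounded A → IsCompact (closure A)) : ProperSpace X :=
  ⟨fun x r ↦ by
    simpa only [Metric.isClosed_closedBall.closure_eq] using h _ Metric.isBounded_closedBall⟩

section Drift

variable {α : Type*} [MeasurableSpace α]

lemma lintegral_min_le {ν : Measure α} [IsProbabilityMeasure ν] (f : α → ℝ≥0∞) (R : ℝ≥0∞) :
    ∫⁻ x, min (f x) R ∂ν ≤ min (∫⁻ x, f x ∂ν) R :=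
  le_min (lintegral_mono fun _ ↦ min_le_left _ _)
    ((lintegral_mono fun _ ↦ min_le_right _ _).trans (by simp))

lemma mul_inv_one_sub_mul_add {a : ℝ≥0∞} (c : ℝ≥0∞) :
    a * ((1 - a)⁻¹ * c) + c = (1 - a)⁻¹ * c := by
  rw [← ENNReal.tsum_geometric]
  conv_rhs => rw [tsum_eq_zero_add' ENNReal.summable]
  simp only [pow_succ', ENNReal.tsum_mul_left, pow_zero]
  ring

variable {κ : Kernel α α} {V : α → ℝ≥0∞} {a c : ℝ≥0∞}

lemma lintegral_comp_le_of_drift (hV : Measurable V)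
    (hdrift : ∀ x, ∫⁻ y, V y ∂κ x ≤ a * V x + c) {ν : Measure α} [IsProbabilityMeasure ν]
    (hν : ∫⁻ x, V x ∂ν ≤ (1 - a)⁻¹ * c) : ∫⁻ x, V x ∂(κ ∘ₘ ν) ≤ (1 - a)⁻¹ * c := by
  rw [Measure.lintegral_bind κ.aemeasurable hV.aemeasurable]
  calc ∫⁻ x, ∫⁻ y, V y ∂κ x ∂ν ≤ ∫⁻ x, (a * V x + c) ∂ν := lintegral_mono hdrift
    _ = a * ∫⁻ x, V x ∂ν + c := by
        rw [lintegral_add_right _ measurable_const, lintegral_const_mul _ hV, lintegral_const,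
          measure_univ, mul_one]
    _ ≤ a * ((1 - a)⁻¹ * c) + c := by gcongr
    _ = (1 - a)⁻¹ * c := mul_inv_one_sub_mul_add c

variable [IsMarkovKernel κ]

lemma lintegral_min_le_of_drift (hV : Measurable V)
    (hdrift : ∀ x, ∫⁻ y, V y ∂κ x ≤ a * V x + c) {ν : Measure α} (hν : κ.Invariant ν)
    (R : ℝ≥0∞) (n : ℕ) :
    ∫⁻ x, min (V x) R ∂ν ≤ ∫⁻ x, min (a ^ n * V x + ∑ k ∈ Finset.range n, a ^ k * c) R ∂ν := by
  induction n with
  | zero => simp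
  | succ n ih =>
    refine ih.trans ?_
    conv_lhs => rw [← hν]
    rw [Measure.lintegral_bind κ.aemeasurable (by fun_prop)]
    refine lintegral_mono fun x ↦ (lintegral_min_le _ R).trans (min_le_min_right _ ?_)
    calc ∫⁻ y, (a ^ n * V y + ∑ k ∈ Finset.range n, a ^ k * c) ∂κ x
        = a ^ n * ∫⁻ y, V y ∂κ x + ∑ k ∈ Finset.range n, a ^ k * c := by
          rw [lintegral_add_right _ measurable_const, lintegral_const_mul _ hV, lintegral_const,
            measure_univ, mul_one]
      _ ≤ a ^ n * (a * V x + c) + ∑ k ∈ Finset.range n, a ^ k * c := by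
          gcongr
          exact hdrift x
      _ = a ^ (n + 1) * V x + ∑ k ∈ Finset.range (n + 1), a ^ k * c := by
          rw [Finset.sum_range_succ]
          ring

theorem lintegral_le_of_drift (hV : Measurable V) (hVtop : ∀ x, V x ≠ ⊤) (ha : a < 1)
    (hdrift : ∀ x, ∫⁻ y, V y ∂κ x ≤ a * V x + c) {ν : Measure α} [IsProbabilityMeasure ν]
    (hν : κ.Invariant ν) : ∫⁻ x, V x ∂ν ≤ (1 - a)⁻¹ * c := by
  set B := (1 - a)⁻¹ * c
  have hsum (n : ℕ) : ∑ k ∈ Finset.range n, a ^ k * c ≤ B := by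
    rw [← Finset.sum_mul]
    refine mul_le_mul_left ((ENNReal.sum_le_tsum _).trans ?_) c
    rw [ENNReal.tsum_geometric]
  have htrunc (R : ℕ) : ∫⁻ x, min (V x) R ∂ν ≤ B := by
    have hlim : Tendsto (fun n : ℕ ↦ ∫⁻ x, min (a ^ n * V x + B) R ∂ν) atTop
        (𝓝 (∫⁻ _, min B R ∂ν)) := by
      refine tendsto_lintegral_of_dominated_convergence (fun _ ↦ R) (fun n ↦ by fun_prop)
        (fun n ↦ ae_of_all _ fun x ↦ min_le_right _ _) (by simp) (ae_of_all _ fun x ↦ ?_)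
      have hpow := ENNReal.Tendsto.mul_const (ENNReal.tendsto_pow_atTop_nhds_zero_of_lt_one ha)
        (Or.inr (hVtop x))
      simpa using (hpow.add_const B).min (tendsto_const_nhds (x := (R : ℝ≥0∞)))
    calc ∫⁻ x, min (V x) R ∂ν ≤ ∫⁻ _, min B R ∂ν :=
          ge_of_tendsto' hlim fun n ↦ (lintegral_min_le_of_drift hV hdrift hν R n).trans
            (lintegral_mono fun x ↦ by gcongr; exact hsum n)
      _ ≤ B := by simp
  have hmin (x : α) : Tendsto (fun n : ℕ ↦ min (V x) (n : ℝ≥0∞)) atTop (𝓝 (V x)) := by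
    simpa using tendsto_const_nhds.min ENNReal.tendsto_nat_nhds_top
  calc ∫⁻ x, V x ∂ν = ∫⁻ x, liminf (fun n : ℕ ↦ min (V x) n) atTop ∂ν := by
        simp only [(hmin _).liminf_eq]
    _ ≤ liminf (fun n : ℕ ↦ ∫⁻ x, min (V x) n ∂ν) atTop :=
        lintegral_liminf_le fun n ↦ by fun_prop
    _ ≤ liminf (fun _ : ℕ ↦ B) atTop := liminf_le_liminf (Eventually.of_forall htrunc)
    _ = B := liminf_const B

end Drift

section KrylovBogoliubov

variable {α : Type*} [MeasurableSpace α]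

/-- The Cesàro means of a sequence of measures. -/
noncomputable def cesaroMean (m : ℕ → Measure α) (n : ℕ) : Measure α :=
  (n + 1 : ℝ≥0∞)⁻¹ • ∑ k ∈ Finset.range (n + 1), m k

variable {m : ℕ → Measure α}

lemma lintegral_cesaroMean_le {f : α → ℝ≥0∞} {B : ℝ≥0∞} (h : ∀ k, ∫⁻ x, f x ∂m k ≤ B) (n : ℕ) :
    ∫⁻ x, f x ∂cesaroMean m n ≤ B := by
  rw [cesaroMean, lintegral_smul_measure, lintegral_finsetSum_measure, smul_eq_mul,
    ENNReal.inv_mul_le_iff (by simp) (by simp)]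
  calc ∑ k ∈ Finset.range (n + 1), ∫⁻ x, f x ∂m k ≤ ∑ _k ∈ Finset.range (n + 1), B :=
        Finset.sum_le_sum fun _ _ ↦ h _
    _ = (n + 1) * B := by simp

instance isProbabilityMeasure_cesaroMean [∀ k, IsProbabilityMeasure (m k)] (n : ℕ) :
    IsProbabilityMeasure (cesaroMean m n) := ⟨by
  simpa [cesaroMean] using ENNReal.inv_mul_cancel (a := (n + 1 : ℝ≥0∞)) (by simp) (by simp)⟩

lemma integral_cesaroMean {f : α → ℝ} (hf : ∀ k, Integrable f (m k)) (n : ℕ) :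
    ∫ x, f x ∂cesaroMean m n = (n + 1 : ℝ)⁻¹ * ∑ k ∈ Finset.range (n + 1), ∫ x, f x ∂m k := by
  rw [cesaroMean, integral_smul_measure, integral_finsetSum_measure fun k _ ↦ hf k,
    ENNReal.toReal_inv, smul_eq_mul]
  congr 2

open scoped BoundedContinuousFunction

variable [TopologicalSpace α]

lemma isTightMeasureSet_of_lintegral_le {V : α → ℝ≥0∞} (hV : Measurable V)
    (hcompact : ∀ R : NNReal, IsCompact (closure {x | V x ≤ R})) {A : Set (Measure α)} {B : ℝ≥0∞}
    (hB : B ≠ ⊤) (hA : ∀ ν ∈ A, ∫⁻ x, V x ∂ν ≤ B) : IsTightMeasureSet A := by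
  rw [isTightMeasureSet_iff_exists_isCompact_measure_compl_le]
  intro ε hε
  obtain ⟨R, hR⟩ := ENNReal.lt_iff_exists_nnreal_btwn.1 (ENNReal.div_lt_top hB hε.ne')
  refine ⟨closure {x | V x ≤ R}, hcompact R, fun ν hν ↦ ?_⟩
  have hsub : (closure {x | V x ≤ R})ᶜ ⊆ {x | (R : ℝ≥0∞) ≤ V x} := by
    intro x hx
    by_contra h
    rw [Set.mem_ofPred_eq, not_le] at h
    exact hx (subset_closure (by simpa using h.le))
  calc ν (closure {x | V x ≤ R})ᶜ ≤ ν {x | (R : ℝ≥0∞) ≤ V x} := measure_mono hsub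
    _ ≤ (∫⁻ x, V x ∂ν) / R := meas_ge_le_lintegral_div hV.aemeasurable
        (pos_of_gt hR.1).ne' ENNReal.coe_ne_top
    _ ≤ B / R := by gcongr; exact hA ν hν
    _ ≤ ε := ENNReal.div_le_of_le_mul' <|
        (ENNReal.div_le_iff_le_mul (Or.inl hε.ne') (Or.inr (pos_of_gt hR.1).ne')).1 hR.1.le

variable [BorelSpace α] {κ : Kernel α α}

lemma tendsto_integral_cesaroMean_sub [∀ k, IsProbabilityMeasure (m k)]
    (hm : ∀ k, m (k + 1) = κ ∘ₘ m k) {f g : α →ᵇ ℝ} (hg : ∀ x, g x = ∫ y, f y ∂κ x) :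
    Tendsto (fun n ↦ ∫ x, g x ∂cesaroMean m n - ∫ x, f x ∂cesaroMean m n) atTop (𝓝 0) := by
  have hstep (k : ℕ) : ∫ x, g x ∂m k = ∫ x, f x ∂m (k + 1) := by
    have hf := f.integrable (m (k + 1))
    rw [hm, Measure.comp_eq_comp_const_apply] at hf ⊢
    simp only [ProbabilityTheory.Kernel.integral_comp hf, Kernel.const_apply, hg]
  have hbound (k : ℕ) : |∫ x, f x ∂m k| ≤ ‖f‖ := f.norm_integral_le_norm _
  refine squeeze_zero_norm (a := fun n : ℕ ↦ 1 / (n + 1 : ℝ) * (2 * ‖f‖)) (fun n ↦ ?_) ?_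
  · rw [integral_cesaroMean (fun k ↦ g.integrable _), integral_cesaroMean (fun k ↦ f.integrable _),
      ← mul_sub, ← Finset.sum_sub_distrib, norm_mul, norm_inv, one_div]
    simp only [hstep, Finset.sum_range_sub (fun k ↦ ∫ x, f x ∂m k)]
    rw [Real.norm_of_nonneg (by positivity)]
    gcongr
    calc ‖∫ x, f x ∂m (n + 1) - ∫ x, f x ∂m 0‖ ≤ ‖∫ x, f x ∂m (n + 1)‖ + ‖∫ x, f x ∂m 0‖ :=
          norm_sub_le _ _
      _ ≤ 2 * ‖f‖ := by
          rw [two_mul]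
          exact add_le_add (hbound _) (hbound _)
  · simpa using tendsto_one_div_add_atTop_nhds_zero_nat.mul_const (2 * ‖f‖)

/-- A Markov kernel is Feller if it maps bounded continuous functions to continuous ones. -/
def IsFeller (κ : Kernel α α) : Prop :=
  ∀ f : α →ᵇ ℝ, Continuous fun x ↦ ∫ y, f y ∂κ x

theorem exists_invariant_of_isTightMeasureSet [IsMarkovKernel κ] [T2Space α]
    [HasOuterApproxClosed α]
    (hκ : IsFeller κ) (hprob : ∀ k, IsProbabilityMeasure (m k)) (hm : ∀ k, m (k + 1) = κ ∘ₘ m k)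
    (htight : IsTightMeasureSet (Set.range (cesaroMean m))) :
    ∃ ν : Measure α, IsProbabilityMeasure ν ∧ κ.Invariant ν := by
  let P (n : ℕ) : ProbabilityMeasure α := ⟨cesaroMean m n, inferInstance⟩
  have hcompact : IsCompact (closure (Set.range P)) := by
    refine isCompact_closure_of_isTightMeasureSet (htight.subset ?_)
    rintro _ ⟨_, ⟨n, rfl⟩, rfl⟩
    exact ⟨n, rfl⟩
  let U : Ultrafilter ℕ := hyperfilter ℕ
  obtain ⟨ν, -, hν : Tendsto P U (𝓝 ν)⟩ := hcompact.ultrafilter_le_nhds (U.map P) <|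
    le_principal_iff.2 (mem_of_superset range_mem_map subset_closure)
  have hU : (U : Filter ℕ) ≤ atTop := Nat.cofinite_eq_atTop ▸ hyperfilter_le_cofinite
  rw [ProbabilityMeasure.tendsto_iff_forall_integral_tendsto] at hν
  refine ⟨ν, inferInstance, ext_of_forall_integral_eq_of_IsFiniteMeasure fun f ↦ ?_⟩
  let g : α →ᵇ ℝ := .ofNormedAddCommGroup _ (hκ f) ‖f‖ fun x ↦ f.norm_integral_le_norm _
  have hf := f.integrable (κ ∘ₘ (ν : Measure α))
  have hfg : ∫ x, f x ∂(κ ∘ₘ (ν : Measure α)) = ∫ x, g x ∂(ν : Measure α) := by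
    rw [Measure.comp_eq_comp_const_apply] at hf ⊢
    rw [ProbabilityTheory.Kernel.integral_comp hf, Kernel.const_apply]
    rfl
  change ∫ x, f x ∂(κ ∘ₘ (ν : Measure α)) = _
  rw [hfg, ← sub_eq_zero]
  exact tendsto_nhds_unique ((hν g).sub (hν f))
    ((tendsto_integral_cesaroMean_sub hm fun _ ↦ rfl).mono_left hU)

end KrylovBogoliubov

namespace CMS

variable {K : Type*} [MetricSpace K] [MeasurableSpace K] {N : ℕ} {E : Type*} [Fintype E]
  {S : CMS K N E} {δ : ℝ} {xs : Fin N → K}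

section Existence

lemma ofReal_a_lt_one (S : CMS K N E) : ENNReal.ofReal S.a < 1 :=
  ENNReal.ofReal_lt_one.2 S.a_lt_one

lemma sum_ofReal_mul_edist_le {i : Fin N} {x y : K} (hx : x ∈ S.Ks i) (hy : y ∈ S.Ks i) :
    ∑ e, ENNReal.ofReal (S.p e x) * edist (S.w e x) (S.w e y) ≤
      ENNReal.ofReal S.a * edist x y := by
  simp only [edist_dist, ← ENNReal.ofReal_mul (S.p_nonneg _ x), ← ENNReal.ofReal_mul S.a_pos.le]
  rw [← ENNReal.ofReal_sum_of_nonneg fun e _ ↦ mul_nonneg (S.p_nonneg e x) dist_nonneg]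
  exact ENNReal.ofReal_le_ofReal (S.contractive i x hx y hy)

/-- The Lyapunov function of the system: the distance to the base point `x_i` of the own cell. -/
noncomputable def lyapunov (S : CMS K N E) (xs : Fin N → K) (x : K) : ℝ≥0∞ :=
  edist x (xs (S.vtx x))

/-- The additive constant in the drift inequality for the Lyapunov function. -/
noncomputable def drift (S : CMS K N E) (xs : Fin N → K) : ℝ≥0∞ :=
  ∑ e, edist (S.w e (xs (S.ι e))) (xs (S.τ e))

/-- The bound on the Lyapunov moment of invariant measures resulting from the drift inequality. -/
noncomputable def momentBound (S : CMS K N E) (xs : Fin N → K) : ℝ≥0∞ :=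
  (1 - ENNReal.ofReal S.a)⁻¹ * S.drift xs

lemma momentBound_ne_top (S : CMS K N E) (xs : Fin N → K) : S.momentBound xs ≠ ⊤ :=
  ENNReal.mul_ne_top (ENNReal.inv_ne_top.2 (tsub_pos_of_lt S.ofReal_a_lt_one).ne')
    (ENNReal.sum_ne_top.2 fun _ _ ↦ edist_ne_top _ _)

lemma measurable_lyapunov [BorelSpace K] (S : CMS K N E) (xs : Fin N → K) :
    Measurable (S.lyapunov xs) := by
  have hsum : S.lyapunov xs = fun x ↦ ∑ i, (S.Ks i).indicator (fun x ↦ edist x (xs i)) x := by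
    ext x
    rw [Finset.sum_eq_single (S.vtx x) (fun i _ hi ↦ Set.indicator_of_notMem
      (fun hx ↦ hi (vtx_eq hx).symm) _) (by simp), Set.indicator_of_mem (S.mem_Ks_vtx x), lyapunov]
  rw [hsum]
  exact Finset.measurable_sum _ fun i _ ↦
    (continuous_id.edist continuous_const).measurable.indicator (S.Ks_meas i)

lemma isCompact_closure_lyapunov_le [ProperSpace K] (S : CMS K N E) (xs : Fin N → K)
    (R : NNReal) : IsCompact (closure {x | S.lyapunov xs x ≤ R}) := by
  have hsub : {x | S.lyapunov xs x ≤ R} ⊆ ⋃ i, Metric.closedBall (xs i) R := by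
    intro x hx
    rw [Set.mem_ofPred_eq, lyapunov, edist_nndist, ENNReal.coe_le_coe] at hx
    exact Set.mem_iUnion.2 ⟨S.vtx x, NNReal.coe_le_coe.2 hx⟩
  have hbdd : Bornology.IsBounded (⋃ i, Metric.closedBall (xs i) R) :=
    Bornology.isBounded_iUnion.2 fun _ ↦ Metric.isBounded_closedBall
  exact (hbdd.subset hsub).isCompact_closure

lemma lintegral_lyapunov_le_drift [BorelSpace K] (hxs : ∀ i, xs i ∈ S.Ks i) (x : K) :
    ∫⁻ y, S.lyapunov xs y ∂S.kernel x ≤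
      ENNReal.ofReal S.a * S.lyapunov xs x + S.drift xs := by
  rw [S.lintegral_kernel (S.measurable_lyapunov xs)]
  calc ∑ e, ENNReal.ofReal (S.p e x) * S.lyapunov xs (S.w e x)
      ≤ ∑ e, (ENNReal.ofReal (S.p e x) * edist (S.w e x) (S.w e (xs (S.vtx x))) +
          edist (S.w e (xs (S.ι e))) (xs (S.τ e))) := by
        refine Finset.sum_le_sum fun e _ ↦ ?_
        rcases eq_or_ne (S.p e x) 0 with h | h
        · simp [h]
        have hx := mem_Ks_of_p_ne_zero h
        rw [lyapunov, vtx_eq (S.w_maps e hx), vtx_eq hx]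
        refine (mul_le_mul_right (edist_triangle _ (S.w e (xs (S.ι e))) _) _).trans ?_
        rw [mul_add]
        gcongr
        exact mul_le_of_le_one_left' (ENNReal.ofReal_le_one.2 (S.p_le_one e x))
    _ ≤ _ := by
        rw [Finset.sum_add_distrib]
        gcongr
        · exact sum_ofReal_mul_edist_le (S.mem_Ks_vtx x) (hxs _)
        · exact le_rfl

variable [BorelSpace K]

lemma lintegral_lyapunov_le (hxs : ∀ i, xs i ∈ S.Ks i) {μ : Measure K} [IsProbabilityMeasure μ]
    (hμ : S.adjoint μ = μ) : ∫⁻ x, S.lyapunov xs x ∂μ ≤ S.momentBound xs :=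
  lintegral_le_of_drift (κ := S.kernel) (S.measurable_lyapunov xs) (fun _ ↦ edist_ne_top _ _)
    S.ofReal_a_lt_one (lintegral_lyapunov_le_drift hxs) hμ

lemma isFeller_kernel (hOpen : ∀ i, IsOpen (S.Ks i))
    (hDini : ∀ e, DiniOn (S.p e) (S.Ks (S.ι e))) (hp : S.ProbBddBelow δ) : IsFeller S.kernel := by
  intro f
  simp only [S.integral_kernel f.continuous.measurable.stronglyMeasurable]
  exact continuous_Ufun hOpen hDini hp f.continuous

theorem exists_invariant [Nonempty K] [ProperSpace K] (hOpen : ∀ i, IsOpen (S.Ks i))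
    (hDini : ∀ e, DiniOn (S.p e) (S.Ks (S.ι e))) (hp : S.ProbBddBelow δ) :
    ∃ μ : Measure K, IsProbabilityMeasure μ ∧ S.adjoint μ = μ := by
  choose xs hxs using S.Ks_nonempty
  let m (k : ℕ) : Measure K :=
    (fun ν ↦ S.kernel ∘ₘ ν)^[k] (.dirac (xs (S.vtx (Classical.arbitrary K))))
  have hm (k : ℕ) : m (k + 1) = S.kernel ∘ₘ m k := by
    simp only [m, Function.iterate_succ_apply']
  have hprob (k : ℕ) : IsProbabilityMeasure (m k) := by
    induction k with
    | zero => exact Measure.dirac.isProbabilityMeasure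
    | succ k ih => rw [hm]; infer_instance
  have hmoment (k : ℕ) : ∫⁻ x, S.lyapunov xs x ∂m k ≤ S.momentBound xs := by
    induction k with
    | zero => simp [m, lyapunov, vtx_eq (hxs _)]
    | succ k ih =>
      rw [hm]
      exact lintegral_comp_le_of_drift (S.measurable_lyapunov xs)
        (lintegral_lyapunov_le_drift hxs) ih
  have htight : IsTightMeasureSet (Set.range (cesaroMean m)) := by
    refine isTightMeasureSet_of_lintegral_le (S.measurable_lyapunov xs)
      (S.isCompact_closure_lyapunov_le xs) (S.momentBound_ne_top xs) ?_
    rintro _ ⟨n, rfl⟩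
    exact lintegral_cesaroMean_le hmoment n
  exact exists_invariant_of_isTightMeasureSet (κ := S.kernel) (isFeller_kernel hOpen hDini hp)
    hprob hm htight

end Existence

end CMS

section Words

variable {E : Type*}

/-- The word `σ_m ⋯ σ_{m+n-1}` read in `σ`. -/
def window (m : ℤ) : ℕ → (ℤ → E) → List E
  | 0, _ => []
  | n + 1, σ => window m n σ ++ [σ (m + n)]

variable {m : ℤ} {n : ℕ} {σ : ℤ → E} {w : List E}

@[simp] lemma length_window (m : ℤ) (n : ℕ) (σ : ℤ → E) : (window m n σ).length = n := by
  induction n with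
  | zero => rfl
  | succ n ih => rw [window, List.length_append, ih, List.length_singleton]

lemma window_succ' (m : ℤ) (n : ℕ) (σ : ℤ → E) :
    window m (n + 1) σ = σ m :: window (m + 1) n σ := by
  induction n with
  | zero => simp [window]
  | succ n ih =>
    rw [window, ih, window, List.cons_append]
    congr 4
    push_cast
    ring

lemma window_eq_ofFn (m : ℤ) (n : ℕ) (σ : ℤ → E) :
    window m n σ = List.ofFn fun j : Fin n ↦ σ (m + (j : ℕ)) := by
  induction n with
  | zero => simp [window]
  | succ n ih =>
    rw [window, ih, List.ofFn_succ']
    simp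

lemma window_shiftZ (m k : ℤ) (n : ℕ) (σ : ℤ → E) :
    window m n (shiftZ E k σ) = window (m + k) n σ := by
  simp only [window_eq_ofFn, shiftZ, add_right_comm]

/-- The cylinder of the sequences in which the word `w` is read from position `m` on. -/
def cyl (m : ℤ) (w : List E) : Set (ℤ → E) := {σ | window m w.length σ = w}

lemma mem_cyl : σ ∈ cyl m w ↔ window m w.length σ = w := by
  rw [cyl, Set.mem_ofPred_eq]

lemma cyl_eq_setOf_get (m : ℤ) (w : List E) :
    cyl m w = {σ | ∀ j : Fin w.length, σ (m + (j : ℕ)) = w.get j} := by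
  ext σ
  rw [mem_cyl, Set.mem_ofPred_eq, window_eq_ofFn]
  conv_lhs => rhs; rw [← List.ofFn_get w]
  rw [List.ofFn_injective.eq_iff, funext_iff]

lemma mem_cyl_nil : σ ∈ cyl m [] := mem_cyl.2 rfl

lemma mem_cyl_cons {e : E} : σ ∈ cyl m (e :: w) ↔ σ m = e ∧ σ ∈ cyl (m + 1) w := by
  rw [mem_cyl, mem_cyl, List.length_cons, window_succ', List.cons.injEq]

lemma mem_cyl_append {v : List E} :
    σ ∈ cyl m (w ++ v) ↔ σ ∈ cyl m w ∧ σ ∈ cyl (m + w.length) v := by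
  induction w generalizing m with
  | nil => simp [mem_cyl_nil]
  | cons e w ih =>
    rw [List.cons_append, mem_cyl_cons, mem_cyl_cons, ih, and_assoc, List.length_cons]
    push_cast
    rw [add_right_comm, add_assoc m (w.length : ℤ) 1]

lemma mem_cyl_singleton {e : E} : σ ∈ cyl m [e] ↔ σ m = e := by
  rw [mem_cyl_cons, and_iff_left mem_cyl_nil]

lemma preimage_shiftZ_cyl (m k : ℤ) (w : List E) : shiftZ E k ⁻¹' cyl m w = cyl (m + k) w := by
  ext σ
  rw [Set.mem_preimage, mem_cyl, mem_cyl, window_shiftZ]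

variable [Fintype E]

/-- The words of length `n` over the alphabet `E`. -/
def words (E : Type*) [Fintype E] (n : ℕ) : Finset (List E) :=
  Finset.univ.map ⟨fun es : Fin n → E ↦ List.ofFn es, List.ofFn_injective⟩

lemma mem_words {n : ℕ} {w : List E} : w ∈ words E n ↔ w.length = n := by
  simp only [words, Finset.mem_map, Finset.mem_univ, true_and, Function.Embedding.coeFn_mk]
  constructor
  · rintro ⟨es, rfl⟩
    exact List.length_ofFn
  · rintro rfl
    exact ⟨w.get, List.ofFn_get w⟩

lemma sum_words_zero {β : Type*} [AddCommMonoid β] (g : List E → β) :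
    ∑ w ∈ words E 0, g w = g [] := by
  simp [words]

lemma sum_words_succ {β : Type*} [AddCommMonoid β] (n : ℕ) (g : List E → β) :
    ∑ w ∈ words E (n + 1), g w = ∑ e, ∑ w ∈ words E n, g (e :: w) := by
  simp only [words, Finset.sum_map, Function.Embedding.coeFn_mk]
  rw [← Equiv.sum_comp (Fin.consEquiv fun _ ↦ E), Fintype.sum_prod_type]
  exact Finset.sum_congr rfl fun e _ ↦ Finset.sum_congr rfl fun es _ ↦
    congrArg g (List.ofFn_cons e es)

lemma sum_words_succ' {β : Type*} [AddCommMonoid β] (n : ℕ) (g : List E → β) :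
    ∑ w ∈ words E (n + 1), g w = ∑ w ∈ words E n, ∑ e, g (w ++ [e]) := by
  induction n generalizing g with
  | zero => simp [sum_words_succ, sum_words_zero]
  | succ n ih =>
    rw [sum_words_succ, sum_words_succ]
    exact Finset.sum_congr rfl fun e _ ↦ ih _

lemma sum_words_add {β : Type*} [AddCommMonoid β] (m n : ℕ) (g : List E → β) :
    ∑ w ∈ words E (m + n), g w = ∑ w ∈ words E m, ∑ v ∈ words E n, g (w ++ v) := by
  induction n generalizing g with
  | zero => simp [sum_words_zero]
  | succ n ih =>
    rw [← add_assoc, sum_words_succ', ih]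
    simp only [sum_words_succ', List.append_assoc]

lemma preimage_window (m : ℤ) (n : ℕ) (A : Set (List E)) :
    window m n ⁻¹' A = ⋃ w ∈ words E n, ⋃ _ : w ∈ A, cyl m w := by
  ext σ
  simp only [Set.mem_preimage, Set.mem_iUnion, mem_words, exists_prop, mem_cyl]
  constructor
  · exact fun h ↦ ⟨_, length_window m n σ, h, by rw [length_window]⟩
  · rintro ⟨w, rfl, hw, hσ⟩
    rwa [hσ]

lemma sum_indicator_cyl {β : Type*} [AddCommMonoid β] (m : ℤ) (n : ℕ) (g : List E → β)
    (σ : ℤ → E) : ∑ w ∈ words E n, (cyl m w).indicator (fun _ ↦ g w) σ = g (window m n σ) := by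
  rw [Finset.sum_eq_single (window m n σ)]
  · exact Set.indicator_of_mem (mem_cyl.2 (by rw [length_window])) _
  · intro w hw hne
    refine Set.indicator_of_notMem (fun hσ ↦ hne ?_) _
    rw [mem_cyl, mem_words.1 hw] at hσ
    exact hσ.symm
  · exact fun h ↦ absurd (mem_words.2 (length_window m n σ)) h

end Words

section CylinderMeasure

lemma shiftZ_zero (E : Type*) : shiftZ E 0 = id :=
  funext fun σ ↦ funext fun j ↦ congrArg σ (add_zero j)

variable {E : Type*} [MeasurableSpace E] {Λ : Measure (ℤ → E)}

lemma measurable_shiftZ (k : ℤ) : Measurable (shiftZ E k) :=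
  measurable_pi_lambda _ fun _ ↦ measurable_pi_apply _

lemma ShiftInvariant.map_shiftZ (h : ShiftInvariant Λ) (k : ℤ) : Λ.map (shiftZ E k) = Λ := by
  have hadd (j k : ℤ) : Λ.map (shiftZ E (k + j)) = (Λ.map (shiftZ E j)).map (shiftZ E k) := by
    rw [Measure.map_map (measurable_shiftZ k) (measurable_shiftZ j)]
    congr 1
    ext σ i
    simp only [shiftZ, Function.comp_apply, add_assoc]
  have hzero : Λ.map (shiftZ E 0) = Λ := by
    rw [shiftZ_zero, Measure.map_id]
  have hone : Λ.map (shiftZ E 1) = Λ := h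
  have hneg : Λ.map (shiftZ E (-1)) = Λ := by
    conv_rhs => rw [← hzero, ← neg_add_cancel 1, hadd, hone]
  induction k using Int.induction_on with
  | zero => exact hzero
  | succ i ih => rw [hadd, hone, ih]
  | pred i ih => rw [sub_eq_add_neg, hadd, hneg, ih]

lemma subset_of_forall_measurableSet_mem {e e' : E}
    (h : ∀ A : Set E, MeasurableSet A → e ∈ A → e' ∈ A) {k : ℤ} {B : Set (ℤ → E)}
    (hB : MeasurableSet B) (hsub : {σ | σ k = e} ⊆ B) : {σ | σ k = e'} ⊆ B := by
  rintro σ (rfl : σ k = e')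
  have hmem := h (Function.update σ k ⁻¹' B) (measurable_update σ hB)
    (hsub (by simp [Set.mem_ofPred_eq]))
  simpa using hmem

lemma cylEnt_eq_sum_words [Fintype E] (Λ : Measure (ℤ → E)) (n : ℕ) :
    cylEnt Λ n = ∑ w ∈ words E n, Real.negMulLog (Λ.real (cyl 0 w)) := by
  rw [cylEnt, words, Finset.sum_map]
  refine Finset.sum_congr rfl fun es _ ↦ ?_
  congr 3
  ext σ
  simp only [Function.Embedding.coeFn_mk, mem_cyl, List.length_ofFn, window_eq_ofFn, zero_add,
    List.ofFn_injective.eq_iff, funext_iff, Set.mem_ofPred_eq]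

theorem separatesPoints_of_sum_measure_eq_one [Fintype E] [IsProbabilityMeasure Λ] (k : ℤ)
    (hsum : ∑ e, Λ {σ | σ k = e} = 1) (hpos : ∀ e, Λ {σ | σ k = e} ≠ 0) :
    MeasurableSpace.SeparatesPoints E := by
  classical
  refine ⟨fun e e' h ↦ ?_⟩
  by_contra hne
  have hcover : Set.univ ⊆ ⋃ f ∈ Finset.univ.erase e', toMeasurable Λ {σ | σ k = f} := by
    intro σ _
    simp only [Set.mem_iUnion, Finset.mem_erase, Finset.mem_univ, and_true, exists_prop]
    rcases eq_or_ne (σ k) e' with hσ | hσ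
    · exact ⟨e, hne, subset_of_forall_measurableSet_mem h (measurableSet_toMeasurable _ _)
        (subset_toMeasurable _ _) hσ⟩
    · exact ⟨σ k, hσ, subset_toMeasurable _ _ rfl⟩
  have hle : 1 ≤ ∑ f ∈ Finset.univ.erase e', Λ {σ | σ k = f} := by
    simpa only [measure_univ, measure_toMeasurable] using
      (measure_mono (μ := Λ) hcover).trans (measure_biUnion_finset_le _ _)
  rw [← Finset.add_sum_erase _ _ (Finset.mem_univ e')] at hsum
  have hlt := ENNReal.lt_add_right (ne_top_of_le_ne_top ENNReal.one_ne_top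
    (hsum ▸ le_add_self)) (hpos e')
  rw [add_comm, hsum] at hlt
  exact hlt.not_ge hle

variable [MeasurableSingletonClass E]

lemma measurableSet_cyl (m : ℤ) (w : List E) : MeasurableSet (cyl m w) := by
  rw [cyl_eq_setOf_get, Set.ofPred_forall]
  exact .iInter fun j ↦ measurable_pi_apply _ (measurableSet_singleton _)

lemma ShiftInvariant.measure_cyl (h : ShiftInvariant Λ) (m : ℤ) (w : List E) :
    Λ (cyl m w) = Λ (cyl 0 w) := by
  conv_rhs => rw [← h.map_shiftZ m]
  rw [Measure.map_apply (measurable_shiftZ _) (measurableSet_cyl _ _), preimage_shiftZ_cyl,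
    zero_add]

lemma ShiftInvariant.measureReal_cyl (h : ShiftInvariant Λ) (m : ℤ) (w : List E) :
    Λ.real (cyl m w) = Λ.real (cyl 0 w) := by
  rw [Measure.real, h.measure_cyl, Measure.real]

lemma measurableSet_preimage_window [Finite E] (m : ℤ) (n : ℕ) (A : Set (List E)) :
    MeasurableSet (window m n ⁻¹' A) := by
  cases nonempty_fintype E
  rw [preimage_window]
  exact Finset.measurableSet_biUnion _ fun w _ ↦ .iUnion fun _ ↦ measurableSet_cyl m w

lemma measurable_comp_window [Finite E] {β : Type*} [MeasurableSpace β] (m : ℤ) (n : ℕ)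
    (g : List E → β) : Measurable fun σ ↦ g (window m n σ) :=
  fun A _ ↦ measurableSet_preimage_window m n (g ⁻¹' A)

section WordSums

variable [Fintype E]

lemma lintegral_comp_window (Λ : Measure (ℤ → E)) (m : ℤ) (n : ℕ) (g : List E → ℝ≥0∞) :
    ∫⁻ σ, g (window m n σ) ∂Λ = ∑ w ∈ words E n, g w * Λ (cyl m w) := by
  simp only [← sum_indicator_cyl m n g]
  rw [lintegral_finsetSum _ fun w _ ↦ measurable_const.indicator (measurableSet_cyl m w)]
  simp only [lintegral_indicator_const (measurableSet_cyl m _)]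

lemma integral_comp_window (Λ : Measure (ℤ → E)) [IsFiniteMeasure Λ] (m : ℤ) (n : ℕ)
    (g : List E → ℝ) : ∫ σ, g (window m n σ) ∂Λ = ∑ w ∈ words E n, Λ.real (cyl m w) * g w := by
  simp only [← sum_indicator_cyl m n g]
  rw [integral_finsetSum _ fun w _ ↦ (integrable_const _).indicator (measurableSet_cyl m w)]
  simp only [integral_indicator_const _ (measurableSet_cyl m _), smul_eq_mul]

lemma measure_preimage_window (Λ : Measure (ℤ → E)) (m : ℤ) (n : ℕ) (A : Set (List E)) :
    Λ (window m n ⁻¹' A) = ∑ w ∈ words E n, A.indicator 1 w * Λ (cyl m w) := by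
  rw [← lintegral_comp_window, ← lintegral_indicator_one (measurableSet_preimage_window m n A)]
  rfl

lemma sum_measureReal_inter_coord (Λ : Measure (ℤ → E)) [IsFiniteMeasure Λ] (A : Set (ℤ → E))
    (k : ℤ) : ∑ e, Λ.real ({σ | σ k = e} ∩ A) = Λ.real A := by
  have hm (e : E) : MeasurableSet ((fun σ : ℤ → E ↦ σ k) ⁻¹' {e}) :=
    measurable_pi_apply k (measurableSet_singleton e)
  have h := sum_measureReal_preimage_singleton (μ := Λ.restrict A) Finset.univ
    (f := fun σ : ℤ → E ↦ σ k) fun e _ ↦ hm e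
  simp only [measureReal_restrict_apply (hm _), Finset.coe_univ, Set.preimage_univ,
    measureReal_restrict_apply_univ] at h
  exact h

lemma sum_measureReal_cyl_append (Λ : Measure (ℤ → E)) [IsFiniteMeasure Λ] (m : ℤ) (w : List E) :
    ∑ e, Λ.real (cyl m (w ++ [e])) = Λ.real (cyl m w) := by
  rw [← sum_measureReal_inter_coord Λ (cyl m w) (m + w.length)]
  refine Finset.sum_congr rfl fun e _ ↦ congrArg _ (Set.ext fun σ ↦ ?_)
  rw [mem_cyl_append, mem_cyl_singleton, and_comm, Set.mem_inter_iff, Set.mem_ofPred_eq]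

lemma sum_measureReal_cyl_cons (Λ : Measure (ℤ → E)) [IsFiniteMeasure Λ] (m : ℤ) (w : List E) :
    ∑ e, Λ.real (cyl m (e :: w)) = Λ.real (cyl (m + 1) w) := by
  rw [← sum_measureReal_inter_coord Λ (cyl (m + 1) w) m]
  refine Finset.sum_congr rfl fun e _ ↦ congrArg _ (Set.ext fun σ ↦ ?_)
  rw [mem_cyl_cons, Set.mem_inter_iff, Set.mem_ofPred_eq]

lemma sum_words_measureReal_cyl (Λ : Measure (ℤ → E)) [IsProbabilityMeasure Λ] (m : ℤ) (n : ℕ) :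
    ∑ w ∈ words E n, Λ.real (cyl m w) = 1 := by
  simpa using (integral_comp_window Λ m n fun _ ↦ 1).symm

end WordSums

theorem ext_of_measure_cyl [Finite E] {Λ Λ' : Measure (ℤ → E)} [IsProbabilityMeasure Λ]
    [IsProbabilityMeasure Λ'] (h : ∀ m w, Λ (cyl m w) = Λ' (cyl m w)) : Λ = Λ' := by
  cases nonempty_fintype E
  refine IsProjectiveLimit.unique (P := fun J ↦ Λ'.map J.restrict) (fun J ↦ ?_) fun J ↦ rfl
  obtain ⟨m, hm⟩ := J.bddBelow
  obtain ⟨b, hb⟩ := J.bddAbove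
  set n := (b - m + 1).toNat
  refine Measure.ext_of_singleton fun g ↦ ?_
  have hpre : (J.restrict : (ℤ → E) → J → E) ⁻¹' {g} =
      window m n ⁻¹' {w | ∀ j : J, w[((j : ℤ) - m).toNat]? = some (g j)} := by
    ext σ
    simp only [Set.mem_preimage, Set.mem_singleton_iff, Set.mem_ofPred_eq, funext_iff,
      Finset.restrict, window_eq_ofFn, List.getElem?_ofFn]
    refine forall_congr' fun j ↦ ?_
    have hj := hm j.2
    have hj' := hb j.2
    simp [show ((j : ℤ) - m).toNat < n by omega, show m + max ((j : ℤ) - m) 0 = j by omega]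
  rw [Measure.map_apply (by fun_prop) (measurableSet_singleton g),
    Measure.map_apply (by fun_prop) (measurableSet_singleton g), hpre,
    measure_preimage_window, measure_preimage_window]
  simp only [h]

end CylinderMeasure

namespace CMS

variable {K : Type*} [MetricSpace K] [MeasurableSpace K] {N : ℕ} {E : Type*} [Fintype E]
  {S : CMS K N E} {δ : ℝ} {μ : Measure K}

lemma integrable_p (S : CMS K N E) (μ : Measure K) [IsFiniteMeasure μ] (e : E) :
    Integrable (S.p e) μ :=
  integrable_of_mem_Icc (S.p_meas e) fun x ↦ ⟨S.p_nonneg e x, S.p_le_one e x⟩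

lemma ProbBddBelow.integral_p_pos (hp : S.ProbBddBelow δ) [IsProbabilityMeasure μ]
    (hirr : S.IrreducibleGraph) (hμ : S.adjoint μ = μ) (e : E) : 0 < ∫ x, S.p e x ∂μ := by
  rw [integral_pos_iff_support_of_nonneg (S.p_nonneg e) (S.integrable_p μ e)]
  refine (pos_iff_ne_zero.2 (hp.measure_Ks_ne_zero hirr (IsProbabilityMeasure.ne_zero μ) hμ
    (S.ι e))).trans_le (measure_mono fun x hx ↦ ?_)
  exact (hp.1.trans_le (hp.2 e x hx)).ne'

variable [MeasurableSpace E] {M : Measure (ℤ → E)}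

lemma IsGMarkovMeasure.measure_cyl (hM : S.IsGMarkovMeasure μ M) (m : ℤ) (w : List E) :
    M (cyl m w) = ENNReal.ofReal (∫ x, S.cylWeight x w ∂μ) := by
  rw [cyl_eq_setOf_get, hM.2]

lemma IsGMarkovMeasure.measurableSingletonClass [IsProbabilityMeasure μ]
    (hM : S.IsGMarkovMeasure μ M)
    (hp : S.ProbBddBelow δ) (hirr : S.IrreducibleGraph) (hμ : S.adjoint μ = μ) :
    MeasurableSingletonClass E := by
  have hM0 (e : E) : M {σ | σ 0 = e} = ENNReal.ofReal (∫ x, S.p e x ∂μ) := by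
    have hcyl : {σ : ℤ → E | σ 0 = e} = cyl 0 [e] := by
      ext σ
      rw [mem_cyl_singleton, Set.mem_ofPred_eq]
    simpa [hcyl, cylWeight] using hM.measure_cyl 0 [e]
  have := hM.1
  have := separatesPoints_of_sum_measure_eq_one (Λ := M) 0 ?_ fun e ↦ ?_
  · infer_instance
  · simp only [hM0]
    rw [← ENNReal.ofReal_sum_of_nonneg fun e _ ↦ integral_nonneg (S.p_nonneg e),
      ← integral_finsetSum _ fun e _ ↦ S.integrable_p μ e]
    simp [S.p_sum_one]
  · rw [hM0]
    exact (ENNReal.ofReal_pos.2 (hp.integral_p_pos hirr hμ e)).ne'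

end CMS

section PinskerInequality

lemma sqrt_sub_sqrt_sq_add_sub_le {x y : ℝ} (hx : 0 ≤ x) (hy : 0 ≤ y) (h : 0 < x → 0 < y) :
    (√x - √y) ^ 2 + (x - y) ≤ x * Real.log x - x * Real.log y := by
  rcases hx.eq_or_lt with rfl | hx0
  · simp [Real.sq_sqrt hy]
  have hsx : 0 < √x := Real.sqrt_pos.2 hx0
  have hsy : 0 < √y := Real.sqrt_pos.2 (h hx0)
  have hlog : Real.log y / 2 - Real.log x / 2 ≤ √y / √x - 1 := by
    rw [← Real.log_sqrt hx, ← Real.log_sqrt hy, ← Real.log_div hsy.ne' hsx.ne']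
    exact Real.log_le_sub_one_of_pos (by positivity)
  have hratio : x * (√y / √x) = √x * √y := by
    rw [← mul_div_assoc, mul_div_right_comm, Real.div_sqrt]
  nlinarith [mul_le_mul_of_nonneg_left hlog hx, Real.sq_sqrt hx, Real.sq_sqrt hy]

lemma mul_log_sub_mul_log_le {x y c : ℝ} (hc : 0 ≤ c) (hx : 0 ≤ x) (h : x ≤ c * y) :
    x * Real.log x - x * Real.log y ≤ c * |x - y| := by
  rcases hx.eq_or_lt with rfl | hx0
  · simp only [zero_mul, sub_zero]
    positivity
  have hy : 0 < y := pos_of_mul_pos_right (hx0.trans_le h) hc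
  calc x * Real.log x - x * Real.log y = x * Real.log (x / y) := by
        rw [Real.log_div hx0.ne' hy.ne', mul_sub]
    _ ≤ x * (x / y - 1) := by
        gcongr
        exact Real.log_le_sub_one_of_pos (by positivity)
    _ = x / y * (x - y) := by field_simp
    _ ≤ x / y * |x - y| := by
        gcongr
        exact le_abs_self _
    _ ≤ c * |x - y| := by
        gcongr
        exact (div_le_iff₀ hy).2 h

theorem sum_abs_sub_sq_le_sum_mul_log_sub {ι : Type*} {s : Finset ι} {x y : ι → ℝ}
    (hx : ∀ i ∈ s, 0 ≤ x i) (hy : ∀ i ∈ s, 0 ≤ y i) (h : ∀ i ∈ s, 0 < x i → 0 < y i)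
    (hx1 : ∑ i ∈ s, x i = 1) (hy1 : ∑ i ∈ s, y i = 1) :
    (∑ i ∈ s, |x i - y i|) ^ 2 ≤
      4 * ∑ i ∈ s, (x i * Real.log (x i) - x i * Real.log (y i)) := by
  have hfactor (i) (hi : i ∈ s) : |x i - y i| = |√(x i) - √(y i)| * (√(x i) + √(y i)) := by
    rw [← abs_of_nonneg (by positivity : 0 ≤ √(x i) + √(y i)), ← abs_mul, mul_comm, ← sq_sub_sq,
      Real.sq_sqrt (hx i hi), Real.sq_sqrt (hy i hi)]
  have hplus : ∑ i ∈ s, (√(x i) + √(y i)) ^ 2 ≤ 4 :=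
    calc ∑ i ∈ s, (√(x i) + √(y i)) ^ 2 ≤ ∑ i ∈ s, (2 * x i + 2 * y i) :=
          Finset.sum_le_sum fun i hi ↦ by
            nlinarith [Real.sq_sqrt (hx i hi), Real.sq_sqrt (hy i hi),
              sq_nonneg (√(x i) - √(y i))]
      _ = 4 := by
          rw [Finset.sum_add_distrib, ← Finset.mul_sum, ← Finset.mul_sum, hx1, hy1]
          norm_num
  have hminus : ∑ i ∈ s, (√(x i) - √(y i)) ^ 2 ≤
      ∑ i ∈ s, (x i * Real.log (x i) - x i * Real.log (y i)) := by
    have hsum := Finset.sum_le_sum fun i hi ↦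
      sqrt_sub_sqrt_sq_add_sub_le (hx i hi) (hy i hi) (h i hi)
    simpa [Finset.sum_add_distrib, Finset.sum_sub_distrib, hx1, hy1] using hsum
  calc (∑ i ∈ s, |x i - y i|) ^ 2
      = (∑ i ∈ s, |√(x i) - √(y i)| * (√(x i) + √(y i))) ^ 2 := by rw [Finset.sum_congr rfl hfactor]
    _ ≤ (∑ i ∈ s, |√(x i) - √(y i)| ^ 2) * ∑ i ∈ s, (√(x i) + √(y i)) ^ 2 :=
        Finset.sum_mul_sq_le_sq_mul_sq _ _ _
    _ ≤ (∑ i ∈ s, (x i * Real.log (x i) - x i * Real.log (y i))) * 4 := by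
        simp only [sq_abs]
        gcongr
        exact (Finset.sum_nonneg fun i _ ↦ sq_nonneg _).trans hminus
    _ = _ := mul_comm _ _

end PinskerInequality

section CesaroConvergence

/-- Convergence to `0` of the arithmetic means of a real sequence. -/
def CesaroNull (u : ℕ → ℝ) : Prop :=
  Tendsto (fun n : ℕ ↦ (n : ℝ)⁻¹ * ∑ i ∈ Finset.range n, u i) atTop (𝓝 0)

variable {u v : ℕ → ℝ}

lemma CesaroNull.of_sq_le_mul {C : ℝ} (hv : CesaroNull v) (hu : ∀ n, u n ^ 2 ≤ C * v n) :
    CesaroNull u := by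
  have hlim : Tendsto (fun n : ℕ ↦ √(C * ((n : ℝ)⁻¹ * ∑ i ∈ Finset.range n, v i))) atTop (𝓝 0) := by
    simpa using (hv.const_mul C).sqrt
  refine squeeze_zero_norm (fun n ↦ Real.abs_le_sqrt ?_) hlim
  rcases n.eq_zero_or_pos with rfl | hn
  · simp
  have hn' : (n : ℝ) ≠ 0 := by positivity
  calc ((n : ℝ)⁻¹ * ∑ i ∈ Finset.range n, u i) ^ 2
      = ((n : ℝ)⁻¹) ^ 2 * (∑ i ∈ Finset.range n, u i) ^ 2 := mul_pow _ _ _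
    _ ≤ ((n : ℝ)⁻¹) ^ 2 * (n * ∑ i ∈ Finset.range n, u i ^ 2) := by
        gcongr
        simpa using sq_sum_le_card_mul_sum_sq (s := Finset.range n) (f := u)
    _ = (n : ℝ)⁻¹ * ∑ i ∈ Finset.range n, u i ^ 2 := by field_simp
    _ ≤ (n : ℝ)⁻¹ * ∑ i ∈ Finset.range n, C * v i := by
        gcongr
        exact hu _
    _ = _ := by rw [← Finset.mul_sum]; ring

lemma CesaroNull.of_nonneg_of_le_mul {C : ℝ} (hv : CesaroNull v) (hu : ∀ n, 0 ≤ u n)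
    (huv : ∀ n, u n ≤ C * v n) : CesaroNull u := by
  refine squeeze_zero (g := fun n : ℕ ↦ C * ((n : ℝ)⁻¹ * ∑ i ∈ Finset.range n, v i))
    (fun n ↦ mul_nonneg (by positivity) (Finset.sum_nonneg fun i _ ↦ hu i)) (fun n ↦ ?_)
    (by simpa using hv.const_mul C)
  calc (n : ℝ)⁻¹ * ∑ i ∈ Finset.range n, u i ≤ (n : ℝ)⁻¹ * ∑ i ∈ Finset.range n, C * v i := by
        gcongr
        exact huv _
    _ = _ := by rw [← Finset.mul_sum, mul_left_comm]

lemma CesaroNull.comp_succ (hu : CesaroNull u) : CesaroNull fun n ↦ u (n + 1) := by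
  have hinv : Tendsto (fun n : ℕ ↦ (n : ℝ)⁻¹) atTop (𝓝 0) := tendsto_inv_atTop_nhds_zero_nat
  have hlim := ((hinv.const_add 1).mul (hu.comp (tendsto_add_atTop_nat 1))).sub
    (hinv.mul_const (u 0))
  simp only [add_zero, mul_zero, zero_mul, sub_zero] at hlim
  refine hlim.congr' ?_
  filter_upwards [eventually_ne_atTop 0] with n hn
  have hn' : (n : ℝ) ≠ 0 := Nat.cast_ne_zero.2 hn
  rw [Function.comp_apply, Finset.sum_range_succ']
  push_cast
  field_simp
  ring

lemma CesaroNull.comp_add (hu : CesaroNull u) (j : ℕ) : CesaroNull fun n ↦ u (n + j) := by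
  induction j with
  | zero => exact hu
  | succ j ih => simpa only [← add_assoc, add_right_comm _ 1 j] using ih.comp_succ

theorem CesaroNull.eq_zero_of_tendsto {d : ℕ → ℝ} {d₀ C : ℝ} {k : ℕ} (hu : CesaroNull u)
    (hd : ∀ n, |d n| ≤ C * ∑ j ∈ Finset.range k, u (n + j)) (hlim : Tendsto d atTop (𝓝 d₀)) :
    d₀ = 0 := by
  have hbound : Tendsto (fun n : ℕ ↦ C * ∑ j ∈ Finset.range k,
      (n : ℝ)⁻¹ * ∑ i ∈ Finset.range n, u (i + j)) atTop (𝓝 0) := by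
    simpa using (tendsto_finsetSum (Finset.range k) fun j _ ↦ hu.comp_add j).const_mul C
  refine abs_nonpos_iff.1 (le_of_tendsto_of_tendsto' hlim.abs.cesaro hbound fun n ↦ ?_)
  calc (n : ℝ)⁻¹ * ∑ i ∈ Finset.range n, |d i|
      ≤ (n : ℝ)⁻¹ * ∑ i ∈ Finset.range n, C * ∑ j ∈ Finset.range k, u (i + j) := by
        gcongr
        exact hd _
    _ = C * ∑ j ∈ Finset.range k, (n : ℝ)⁻¹ * ∑ i ∈ Finset.range n, u (i + j) := by
        rw [← Finset.mul_sum, ← Finset.mul_sum, Finset.sum_comm]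
        ring

end CesaroConvergence

namespace CMS

variable {K : Type*} [MetricSpace K] [MeasurableSpace K] {N : ℕ} {E : Type*} [Fintype E]
  {S : CMS K N E} {δ : ℝ} {xs : Fin N → K} {σ : ℤ → E}

section Coding

/-- `wordMap S x [e₁, …, e_n] = w_{e_n} ∘ ⋯ ∘ w_{e₁} x`. -/
def wordMap (S : CMS K N E) (x : K) (w : List E) : K := w.foldl (fun y e ↦ S.w e y) x

lemma comp_eq_wordMap (S : CMS K N E) (σ : ℤ → E) (n : ℕ) (x : K) :
    S.comp σ n x = S.wordMap x (window (-n) (n + 1) σ) := by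
  induction n generalizing x with
  | zero => simp [comp, wordMap, window]
  | succ n ih =>
    rw [comp, ih, window_succ' (-((n + 1 : ℕ) : ℤ)), wordMap, wordMap, List.foldl_cons]
    push_cast
    ring_nf

lemma comp_mem_Ks (hσ : σ ∈ S.SigmaG) (n : ℕ) {x : K} (hx : x ∈ S.Ks (S.ι (σ (-(n : ℤ))))) :
    S.comp σ n x ∈ S.Ks (S.τ (σ 0)) := by
  induction n generalizing x with
  | zero => exact S.w_maps _ (by simpa using hx)
  | succ n ih =>
    refine ih ?_
    have h := S.w_maps _ hx
    rw [hσ] at h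
    push_cast at h
    rwa [show -((n : ℤ) + 1) + 1 = -n by ring] at h

lemma codeSeq_mem_Ks (hxs : ∀ i, xs i ∈ S.Ks i) (hσ : σ ∈ S.SigmaG) (n : ℕ) :
    S.codeSeq xs σ n ∈ S.Ks (S.ι (σ 1)) := by
  rw [← zero_add (1 : ℤ), ← hσ 0]
  exact comp_mem_Ks hσ n (hxs _)

variable [Nonempty K]

/-- The approximation `w_{e_n} ∘ ⋯ ∘ w_{e₁} (x_{i(e₁)})` of the coding map determined by the word
`[e₁, …, e_n]`; the value at the empty word is irrelevant. -/
noncomputable def codePoint (S : CMS K N E) (xs : Fin N → K) : List E → K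
  | [] => Classical.arbitrary K
  | e :: w => S.wordMap (xs (S.ι e)) (e :: w)

lemma codePoint_append_singleton (S : CMS K N E) (xs : Fin N → K) {w : List E} (hw : w ≠ [])
    (e : E) : S.codePoint xs (w ++ [e]) = S.w e (S.codePoint xs w) := by
  obtain ⟨f, v, rfl⟩ := List.exists_cons_of_ne_nil hw
  simp [codePoint, wordMap]

lemma codeSeq_eq_codePoint (S : CMS K N E) (xs : Fin N → K) (σ : ℤ → E) (n : ℕ) :
    S.codeSeq xs σ n = S.codePoint xs (window (-n) (n + 1) σ) := by
  rw [codeSeq, comp_eq_wordMap, window_succ', codePoint]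

lemma codeSeq_shiftL (S : CMS K N E) (xs : Fin N → K) (σ : ℤ → E) (n : ℕ) :
    S.codeSeq xs (shiftL E σ) (n + 1) = S.w (σ 1) (S.codeSeq xs σ n) := by
  have hwindow : window (-((n + 1 : ℕ) : ℤ)) (n + 1 + 1) (shiftL E σ) =
      window (-n) (n + 1) σ ++ [σ 1] := by
    change window _ _ (shiftZ E 1 σ) = _
    rw [window_shiftZ, window]
    push_cast
    ring_nf
  rw [codeSeq_eq_codePoint, hwindow, codePoint_append_singleton _ _
    (List.ne_nil_of_length_eq_add_one (length_window _ _ _)), ← codeSeq_eq_codePoint]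

lemma tendsto_codeSeq (hσ : σ ∈ S.Dset xs) : Tendsto (S.codeSeq xs σ) atTop (𝓝 (S.F xs σ)) :=
  tendsto_nhds_limUnder hσ.2

lemma F_mem_Ks (hOpen : ∀ i, IsOpen (S.Ks i)) (hxs : ∀ i, xs i ∈ S.Ks i) (hσ : σ ∈ S.Dset xs) :
    S.F xs σ ∈ S.Ks (S.ι (σ 1)) :=
  (isClopen_Ks hOpen _).isClosed.mem_of_tendsto (tendsto_codeSeq hσ)
    (.of_forall fun n ↦ codeSeq_mem_Ks hxs hσ.1 n)

lemma tendsto_comp_codeSeq {β : Type*} [TopologicalSpace β] (hOpen : ∀ i, IsOpen (S.Ks i))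
    (hxs : ∀ i, xs i ∈ S.Ks i) (hσ : σ ∈ S.Dset xs) {f : K → β}
    (hf : ContinuousOn f (S.Ks (S.ι (σ 1)))) :
    Tendsto (fun n ↦ f (S.codeSeq xs σ n)) atTop (𝓝 (f (S.F xs σ))) :=
  (hf.continuousAt ((hOpen _).mem_nhds (F_mem_Ks hOpen hxs hσ))).tendsto.comp (tendsto_codeSeq hσ)

lemma F_shiftL (hOpen : ∀ i, IsOpen (S.Ks i)) (hp : S.ProbBddBelow δ) (hxs : ∀ i, xs i ∈ S.Ks i)
    (hσ : σ ∈ S.Dset xs) : S.F xs (shiftL E σ) = S.w (σ 1) (S.F xs σ) := by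
  have h := tendsto_comp_codeSeq hOpen hxs hσ (hp.continuousOn_w (σ 1))
  simp only [← codeSeq_shiftL] at h
  exact ((tendsto_add_atTop_iff_nat 1).1 h).limUnder_eq

end Coding

section CylWeight

lemma cylWeight_mem_Icc (S : CMS K N E) (x : K) (w : List E) :
    S.cylWeight x w ∈ Set.Icc 0 1 := by
  induction w generalizing x with
  | nil => simp [cylWeight]
  | cons e w ih =>
    exact ⟨mul_nonneg (S.p_nonneg e x) (ih _).1,
      mul_le_one₀ (S.p_le_one e x) (ih _).1 (ih _).2⟩

lemma continuous_cylWeight (hOpen : ∀ i, IsOpen (S.Ks i))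
    (hDini : ∀ e, DiniOn (S.p e) (S.Ks (S.ι e))) (hp : S.ProbBddBelow δ) (w : List E) :
    Continuous fun x ↦ S.cylWeight x w := by
  induction w with
  | nil => exact continuous_const
  | cons e w ih => exact continuous_p_mul_comp_w hOpen hDini hp e ih

end CylWeight

end CMS

section NextLetter

variable {E : Type*} {β : Type*}

lemma exists_forall_append_singleton_eq [Inhabited β] (g : List E → E → β) :
    ∃ G : List E → β, ∀ w e, G (w ++ [e]) = g w e :=
  ⟨fun l ↦ l.getLast?.elim default (g l.dropLast), fun w e ↦ by simp⟩

variable [MeasurableSpace E] [MeasurableSingletonClass E]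

lemma measurable_comp_window_next [Finite E] [Inhabited β] [MeasurableSpace β] (m : ℤ) (n : ℕ)
    (g : List E → E → β) : Measurable fun σ : ℤ → E ↦ g (window m n σ) (σ (m + n)) := by
  obtain ⟨G, hG⟩ := exists_forall_append_singleton_eq g
  simpa only [window, hG] using measurable_comp_window m (n + 1) G

lemma integral_comp_window_next [Fintype E] (Λ : Measure (ℤ → E)) [IsFiniteMeasure Λ] (m : ℤ)
    (n : ℕ) (g : List E → E → ℝ) :
    ∫ σ, g (window m n σ) (σ (m + n)) ∂Λ =
      ∑ w ∈ words E n, ∑ e, Λ.real (cyl m (w ++ [e])) * g w e := by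
  obtain ⟨G, hG⟩ := exists_forall_append_singleton_eq g
  have h := integral_comp_window Λ m (n + 1) G
  rw [sum_words_succ'] at h
  simpa only [window, hG] using h

end NextLetter

section Entropy

variable {E : Type*} [MeasurableSpace E]

lemma measureReal_cyl_append_le (Λ : Measure (ℤ → E)) [IsFiniteMeasure Λ] (m : ℤ)
    (w v : List E) : Λ.real (cyl m (w ++ v)) ≤ Λ.real (cyl m w) :=
  measureReal_mono fun _ hσ ↦ (mem_cyl_append.1 hσ).1

section CylinderBounds

variable [MeasurableSingletonClass E] {Λ : Measure (ℤ → E)}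

lemma ShiftInvariant.measureReal_cyl_append_le_right [IsFiniteMeasure Λ]
    (hinv : ShiftInvariant Λ) (w v : List E) :
    Λ.real (cyl 0 (w ++ v)) ≤ Λ.real (cyl 0 v) := by
  rw [← hinv.measureReal_cyl (0 + w.length) v]
  exact measureReal_mono fun _ hσ ↦ (mem_cyl_append.1 hσ).2

lemma ShiftInvariant.measureReal_cyl_append_mul_log [IsFiniteMeasure Λ]
    (hinv : ShiftInvariant Λ) (w v : List E) :
    Λ.real (cyl 0 (w ++ v)) * Real.log (Λ.real (cyl 0 w) * Λ.real (cyl 0 v)) =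
      Λ.real (cyl 0 (w ++ v)) * Real.log (Λ.real (cyl 0 w)) +
        Λ.real (cyl 0 (w ++ v)) * Real.log (Λ.real (cyl 0 v)) := by
  rcases (measureReal_nonneg : 0 ≤ Λ.real (cyl 0 (w ++ v))).eq_or_lt with h0 | hpos
  · simp only [← h0, zero_mul, add_zero]
  · rw [Real.log_mul (hpos.trans_le (measureReal_cyl_append_le Λ 0 _ _)).ne'
      (hpos.trans_le (hinv.measureReal_cyl_append_le_right _ _)).ne', mul_add]

end CylinderBounds

variable [Fintype E]

lemma cylEnt_nonneg (Λ : Measure (ℤ → E)) [IsProbabilityMeasure Λ] (n : ℕ) : 0 ≤ cylEnt Λ n :=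
  Finset.sum_nonneg fun _ _ ↦ Real.negMulLog_nonneg measureReal_nonneg measureReal_le_one

lemma KSEntropy_le_cylEnt_div (Λ : Measure (ℤ → E)) [IsProbabilityMeasure Λ] {n : ℕ}
    (hn : n ≠ 0) : KSEntropy Λ ≤ cylEnt Λ n / n := by
  obtain ⟨k, rfl⟩ := Nat.exists_eq_succ_of_ne_zero hn
  rw [Nat.succ_eq_add_one, Nat.cast_add_one]
  refine ciInf_le ⟨0, ?_⟩ k
  rintro _ ⟨k, rfl⟩
  exact div_nonneg (cylEnt_nonneg Λ _) (by positivity)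

variable [MeasurableSingletonClass E] {Λ : Measure (ℤ → E)}

lemma ShiftInvariant.sum_words_measureReal_cyl_append [IsFiniteMeasure Λ]
    (hinv : ShiftInvariant Λ) (n : ℕ) (v : List E) :
    ∑ w ∈ words E n, Λ.real (cyl 0 (w ++ v)) = Λ.real (cyl 0 v) := by
  induction n with
  | zero => rw [sum_words_zero, List.nil_append]
  | succ n ih =>
    rw [sum_words_succ, Finset.sum_comm, ← ih]
    refine Finset.sum_congr rfl fun w _ ↦ ?_
    simp only [List.cons_append]
    rw [sum_measureReal_cyl_cons, hinv.measureReal_cyl]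

lemma sum_words_measureReal_append_cyl (Λ : Measure (ℤ → E)) [IsFiniteMeasure Λ] (m : ℤ)
    (w : List E) (n : ℕ) :
    ∑ v ∈ words E n, Λ.real (cyl m (w ++ v)) = Λ.real (cyl m w) := by
  induction n with
  | zero => rw [sum_words_zero, List.append_nil]
  | succ n ih => simp only [sum_words_succ', ← List.append_assoc, sum_measureReal_cyl_append, ih]

theorem ShiftInvariant.subadditive_cylEnt [IsProbabilityMeasure Λ] (hinv : ShiftInvariant Λ) :
    Subadditive (cylEnt Λ) := by
  intro m n
  have hgibbs := (sq_nonneg _).trans <| sum_abs_sub_sq_le_sum_mul_log_sub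
    (s := words E m ×ˢ words E n) (x := fun q ↦ Λ.real (cyl 0 (q.1 ++ q.2)))
    (y := fun q ↦ Λ.real (cyl 0 q.1) * Λ.real (cyl 0 q.2)) (fun _ _ ↦ measureReal_nonneg)
    (fun _ _ ↦ by positivity)
    (fun q _ hq ↦ mul_pos (hq.trans_le (measureReal_cyl_append_le Λ 0 _ _))
      (hq.trans_le (hinv.measureReal_cyl_append_le_right _ _)))
    (by simp only [Finset.sum_product, sum_words_measureReal_append_cyl,
      sum_words_measureReal_cyl])
    (by simp only [Finset.sum_product, ← Finset.mul_sum, sum_words_measureReal_cyl, mul_one])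
  simp only [cylEnt_eq_sum_words, sum_words_add, Real.negMulLog, neg_mul]
  simp only [hinv.measureReal_cyl_append_mul_log, Finset.sum_sub_distrib, Finset.sum_add_distrib,
    Finset.sum_product, ← Finset.sum_mul, sum_words_measureReal_append_cyl] at hgibbs
  rw [Finset.sum_comm (s := words E m) (t := words E n)
    (f := fun w v ↦ Λ.real (cyl 0 (w ++ v)) * Real.log (Λ.real (cyl 0 v)))] at hgibbs
  simp only [← Finset.sum_mul, hinv.sum_words_measureReal_cyl_append] at hgibbs
  simp only [Finset.sum_neg_distrib]
  linarith

theorem ShiftInvariant.tendsto_cylEnt_div [IsProbabilityMeasure Λ] (hinv : ShiftInvariant Λ) :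
    Tendsto (fun n : ℕ ↦ cylEnt Λ n / n) atTop (𝓝 (KSEntropy Λ)) := by
  have hsub := hinv.subadditive_cylEnt
  have hbdd : BddBelow (Set.range fun n : ℕ ↦ cylEnt Λ n / n) :=
    ⟨0, Set.forall_mem_range.2 fun n ↦ div_nonneg (cylEnt_nonneg Λ n) n.cast_nonneg⟩
  have hlim := hsub.tendsto_lim hbdd
  have heq : hsub.lim = KSEntropy Λ :=
    le_antisymm
      (le_ciInf fun n ↦ by simpa using hsub.lim_le_div hbdd n.succ_ne_zero)
      (ge_of_tendsto hlim ((eventually_ne_atTop 0).mono fun n hn ↦ KSEntropy_le_cylEnt_div Λ hn))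
  rwa [heq] at hlim

end Entropy

namespace CMS

variable {K : Type*} [MetricSpace K] [MeasurableSpace K] [Nonempty K] {N : ℕ}
  {E : Type*} [Fintype E] {S : CMS K N E} {δ : ℝ} {xs : Fin N → K}

lemma comp_codeSeq_eq_window_next {β : Type*} (S : CMS K N E) (xs : Fin N → K) (Φ : E → K → β)
    (n : ℕ) (σ : ℤ → E) : Φ (σ 1) (S.codeSeq xs σ n) =
      Φ (σ (-n + (n + 1 : ℕ))) (S.codePoint xs (window (-n) (n + 1) σ)) := by
  rw [codeSeq_eq_codePoint]
  push_cast
  rw [neg_add_cancel_left]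

variable [MeasurableSpace E]

/-- The mass `Λ [w e]` would have if, after the word `w` has been read, the next letter were
drawn with the probabilities `p` at the coded point of `w`. -/
noncomputable def predicted (S : CMS K N E) (xs : Fin N → K) (Λ : Measure (ℤ → E)) (w : List E)
    (e : E) : ℝ :=
  Λ.real (cyl 0 w) * S.p e (S.codePoint xs w)

/-- The relative entropy of the law of words of length `n + 2` with respect to the weights
`predicted`. -/
noncomputable def relEntropy (S : CMS K N E) (xs : Fin N → K) (Λ : Measure (ℤ → E)) (n : ℕ) : ℝ :=
  ∑ w ∈ words E (n + 1), ∑ e, (Λ.real (cyl 0 (w ++ [e])) * Real.log (Λ.real (cyl 0 (w ++ [e]))) -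
    Λ.real (cyl 0 (w ++ [e])) * Real.log (S.predicted xs Λ w e))

/-- The `ℓ¹` distance of the law of words of length `n + 2` from the weights `predicted`. -/
noncomputable def variation (S : CMS K N E) (xs : Fin N → K) (Λ : Measure (ℤ → E)) (n : ℕ) : ℝ :=
  ∑ w ∈ words E (n + 1), ∑ e, |Λ.real (cyl 0 (w ++ [e])) - S.predicted xs Λ w e|

lemma predicted_nonneg (S : CMS K N E) (xs : Fin N → K) (Λ : Measure (ℤ → E)) (w : List E)
    (e : E) : 0 ≤ S.predicted xs Λ w e :=
  mul_nonneg measureReal_nonneg (S.p_nonneg _ _)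

lemma sum_predicted (S : CMS K N E) (xs : Fin N → K) (Λ : Measure (ℤ → E)) (w : List E) :
    ∑ e, S.predicted xs Λ w e = Λ.real (cyl 0 w) := by
  simp only [predicted, ← Finset.mul_sum, S.p_sum_one, mul_one]

variable [MeasurableSingletonClass E] {Λ : Measure (ℤ → E)}

section CodeIntegrals

lemma measurable_codeSeq (S : CMS K N E) (xs : Fin N → K) (n : ℕ) :
    Measurable fun σ ↦ S.codeSeq xs σ n := by
  simp only [codeSeq_eq_codePoint]
  exact measurable_comp_window _ _ _

lemma aemeasurable_F [BorelSpace K] (hD : ∀ᵐ σ ∂Λ, σ ∈ S.Dset xs) : AEMeasurable (S.F xs) Λ :=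
  aemeasurable_of_tendsto_metrizable_ae atTop (fun n ↦ (S.measurable_codeSeq xs n).aemeasurable)
    (hD.mono fun _ ↦ tendsto_codeSeq)

lemma measurable_comp_codeSeq {β : Type*} [Inhabited β] [MeasurableSpace β] (S : CMS K N E)
    (xs : Fin N → K) (Φ : E → K → β) (n : ℕ) :
    Measurable fun σ ↦ Φ (σ 1) (S.codeSeq xs σ n) := by
  simp only [comp_codeSeq_eq_window_next S xs Φ]
  exact measurable_comp_window_next (-n) (n + 1) fun w e ↦ Φ e (S.codePoint xs w)

lemma tendsto_integral_comp_codeSeq [IsFiniteMeasure Λ] (hOpen : ∀ i, IsOpen (S.Ks i))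
    (hxs : ∀ i, xs i ∈ S.Ks i) (hD : ∀ᵐ σ ∂Λ, σ ∈ S.Dset xs) {Φ : E → K → ℝ}
    (hΦ : ∀ e, ContinuousOn (Φ e) (S.Ks (S.ι e))) {C : ℝ}
    (hC : ∀ e, ∀ x ∈ S.Ks (S.ι e), |Φ e x| ≤ C) :
    Tendsto (fun n ↦ ∫ σ, Φ (σ 1) (S.codeSeq xs σ n) ∂Λ) atTop
      (𝓝 (∫ σ, Φ (σ 1) (S.F xs σ) ∂Λ)) :=
  tendsto_integral_of_dominated_convergence (fun _ ↦ C)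
    (fun n ↦ (S.measurable_comp_codeSeq xs Φ n).aestronglyMeasurable) (integrable_const _)
    (fun n ↦ hD.mono fun _ hσ ↦ hC _ _ (codeSeq_mem_Ks hxs hσ.1 n))
    (hD.mono fun _ hσ ↦ tendsto_comp_codeSeq hOpen hxs hσ (hΦ _))

lemma integral_comp_codeSeq [IsFiniteMeasure Λ] (S : CMS K N E) (xs : Fin N → K)
    (hinv : ShiftInvariant Λ) (Φ : E → K → ℝ) (n : ℕ) :
    ∫ σ, Φ (σ 1) (S.codeSeq xs σ n) ∂Λ =
      ∑ w ∈ words E (n + 1), ∑ e, Λ.real (cyl 0 (w ++ [e])) * Φ e (S.codePoint xs w) := by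
  simp only [comp_codeSeq_eq_window_next S xs Φ, ← hinv.measureReal_cyl (-n)]
  exact integral_comp_window_next Λ (-n) (n + 1) fun w e ↦ Φ e (S.codePoint xs w)

lemma integral_comp_codeSeq' [IsFiniteMeasure Λ] (S : CMS K N E) (xs : Fin N → K)
    (hinv : ShiftInvariant Λ) (f : K → ℝ) (n : ℕ) :
    ∫ σ, f (S.codeSeq xs σ n) ∂Λ =
      ∑ w ∈ words E (n + 1), Λ.real (cyl 0 w) * f (S.codePoint xs w) := by
  rw [integral_comp_codeSeq S xs hinv (fun _ ↦ f) n]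
  simp only [← Finset.sum_mul, sum_measureReal_cyl_append]

lemma codePoint_mem_Ks (hxs : ∀ i, xs i ∈ S.Ks i) (hinv : ShiftInvariant Λ)
    (hD : ∀ᵐ σ ∂Λ, σ ∈ S.Dset xs) {n : ℕ} {w : List E} (hw : w.length = n + 1) {e : E}
    (hpos : 0 < Λ.real (cyl 0 (w ++ [e]))) : S.codePoint xs w ∈ S.Ks (S.ι e) := by
  rw [← hinv.measureReal_cyl (-n)] at hpos
  obtain ⟨σ, hσ, hσD⟩ : ∃ σ ∈ cyl (-(n : ℤ)) (w ++ [e]), σ ∈ S.Dset xs := by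
    by_contra! hcon
    exact (measureReal_ne_zero_iff (ne_top_of_lt
      (ENNReal.toReal_pos_iff.1 hpos).2)).1 hpos.ne' (measure_mono_null hcon (ae_iff.1 hD))
  obtain ⟨hσw, hσe⟩ := mem_cyl_append.1 hσ
  rw [mem_cyl, hw] at hσw
  rw [mem_cyl_singleton, hw] at hσe
  push_cast at hσe
  rw [neg_add_cancel_left] at hσe
  rw [← hσw, ← hσe, ← codeSeq_eq_codePoint]
  exact codeSeq_mem_Ks hxs hσD.1 n

end CodeIntegrals

section RelativeEntropy

lemma mul_measureReal_cyl_append_le_predicted [IsFiniteMeasure Λ] (hp : S.ProbBddBelow δ)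
    (hxs : ∀ i, xs i ∈ S.Ks i) (hinv : ShiftInvariant Λ) (hD : ∀ᵐ σ ∂Λ, σ ∈ S.Dset xs) {n : ℕ}
    {w : List E} (hw : w.length = n + 1) (e : E) :
    δ * Λ.real (cyl 0 (w ++ [e])) ≤ S.predicted xs Λ w e := by
  rcases (measureReal_nonneg : 0 ≤ Λ.real (cyl 0 (w ++ [e]))).eq_or_lt with h0 | hpos
  · rw [← h0, mul_zero]
    exact S.predicted_nonneg xs Λ w e
  · rw [mul_comm]
    exact mul_le_mul (measureReal_cyl_append_le Λ 0 w [e])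
      (hp.2 _ _ (codePoint_mem_Ks hxs hinv hD hw hpos)) hp.1.le measureReal_nonneg

variable [IsProbabilityMeasure Λ]

lemma variation_sq_le (hp : S.ProbBddBelow δ) (hxs : ∀ i, xs i ∈ S.Ks i)
    (hinv : ShiftInvariant Λ) (hD : ∀ᵐ σ ∂Λ, σ ∈ S.Dset xs) (n : ℕ) :
    S.variation xs Λ n ^ 2 ≤ 4 * S.relEntropy xs Λ n := by
  have h := sum_abs_sub_sq_le_sum_mul_log_sub (s := words E (n + 1) ×ˢ Finset.univ)
    (x := fun q ↦ Λ.real (cyl 0 (q.1 ++ [q.2]))) (y := fun q ↦ S.predicted xs Λ q.1 q.2)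
    (fun _ _ ↦ measureReal_nonneg) (fun _ _ ↦ S.predicted_nonneg xs Λ _ _)
    (fun q hq hpos ↦ (mul_pos hp.1 hpos).trans_le (mul_measureReal_cyl_append_le_predicted hp hxs
      hinv hD (mem_words.1 (Finset.mem_product.1 hq).1) _))
    (by simp only [Finset.sum_product, sum_measureReal_cyl_append, sum_words_measureReal_cyl])
    (by simp only [Finset.sum_product, sum_predicted, sum_words_measureReal_cyl])
  simpa only [Finset.sum_product, variation, relEntropy] using h

lemma relEntropy_nonneg (hp : S.ProbBddBelow δ) (hxs : ∀ i, xs i ∈ S.Ks i)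
    (hinv : ShiftInvariant Λ) (hD : ∀ᵐ σ ∂Λ, σ ∈ S.Dset xs) (n : ℕ) :
    0 ≤ S.relEntropy xs Λ n := by
  linarith [sq_nonneg (S.variation xs Λ n), variation_sq_le hp hxs hinv hD n]

lemma relEntropy_le_variation (hp : S.ProbBddBelow δ) (hxs : ∀ i, xs i ∈ S.Ks i)
    (hinv : ShiftInvariant Λ) (hD : ∀ᵐ σ ∂Λ, σ ∈ S.Dset xs) (n : ℕ) :
    S.relEntropy xs Λ n ≤ δ⁻¹ * S.variation xs Λ n := by
  simp only [relEntropy, variation, Finset.mul_sum]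
  refine Finset.sum_le_sum fun w hw ↦ Finset.sum_le_sum fun e _ ↦
    mul_log_sub_mul_log_le (inv_nonneg.2 hp.1.le) measureReal_nonneg ?_
  exact (le_inv_mul_iff₀ hp.1).2
    (mul_measureReal_cyl_append_le_predicted hp hxs hinv hD (mem_words.1 hw) e)

theorem relEntropy_eq (hp : S.ProbBddBelow δ) (hxs : ∀ i, xs i ∈ S.Ks i)
    (hinv : ShiftInvariant Λ) (hD : ∀ᵐ σ ∂Λ, σ ∈ S.Dset xs) (n : ℕ) :
    S.relEntropy xs Λ n = ∫ σ, -Real.log (S.p (σ 1) (S.codeSeq xs σ n)) ∂Λ -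
      (cylEnt Λ (n + 2) - cylEnt Λ (n + 1)) := by
  have hcylEnt : cylEnt Λ (n + 1) = ∑ w ∈ words E (n + 1), ∑ e,
      -(Λ.real (cyl 0 (w ++ [e])) * Real.log (Λ.real (cyl 0 w))) := by
    simp only [cylEnt_eq_sum_words, Finset.sum_neg_distrib, ← Finset.sum_mul,
      sum_measureReal_cyl_append, Real.negMulLog, neg_mul]
  rw [integral_comp_codeSeq S xs hinv (fun e x ↦ -Real.log (S.p e x)), hcylEnt,
    cylEnt_eq_sum_words, sum_words_succ' (n + 1), relEntropy]
  simp only [← Finset.sum_sub_distrib]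
  refine Finset.sum_congr rfl fun w hw ↦ Finset.sum_congr rfl fun e _ ↦ ?_
  rcases (measureReal_nonneg : 0 ≤ Λ.real (cyl 0 (w ++ [e]))).eq_or_lt with h0 | hpos
  · simp [← h0]
  · have hw0 := hpos.trans_le (measureReal_cyl_append_le Λ 0 w [e])
    have hpe := hp.1.trans_le (hp.2 e _ (codePoint_mem_Ks hxs hinv hD (mem_words.1 hw) hpos))
    rw [predicted, Real.log_mul hw0.ne' hpe.ne', Real.negMulLog]
    ring

end RelativeEntropy

end CMS

namespace CMS

variable {K : Type*} [MetricSpace K] [MeasurableSpace K] {N : ℕ} {E : Type*} [Fintype E]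
  {S : CMS K N E} {δ : ℝ} {xs : Fin N → K}

section EntropyBound

lemma neg_log_p_nonneg (S : CMS K N E) (e : E) (x : K) : 0 ≤ -Real.log (S.p e x) :=
  neg_nonneg.2 (Real.log_nonpos (S.p_nonneg e x) (S.p_le_one e x))

lemma ProbBddBelow.abs_neg_log_p_le (hp : S.ProbBddBelow δ) (e : E) {x : K}
    (hx : x ∈ S.Ks (S.ι e)) : |-Real.log (S.p e x)| ≤ -Real.log δ := by
  rw [abs_of_nonneg (S.neg_log_p_nonneg e x)]
  exact neg_le_neg (Real.log_le_log hp.1 (hp.2 e x hx))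

variable [Nonempty K] [MeasurableSpace E] [MeasurableSingletonClass E] {Λ : Measure (ℤ → E)}
  [IsProbabilityMeasure Λ]

lemma tendsto_integral_neg_log_p (hOpen : ∀ i, IsOpen (S.Ks i))
    (hDini : ∀ e, DiniOn (S.p e) (S.Ks (S.ι e))) (hp : S.ProbBddBelow δ)
    (hxs : ∀ i, xs i ∈ S.Ks i) (hD : ∀ᵐ σ ∂Λ, σ ∈ S.Dset xs) :
    Tendsto (fun n ↦ ∫ σ, -Real.log (S.p (σ 1) (S.codeSeq xs σ n)) ∂Λ) atTop
      (𝓝 (∫ σ, -Real.log (S.p (σ 1) (S.F xs σ)) ∂Λ)) :=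
  tendsto_integral_comp_codeSeq hOpen hxs hD (Φ := fun e x ↦ -Real.log (S.p e x))
    (fun e ↦ ((continuous_p hOpen hDini e).continuousOn.log fun x hx ↦
      (hp.1.trans_le (hp.2 e x hx)).ne').neg)
    (fun e _ hx ↦ hp.abs_neg_log_p_le e hx)

lemma sum_relEntropy (hp : S.ProbBddBelow δ) (hxs : ∀ i, xs i ∈ S.Ks i)
    (hinv : ShiftInvariant Λ) (hD : ∀ᵐ σ ∂Λ, σ ∈ S.Dset xs) (n : ℕ) :
    ∑ i ∈ Finset.range n, S.relEntropy xs Λ i =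
      ∑ i ∈ Finset.range n, ∫ σ, -Real.log (S.p (σ 1) (S.codeSeq xs σ i)) ∂Λ -
        (cylEnt Λ (n + 1) - cylEnt Λ 1) := by
  simp only [relEntropy_eq hp hxs hinv hD]
  rw [Finset.sum_sub_distrib, Finset.sum_range_sub fun i ↦ cylEnt Λ (i + 1)]

theorem tendsto_cesaro_relEntropy (hOpen : ∀ i, IsOpen (S.Ks i))
    (hDini : ∀ e, DiniOn (S.p e) (S.Ks (S.ι e))) (hp : S.ProbBddBelow δ)
    (hxs : ∀ i, xs i ∈ S.Ks i) (hinv : ShiftInvariant Λ) (hD : ∀ᵐ σ ∂Λ, σ ∈ S.Dset xs) :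
    Tendsto (fun n : ℕ ↦ (n : ℝ)⁻¹ * ∑ i ∈ Finset.range n, S.relEntropy xs Λ i) atTop
      (𝓝 (∫ σ, -Real.log (S.p (σ 1) (S.F xs σ)) ∂Λ - KSEntropy Λ)) := by
  have hnull : Tendsto (fun n : ℕ ↦ (n : ℝ)⁻¹) atTop (𝓝 0) := tendsto_inv_atTop_nhds_zero_nat
  have hent : Tendsto (fun n : ℕ ↦ (1 + (n : ℝ)⁻¹) * (cylEnt Λ (n + 1) / ((n + 1 : ℕ) : ℝ)) -
      (n : ℝ)⁻¹ * cylEnt Λ 1) atTop (𝓝 (KSEntropy Λ)) := by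
    simpa using ((hnull.const_add 1).mul
      (hinv.tendsto_cylEnt_div.comp (tendsto_add_atTop_nat 1))).sub (hnull.mul_const (cylEnt Λ 1))
  refine ((tendsto_integral_neg_log_p hOpen hDini hp hxs hD).cesaro.sub hent).congr' ?_
  filter_upwards [eventually_ne_atTop 0] with n hn
  have hn' : (n : ℝ) ≠ 0 := Nat.cast_ne_zero.2 hn
  rw [sum_relEntropy hp hxs hinv hD]
  push_cast
  field_simp

theorem KSEntropy_le_integral_neg_log_p (hOpen : ∀ i, IsOpen (S.Ks i))
    (hDini : ∀ e, DiniOn (S.p e) (S.Ks (S.ι e))) (hp : S.ProbBddBelow δ)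
    (hxs : ∀ i, xs i ∈ S.Ks i) (hinv : ShiftInvariant Λ) (hD : ∀ᵐ σ ∂Λ, σ ∈ S.Dset xs) :
    KSEntropy Λ ≤ ∫ σ, -Real.log (S.p (σ 1) (S.F xs σ)) ∂Λ :=
  sub_nonneg.1 <| ge_of_tendsto' (tendsto_cesaro_relEntropy hOpen hDini hp hxs hinv hD) fun _ ↦
    mul_nonneg (by positivity) (Finset.sum_nonneg fun i _ ↦ relEntropy_nonneg hp hxs hinv hD i)

theorem KSEntropy_eq_integral_neg_log_p_iff (hOpen : ∀ i, IsOpen (S.Ks i))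
    (hDini : ∀ e, DiniOn (S.p e) (S.Ks (S.ι e))) (hp : S.ProbBddBelow δ)
    (hxs : ∀ i, xs i ∈ S.Ks i) (hinv : ShiftInvariant Λ) (hD : ∀ᵐ σ ∂Λ, σ ∈ S.Dset xs) :
    KSEntropy Λ = ∫ σ, -Real.log (S.p (σ 1) (S.F xs σ)) ∂Λ ↔
      CesaroNull (S.variation xs Λ) := by
  have hlim := tendsto_cesaro_relEntropy hOpen hDini hp hxs hinv hD
  refine ⟨fun heq ↦ ?_, fun hnull ↦ ?_⟩
  · rw [← heq, sub_self] at hlim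
    exact CesaroNull.of_sq_le_mul hlim (variation_sq_le hp hxs hinv hD)
  · have hnull' := CesaroNull.of_nonneg_of_le_mul hnull (relEntropy_nonneg hp hxs hinv hD)
      (relEntropy_le_variation hp hxs hinv hD)
    exact (sub_eq_zero.1 (tendsto_nhds_unique hlim hnull')).symm

end EntropyBound

section EqualityCase

lemma abs_sum_p_mul_le (S : CMS K N E) {g : E → ℝ} {C : ℝ} (hg : ∀ e, |g e| ≤ C) (x : K) :
    |∑ e, S.p e x * g e| ≤ C := by
  calc |∑ e, S.p e x * g e| ≤ ∑ e, |S.p e x * g e| := Finset.abs_sum_le_sum_abs _ _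
    _ ≤ ∑ e, S.p e x * C := by
        gcongr with e
        rw [abs_mul, abs_of_nonneg (S.p_nonneg e x)]
        exact mul_le_mul_of_nonneg_left (hg e) (S.p_nonneg e x)
    _ = C := by rw [← Finset.sum_mul, S.p_sum_one, one_mul]

variable [Nonempty K] [MeasurableSpace E] {Λ : Measure (ℤ → E)}

lemma abs_sub_cylWeight_cons_le (S : CMS K N E) (xs : Fin N → K) (Λ : Measure (ℤ → E))
    {w : List E} (hw : w ≠ []) (e : E) (v : List E) :
    |Λ.real (cyl 0 (w ++ e :: v)) - Λ.real (cyl 0 w) * S.cylWeight (S.codePoint xs w) (e :: v)| ≤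
      |Λ.real (cyl 0 (w ++ [e] ++ v)) -
        Λ.real (cyl 0 (w ++ [e])) * S.cylWeight (S.codePoint xs (w ++ [e])) v| +
      |Λ.real (cyl 0 (w ++ [e])) - S.predicted xs Λ w e| := by
  obtain ⟨hc0, hc1⟩ := S.cylWeight_mem_Icc (S.codePoint xs (w ++ [e])) v
  rw [List.append_cons, cylWeight, ← codePoint_append_singleton S xs hw, predicted]
  set c := S.cylWeight (S.codePoint xs (w ++ [e])) v
  calc _ = |(Λ.real (cyl 0 (w ++ [e] ++ v)) - Λ.real (cyl 0 (w ++ [e])) * c) +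
        (Λ.real (cyl 0 (w ++ [e])) - Λ.real (cyl 0 w) * S.p e (S.codePoint xs w)) * c| := by
        ring_nf
    _ ≤ _ := abs_add_le _ _
    _ ≤ _ := by
        rw [abs_mul, abs_of_nonneg hc0]
        exact add_le_add_right (mul_le_of_le_one_right (abs_nonneg _) hc1) _

theorem sum_abs_sub_cylWeight_le (S : CMS K N E) (xs : Fin N → K) (Λ : Measure (ℤ → E))
    (v : List E) (n : ℕ) :
    ∑ w ∈ words E (n + 1),
        |Λ.real (cyl 0 (w ++ v)) - Λ.real (cyl 0 w) * S.cylWeight (S.codePoint xs w) v| ≤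
      ∑ j ∈ Finset.range v.length, S.variation xs Λ (n + j) := by
  induction v generalizing n with
  | nil => simp [cylWeight]
  | cons e v ih =>
    calc _ ≤ ∑ w ∈ words E (n + 1), (∑ f, |Λ.real (cyl 0 (w ++ [f] ++ v)) -
            Λ.real (cyl 0 (w ++ [f])) * S.cylWeight (S.codePoint xs (w ++ [f])) v| +
          ∑ f, |Λ.real (cyl 0 (w ++ [f])) - S.predicted xs Λ w f|) := by
          refine Finset.sum_le_sum fun w hw ↦ (abs_sub_cylWeight_cons_le S xs Λ
            (List.ne_nil_of_length_eq_add_one (mem_words.1 hw)) e v).trans (add_le_add ?_ ?_)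
          · exact Finset.single_le_sum (fun f _ ↦ abs_nonneg (Λ.real (cyl 0 (w ++ [f] ++ v)) -
              Λ.real (cyl 0 (w ++ [f])) * S.cylWeight (S.codePoint xs (w ++ [f])) v))
              (Finset.mem_univ e)
          · exact Finset.single_le_sum (fun f _ ↦ abs_nonneg (Λ.real (cyl 0 (w ++ [f])) -
              S.predicted xs Λ w f)) (Finset.mem_univ e)
      _ = ∑ w ∈ words E (n + 1 + 1), |Λ.real (cyl 0 (w ++ v)) -
            Λ.real (cyl 0 w) * S.cylWeight (S.codePoint xs w) v| + S.variation xs Λ n := by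
          rw [Finset.sum_add_distrib, sum_words_succ' (n + 1), variation]
      _ ≤ ∑ j ∈ Finset.range v.length, S.variation xs Λ (n + 1 + j) + S.variation xs Λ n := by
          gcongr
          exact ih (n + 1)
      _ = _ := by
          rw [List.length_cons, Finset.sum_range_succ', add_zero]
          simp only [add_assoc, add_comm 1]

variable [MeasurableSingletonClass E]

lemma integral_comp_F_eq [BorelSpace K] (hOpen : ∀ i, IsOpen (S.Ks i)) (hp : S.ProbBddBelow δ)
    (hxs : ∀ i, xs i ∈ S.Ks i) (hinv : ShiftInvariant Λ) (hD : ∀ᵐ σ ∂Λ, σ ∈ S.Dset xs)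
    {f : K → ℝ} (hf : Measurable f) :
    ∫ σ, f (S.F xs σ) ∂Λ = ∫ σ, f (S.w (σ 1) (S.F xs σ)) ∂Λ := by
  have hmap : Λ.map (shiftL E) = Λ := hinv
  have hFm : AEMeasurable (S.F xs) (Λ.map (shiftL E)) := hmap.symm ▸ aemeasurable_F hD
  calc ∫ σ, f (S.F xs σ) ∂Λ = ∫ σ, f (S.F xs σ) ∂(Λ.map (shiftL E)) := by rw [hmap]
    _ = ∫ σ, f (S.F xs (shiftL E σ)) ∂Λ :=
        integral_map (measurable_shiftZ 1).aemeasurable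
          (hf.comp_aemeasurable hFm).aestronglyMeasurable
    _ = _ := integral_congr_ae (hD.mono fun σ hσ ↦ congrArg f (F_shiftL hOpen hp hxs hσ))

variable [IsProbabilityMeasure Λ] {Φ : E → K → ℝ} {C : ℝ}

lemma abs_integral_codeSeq_sub_le (hinv : ShiftInvariant Λ) (hΦ : ∀ e x, |Φ e x| ≤ C) (n : ℕ) :
    |∫ σ, Φ (σ 1) (S.codeSeq xs σ n) ∂Λ - ∫ σ, ∑ e, S.p e (S.codeSeq xs σ n) *
      Φ e (S.codeSeq xs σ n) ∂Λ| ≤ C * S.variation xs Λ n := by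
  rw [integral_comp_codeSeq S xs hinv,
    integral_comp_codeSeq' S xs hinv fun x ↦ ∑ e, S.p e x * Φ e x, ← Finset.sum_sub_distrib,
    variation, Finset.mul_sum]
  refine (Finset.abs_sum_le_sum_abs _ _).trans (Finset.sum_le_sum fun w _ ↦ ?_)
  rw [Finset.mul_sum, ← Finset.sum_sub_distrib, Finset.mul_sum]
  refine (Finset.abs_sum_le_sum_abs _ _).trans (Finset.sum_le_sum fun e _ ↦ ?_)
  rw [← mul_assoc, ← predicted, ← sub_mul, abs_mul, mul_comm]
  exact mul_le_mul_of_nonneg_right (hΦ _ _) (abs_nonneg _)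

variable [BorelSpace K]

theorem integral_comp_F_eq_integral_map_F (hOpen : ∀ i, IsOpen (S.Ks i))
    (hDini : ∀ e, DiniOn (S.p e) (S.Ks (S.ι e))) (hxs : ∀ i, xs i ∈ S.Ks i)
    (hinv : ShiftInvariant Λ) (hD : ∀ᵐ σ ∂Λ, σ ∈ S.Dset xs)
    (hnull : CesaroNull (S.variation xs Λ)) (hcont : ∀ e, ContinuousOn (Φ e) (S.Ks (S.ι e)))
    (hΦ : ∀ e x, |Φ e x| ≤ C) :
    ∫ σ, Φ (σ 1) (S.F xs σ) ∂Λ = ∫ x, ∑ e, S.p e x * Φ e x ∂(Λ.map (S.F xs)) := by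
  have hmean : Continuous fun x ↦ ∑ e, S.p e x * Φ e x :=
    continuous_finsetSum _ fun e _ ↦ continuous_p_mul hOpen hDini e (hcont e)
  rw [integral_map (aemeasurable_F hD) hmean.measurable.aestronglyMeasurable]
  have hlim := tendsto_integral_comp_codeSeq hOpen hxs hD hcont fun e x _ ↦ hΦ e x
  have hlim_mean := tendsto_integral_comp_codeSeq hOpen hxs hD
    (Φ := fun _ x ↦ ∑ e, S.p e x * Φ e x) (fun _ ↦ hmean.continuousOn)
    fun _ x _ ↦ S.abs_sum_p_mul_le (fun e ↦ hΦ e x) x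
  refine sub_eq_zero.1 (hnull.eq_zero_of_tendsto (C := C) (k := 1) (fun n ↦ ?_)
    (hlim.sub hlim_mean))
  simpa using abs_integral_codeSeq_sub_le hinv hΦ n

theorem adjoint_map_F (hOpen : ∀ i, IsOpen (S.Ks i))
    (hDini : ∀ e, DiniOn (S.p e) (S.Ks (S.ι e))) (hp : S.ProbBddBelow δ)
    (hxs : ∀ i, xs i ∈ S.Ks i) (hinv : ShiftInvariant Λ) (hD : ∀ᵐ σ ∂Λ, σ ∈ S.Dset xs)
    (hnull : CesaroNull (S.variation xs Λ)) :
    S.adjoint (Λ.map (S.F xs)) = Λ.map (S.F xs) := by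
  have hF := aemeasurable_F hD
  have := Measure.isProbabilityMeasure_map hF
  refine ext_of_forall_integral_eq_of_IsFiniteMeasure fun f ↦ ?_
  have hfm : Measurable f := f.continuous.measurable
  rw [S.integral_adjoint hfm.stronglyMeasurable (f.integrable _),
    integral_map hF hfm.aestronglyMeasurable, integral_comp_F_eq hOpen hp hxs hinv hD hfm]
  exact (integral_comp_F_eq_integral_map_F hOpen hDini hxs hinv hD hnull
    (Φ := fun e x ↦ f (S.w e x))
    (fun e ↦ f.continuous.comp_continuousOn (hp.continuousOn_w e))
    fun _ _ ↦ f.norm_coe_le_norm _).symm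

theorem measureReal_cyl_eq_integral_map_F (hOpen : ∀ i, IsOpen (S.Ks i))
    (hDini : ∀ e, DiniOn (S.p e) (S.Ks (S.ι e))) (hp : S.ProbBddBelow δ)
    (hxs : ∀ i, xs i ∈ S.Ks i) (hinv : ShiftInvariant Λ) (hD : ∀ᵐ σ ∂Λ, σ ∈ S.Dset xs)
    (hnull : CesaroNull (S.variation xs Λ)) (v : List E) :
    Λ.real (cyl 0 v) = ∫ x, S.cylWeight x v ∂(Λ.map (S.F xs)) := by
  have hcont := continuous_cylWeight hOpen hDini hp v
  have hlim := tendsto_integral_comp_codeSeq hOpen hxs hD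
    (Φ := fun _ x ↦ S.cylWeight x v) (C := 1) (fun _ ↦ hcont.continuousOn) fun _ x _ ↦ by
      rw [abs_of_nonneg (S.cylWeight_mem_Icc x v).1]
      exact (S.cylWeight_mem_Icc x v).2
  rw [integral_map (aemeasurable_F hD) hcont.measurable.aestronglyMeasurable]
  refine sub_eq_zero.1 (hnull.eq_zero_of_tendsto (C := 1) (k := v.length) (fun n ↦ ?_)
    (hlim.const_sub (Λ.real (cyl 0 v))))
  rw [integral_comp_codeSeq' S xs hinv fun x ↦ S.cylWeight x v,
    ← hinv.sum_words_measureReal_cyl_append (n + 1) v, ← Finset.sum_sub_distrib, one_mul]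
  exact (Finset.abs_sum_le_sum_abs _ _).trans (sum_abs_sub_cylWeight_le S xs Λ v n)

end EqualityCase

end CMS

lemma exists_edist_le_add_mul_edist {X Y : Type*} [PseudoEMetricSpace X] [PseudoEMetricSpace Y]
    {f : X → Y} {s : Set X} (hf : UniformContinuousOn f s) {C : ℝ≥0∞} (hC : C ≠ ⊤)
    (hfC : ∀ x ∈ s, ∀ y ∈ s, edist (f x) (f y) ≤ C) {ε : ℝ≥0∞} (hε : 0 < ε) :
    ∃ L ≠ ⊤, ∀ x ∈ s, ∀ y ∈ s, edist (f x) (f y) ≤ ε + L * edist x y := by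
  obtain ⟨η, hη, hclose⟩ := EMetric.uniformContinuousOn_iff.1 hf ε hε
  have hη' : min η 1 ≠ 0 := (lt_min hη one_pos).ne'
  refine ⟨C / min η 1, ENNReal.div_ne_top hC hη', fun x hx y hy ↦ ?_⟩
  rcases lt_or_ge (edist x y) (min η 1) with h | h
  · exact (hclose hx hy (h.trans_le (min_le_left _ _))).le.trans le_self_add
  · calc edist (f x) (f y) ≤ C := hfC x hx y hy
      _ = C / min η 1 * min η 1 := (ENNReal.div_mul_cancel hη' (by simp)).symm
      _ ≤ C / min η 1 * edist x y := by gcongr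
      _ ≤ _ := le_add_self

namespace CMS

variable {K : Type*} [MetricSpace K] [MeasurableSpace K] {N : ℕ} {E : Type*} [Fintype E]
  {S : CMS K N E} {δ : ℝ} {xs : Fin N → K}

section WordMean

lemma measurable_cylWeight (S : CMS K N E) (w : List E) : Measurable fun x ↦ S.cylWeight x w := by
  induction w with
  | nil => exact measurable_const
  | cons e w ih => exact (S.p_meas e).mul (ih.comp (S.w_meas e))

lemma measurable_wordMap (S : CMS K N E) (w : List E) : Measurable fun x ↦ S.wordMap x w := by
  induction w with
  | nil => exact measurable_id
  | cons e w ih => exact ih.comp (S.w_meas e)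

lemma cylWeight_append_singleton (S : CMS K N E) (x : K) (w : List E) (e : E) :
    S.cylWeight x (w ++ [e]) = S.cylWeight x w * S.p e (S.wordMap x w) := by
  induction w generalizing x with
  | nil => simp [cylWeight, wordMap]
  | cons f w ih => rw [List.cons_append, cylWeight, ih, cylWeight, mul_assoc, wordMap, wordMap,
      List.foldl_cons]

lemma exists_wordMap_mem_Ks {i : Fin N} {x y : K} {w : List E} (hx : x ∈ S.Ks i)
    (hy : y ∈ S.Ks i) (hw : S.cylWeight x w ≠ 0) :
    ∃ j, S.wordMap x w ∈ S.Ks j ∧ S.wordMap y w ∈ S.Ks j := by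
  induction w generalizing x y i with
  | nil => exact ⟨i, hx, hy⟩
  | cons e w ih =>
    rw [cylWeight] at hw
    obtain rfl := eq_of_mem_Ks hx (mem_Ks_of_p_ne_zero (left_ne_zero_of_mul hw))
    exact ih (S.w_maps e hx) (S.w_maps e hy) (right_ne_zero_of_mul hw)

/-- The expectation of `g` over the first `n` letters of the chain started at `x`. -/
noncomputable def wordMean (S : CMS K N E) (n : ℕ) (g : List E → ℝ≥0∞) (x : K) : ℝ≥0∞ :=
  ∑ w ∈ words E n, ENNReal.ofReal (S.cylWeight x w) * g w

variable {n : ℕ} {g h : List E → ℝ≥0∞} {x y : K}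

lemma wordMean_zero (S : CMS K N E) (g : List E → ℝ≥0∞) (x : K) : S.wordMean 0 g x = g [] := by
  simp [wordMean, sum_words_zero, cylWeight]

lemma wordMean_succ (S : CMS K N E) (n : ℕ) (g : List E → ℝ≥0∞) (x : K) :
    S.wordMean (n + 1) g x =
      ∑ e, ENNReal.ofReal (S.p e x) * S.wordMean n (fun w ↦ g (e :: w)) (S.w e x) := by
  simp only [wordMean, sum_words_succ, cylWeight, ENNReal.ofReal_mul (S.p_nonneg _ x),
    Finset.mul_sum, mul_assoc]

lemma wordMean_const (S : CMS K N E) (n : ℕ) (c : ℝ≥0∞) (x : K) :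
    S.wordMean n (fun _ ↦ c) x = c := by
  induction n generalizing x with
  | zero => exact S.wordMean_zero _ x
  | succ n ih => simp only [wordMean_succ, ih, ← Finset.sum_mul, S.sum_ofReal_p, one_mul]

lemma wordMean_mono (hgh : ∀ w, w.length = n → S.cylWeight x w ≠ 0 → g w ≤ h w) :
    S.wordMean n g x ≤ S.wordMean n h x := by
  refine Finset.sum_le_sum fun w hw ↦ ?_
  rcases eq_or_ne (S.cylWeight x w) 0 with h0 | h0
  · simp [h0]
  · exact mul_le_mul_right (hgh w (mem_words.1 hw) h0) _

lemma wordMean_add (S : CMS K N E) (n : ℕ) (g h : List E → ℝ≥0∞) (x : K) :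
    S.wordMean n (fun w ↦ g w + h w) x = S.wordMean n g x + S.wordMean n h x := by
  simp only [wordMean, mul_add, Finset.sum_add_distrib]

lemma wordMean_const_mul (S : CMS K N E) (n : ℕ) (c : ℝ≥0∞) (g : List E → ℝ≥0∞) (x : K) :
    S.wordMean n (fun w ↦ c * g w) x = c * S.wordMean n g x := by
  simp only [wordMean, Finset.mul_sum, mul_left_comm]

lemma wordMean_edist_wordMap_le {i : Fin N} (hx : x ∈ S.Ks i) (hy : y ∈ S.Ks i) (n : ℕ) :
    S.wordMean n (fun w ↦ edist (S.wordMap x w) (S.wordMap y w)) x ≤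
      ENNReal.ofReal S.a ^ n * edist x y := by
  induction n generalizing x y i with
  | zero => rw [wordMean_zero, pow_zero, one_mul, wordMap, wordMap, List.foldl_nil, List.foldl_nil]
  | succ n ih =>
    rw [wordMean_succ]
    calc ∑ e, ENNReal.ofReal (S.p e x) *
          S.wordMean n (fun w ↦ edist (S.wordMap x (e :: w)) (S.wordMap y (e :: w))) (S.w e x)
        ≤ ∑ e, ENNReal.ofReal (S.p e x) *
          (ENNReal.ofReal S.a ^ n * edist (S.w e x) (S.w e y)) := by
          refine Finset.sum_le_sum fun e _ ↦ ?_
          rcases eq_or_ne (S.p e x) 0 with h | h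
          · simp [h]
          obtain rfl := eq_of_mem_Ks hx (mem_Ks_of_p_ne_zero h)
          exact mul_le_mul_right (ih (S.w_maps e hx) (S.w_maps e hy)) _
      _ = ENNReal.ofReal S.a ^ n * ∑ e, ENNReal.ofReal (S.p e x) * edist (S.w e x) (S.w e y) := by
          simp only [Finset.mul_sum, mul_left_comm]
      _ ≤ ENNReal.ofReal S.a ^ n * (ENNReal.ofReal S.a * edist x y) :=
          mul_le_mul_right (sum_ofReal_mul_edist_le hx hy) _
      _ = _ := by rw [pow_succ, mul_assoc]

variable [Nonempty K]

lemma codePoint_eq_wordMap {w : List E} (hw : w ≠ []) (hx : S.cylWeight x w ≠ 0) :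
    S.codePoint xs w = S.wordMap (xs (S.vtx x)) w := by
  obtain ⟨e, v, rfl⟩ := List.exists_cons_of_ne_nil hw
  rw [cylWeight] at hx
  rw [codePoint, vtx_eq (mem_Ks_of_p_ne_zero (left_ne_zero_of_mul hx))]

lemma wordMean_edist_codePoint_le (hxs : ∀ i, xs i ∈ S.Ks i) (n : ℕ) (x : K) :
    S.wordMean (n + 1) (fun w ↦ edist (S.wordMap x w) (S.codePoint xs w)) x ≤
      ENNReal.ofReal S.a ^ (n + 1) * S.lyapunov xs x := by
  refine le_trans (wordMean_mono fun w hw hx ↦ ?_)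
    (wordMean_edist_wordMap_le (S.mem_Ks_vtx x) (hxs _) (n + 1))
  rw [codePoint_eq_wordMap (List.ne_nil_of_length_eq_add_one hw) hx]

lemma wordMean_edist_codePoint_tail_le (hxs : ∀ i, xs i ∈ S.Ks i) (n : ℕ) (x : K) :
    S.wordMean (n + 2) (fun w ↦ edist (S.codePoint xs w.tail) (S.codePoint xs w)) x ≤
      ENNReal.ofReal S.a ^ (n + 1) * (∑ e, ENNReal.ofReal (S.p e x) * S.lyapunov xs (S.w e x)) +
        ENNReal.ofReal S.a ^ (n + 2) * S.lyapunov xs x := by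
  calc _ ≤ S.wordMean (n + 2) (fun w ↦ edist (S.wordMap x w) (S.codePoint xs w.tail) +
          edist (S.wordMap x w) (S.codePoint xs w)) x :=
        wordMean_mono fun w _ _ ↦ edist_triangle_left _ _ _
    _ = ∑ e, ENNReal.ofReal (S.p e x) * S.wordMean (n + 1)
            (fun w ↦ edist (S.wordMap (S.w e x) w) (S.codePoint xs w)) (S.w e x) +
          S.wordMean (n + 2) (fun w ↦ edist (S.wordMap x w) (S.codePoint xs w)) x := by
        rw [wordMean_add, wordMean_succ S (n + 1)]
        rfl
    _ ≤ _ := by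
        rw [Finset.mul_sum]
        refine add_le_add (Finset.sum_le_sum fun e _ ↦ ?_)
          (wordMean_edist_codePoint_le hxs (n + 1) x)
        rw [mul_left_comm]
        exact mul_le_mul_right (wordMean_edist_codePoint_le hxs n (S.w e x)) _

end WordMean

section MarkovMeasure

variable {μ : Measure K}

lemma cylWeight_pair_eq_zero {e f : E} (h : S.τ e ≠ S.ι f) (x : K) :
    S.cylWeight x [e, f] = 0 := by
  by_contra h0
  rw [cylWeight, cylWeight] at h0
  exact h (eq_of_mem_Ks (S.w_maps e (mem_Ks_of_p_ne_zero (left_ne_zero_of_mul h0)))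
    (mem_Ks_of_p_ne_zero (left_ne_zero_of_mul (right_ne_zero_of_mul h0))))

lemma integrable_cylWeight (S : CMS K N E) (μ : Measure K) [IsFiniteMeasure μ] (w : List E) :
    Integrable (fun x ↦ S.cylWeight x w) μ :=
  integrable_of_mem_Icc (S.measurable_cylWeight w) fun x ↦ S.cylWeight_mem_Icc x w

variable [MeasurableSpace E] {M : Measure (ℤ → E)}

lemma IsGMarkovMeasure.measureReal_cyl (hM : S.IsGMarkovMeasure μ M) (m : ℤ) (w : List E) :
    M.real (cyl m w) = ∫ x, S.cylWeight x w ∂μ := by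
  rw [Measure.real, hM.measure_cyl,
    ENNReal.toReal_ofReal (integral_nonneg fun x ↦ (S.cylWeight_mem_Icc x w).1)]

lemma IsGMarkovMeasure.shiftInvariant [MeasurableSingletonClass E] (hM : S.IsGMarkovMeasure μ M) :
    ShiftInvariant M := by
  have := hM.1
  have hshift : Measurable (shiftL E) := measurable_shiftZ 1
  have := Measure.isProbabilityMeasure_map (μ := M) hshift.aemeasurable
  refine ext_of_measure_cyl fun m w ↦ ?_
  rw [Measure.map_apply hshift (measurableSet_cyl m w), hM.measure_cyl]
  change M (shiftZ E 1 ⁻¹' _) = _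
  rw [preimage_shiftZ_cyl, hM.measure_cyl]

lemma IsGMarkovMeasure.ae_mem_SigmaG (hM : S.IsGMarkovMeasure μ M) :
    ∀ᵐ σ ∂M, σ ∈ S.SigmaG := by
  have hpair (j : ℤ) (e f : E) (h : S.τ e ≠ S.ι f) : ∀ᵐ σ ∂M, σ ∉ cyl j [e, f] := by
    rw [← measure_eq_zero_iff_ae_notMem, hM.measure_cyl]
    simp [cylWeight_pair_eq_zero h]
  simp only [SigmaG, Set.mem_ofPred_eq]
  refine ae_all_iff.2 fun j ↦ ?_
  have hall : ∀ᵐ σ ∂M, ∀ e f, S.τ e ≠ S.ι f → σ ∉ cyl j [e, f] :=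
    ae_all_iff.2 fun e ↦ ae_all_iff.2 fun f ↦ by
      rcases eq_or_ne (S.τ e) (S.ι f) with h | h
      · exact .of_forall fun _ h' ↦ absurd h h'
      · exact (hpair j e f h).mono fun _ hσ _ ↦ hσ
  filter_upwards [hall] with σ hσ
  by_contra hne
  exact hσ _ _ hne (mem_cyl_cons.2 ⟨rfl, mem_cyl_singleton.2 rfl⟩)

variable [IsProbabilityMeasure μ]

lemma IsGMarkovMeasure.measure_cyl_eq_lintegral (hM : S.IsGMarkovMeasure μ M) (m : ℤ)
    (w : List E) : M (cyl m w) = ∫⁻ x, ENNReal.ofReal (S.cylWeight x w) ∂μ := by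
  rw [hM.measure_cyl, ofReal_integral_eq_lintegral_ofReal (S.integrable_cylWeight μ w)
    (.of_forall fun x ↦ (S.cylWeight_mem_Icc x w).1)]

variable [MeasurableSingletonClass E]

lemma IsGMarkovMeasure.lintegral_comp_window (hM : S.IsGMarkovMeasure μ M) (m : ℤ) (n : ℕ)
    (g : List E → ℝ≥0∞) : ∫⁻ σ, g (window m n σ) ∂M = ∫⁻ x, S.wordMean n g x ∂μ := by
  have hmeas (w : List E) : Measurable fun x ↦ ENNReal.ofReal (S.cylWeight x w) :=
    (S.measurable_cylWeight w).ennreal_ofReal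
  simp only [_root_.lintegral_comp_window, wordMean]
  rw [lintegral_finsetSum _ fun w _ ↦ (hmeas w).mul_const _]
  refine Finset.sum_congr rfl fun w _ ↦ ?_
  rw [lintegral_mul_const _ (hmeas w), hM.measure_cyl_eq_lintegral, mul_comm]

variable [Nonempty K] [BorelSpace K]

lemma IsGMarkovMeasure.lintegral_edist_codeSeq_le (hM : S.IsGMarkovMeasure μ M)
    (hxs : ∀ i, xs i ∈ S.Ks i) (hμ : S.adjoint μ = μ) (n : ℕ) :
    ∫⁻ σ, edist (S.codeSeq xs σ n) (S.codeSeq xs σ (n + 1)) ∂M ≤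
      ENNReal.ofReal S.a ^ n * (2 * S.momentBound xs) := by
  have hV := S.measurable_lyapunov xs
  have hUV : Measurable fun x ↦ ∑ e, ENNReal.ofReal (S.p e x) * S.lyapunov xs (S.w e x) :=
    Finset.measurable_sum _ fun e _ ↦ (S.p_meas e).ennreal_ofReal.mul (hV.comp (S.w_meas e))
  have hcode (σ : ℤ → E) : edist (S.codeSeq xs σ n) (S.codeSeq xs σ (n + 1)) =
      (fun w ↦ edist (S.codePoint xs w.tail) (S.codePoint xs w))
        (window (-((n + 1 : ℕ) : ℤ)) (n + 2) σ) := by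
    simp only [codeSeq_eq_codePoint, window_succ' (-((n + 1 : ℕ) : ℤ)), List.tail_cons]
    push_cast
    ring_nf
  rw [lintegral_congr hcode, hM.lintegral_comp_window (-((n + 1 : ℕ) : ℤ)) (n + 2) fun w ↦
    edist (S.codePoint xs w.tail) (S.codePoint xs w)]
  calc _ ≤ ∫⁻ x, (ENNReal.ofReal S.a ^ (n + 1) *
          (∑ e, ENNReal.ofReal (S.p e x) * S.lyapunov xs (S.w e x)) +
            ENNReal.ofReal S.a ^ (n + 2) * S.lyapunov xs x) ∂μ :=
        lintegral_mono fun x ↦ wordMean_edist_codePoint_tail_le hxs n x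
    _ = ENNReal.ofReal S.a ^ (n + 1) * ∫⁻ x, S.lyapunov xs x ∂μ +
          ENNReal.ofReal S.a ^ (n + 2) * ∫⁻ x, S.lyapunov xs x ∂μ := by
        rw [lintegral_add_right _ (hV.const_mul _), lintegral_const_mul _ hUV,
          lintegral_const_mul _ hV, ← S.lintegral_adjoint μ hV, hμ]
    _ ≤ ENNReal.ofReal S.a ^ n * S.momentBound xs + ENNReal.ofReal S.a ^ n * S.momentBound xs := by
        gcongr ?_ * ?_ + ?_ * ?_
        · exact pow_le_pow_right_of_le_one' S.ofReal_a_lt_one.le (by omega)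
        · exact lintegral_lyapunov_le hxs hμ
        · exact pow_le_pow_right_of_le_one' S.ofReal_a_lt_one.le (by omega)
        · exact lintegral_lyapunov_le hxs hμ
    _ = _ := by rw [two_mul, mul_add]

theorem IsGMarkovMeasure.ae_mem_Dset [CompleteSpace K] [SecondCountableTopology K]
    (hM : S.IsGMarkovMeasure μ M) (hxs : ∀ i, xs i ∈ S.Ks i) (hμ : S.adjoint μ = μ) :
    ∀ᵐ σ ∂M, σ ∈ S.Dset xs := by
  have hmeas (n : ℕ) : Measurable fun σ ↦ edist (S.codeSeq xs σ n) (S.codeSeq xs σ (n + 1)) :=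
    (S.measurable_codeSeq xs n).edist (S.measurable_codeSeq xs (n + 1))
  have hfin : ∫⁻ σ, ∑' n, edist (S.codeSeq xs σ n) (S.codeSeq xs σ (n + 1)) ∂M ≠ ⊤ := by
    rw [lintegral_tsum fun n ↦ (hmeas n).aemeasurable]
    refine ne_top_of_le_ne_top ?_
      (ENNReal.tsum_le_tsum fun n ↦ hM.lintegral_edist_codeSeq_le hxs hμ n)
    rw [ENNReal.tsum_mul_right, ENNReal.tsum_geometric]
    exact ENNReal.mul_ne_top (ENNReal.inv_ne_top.2 (tsub_pos_of_lt S.ofReal_a_lt_one).ne')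
      (ENNReal.mul_ne_top ENNReal.ofNat_ne_top (S.momentBound_ne_top xs))
  filter_upwards [hM.ae_mem_SigmaG, ae_lt_top (Measurable.tsum hmeas) hfin] with σ hσ hsum
  exact ⟨hσ, cauchySeq_tendsto_of_complete
    (cauchySeq_of_edist_le_of_tsum_ne_top _ (fun _ ↦ le_rfl) hsum.ne)⟩

end MarkovMeasure

section Variation

lemma exists_edist_p_le (hDini : ∀ e, DiniOn (S.p e) (S.Ks (S.ι e))) (e : E) {ε : ℝ≥0∞}
    (hε : 0 < ε) :
    ∃ L ≠ ⊤, ∀ i, ∀ x ∈ S.Ks i, ∀ y ∈ S.Ks i, edist (S.p e x) (S.p e y) ≤ ε + L * edist x y := by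
  have hone (x y : K) : edist (S.p e x) (S.p e y) ≤ 1 := by
    rw [edist_dist, ENNReal.ofReal_le_one]
    exact Real.dist_le_of_mem_Icc_01 ⟨S.p_nonneg e x, S.p_le_one e x⟩
      ⟨S.p_nonneg e y, S.p_le_one e y⟩
  obtain ⟨L, hL, hle⟩ := exists_edist_le_add_mul_edist
    ((hDini e).uniformContinuousOn (S.isBounded_image_p e _)) ENNReal.one_ne_top
    (fun x _ y _ ↦ hone x y) hε
  refine ⟨L, hL, fun i x hx y hy ↦ ?_⟩
  rcases eq_or_ne i (S.ι e) with rfl | hi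
  · exact hle x hx y hy
  · rw [p_eq_zero_of_ne hx hi.symm, p_eq_zero_of_ne hy hi.symm, edist_self]
    exact zero_le

variable [Nonempty K]

lemma wordMean_edist_p_le {ε L : ℝ≥0∞} {e : E} (hL : ∀ i, ∀ x ∈ S.Ks i, ∀ y ∈ S.Ks i,
    edist (S.p e x) (S.p e y) ≤ ε + L * edist x y) (hxs : ∀ i, xs i ∈ S.Ks i) (n : ℕ) (x : K) :
    S.wordMean (n + 1) (fun w ↦ edist (S.p e (S.wordMap x w)) (S.p e (S.codePoint xs w))) x ≤
      ε + L * (ENNReal.ofReal S.a ^ (n + 1) * S.lyapunov xs x) := by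
  calc _ ≤ S.wordMean (n + 1)
          (fun w ↦ ε + L * edist (S.wordMap x w) (S.codePoint xs w)) x := by
        refine wordMean_mono fun w hw hx ↦ ?_
        rw [codePoint_eq_wordMap (List.ne_nil_of_length_eq_add_one hw) hx]
        obtain ⟨j, hj, hj'⟩ := exists_wordMap_mem_Ks (S.mem_Ks_vtx x) (hxs _) hx
        exact hL j _ hj _ hj'
    _ = ε + L * S.wordMean (n + 1) (fun w ↦ edist (S.wordMap x w) (S.codePoint xs w)) x := by
        rw [wordMean_add, wordMean_const, wordMean_const_mul]
    _ ≤ _ := by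
        gcongr
        exact wordMean_edist_codePoint_le hxs n x

variable [MeasurableSpace E] {μ : Measure K} [IsProbabilityMeasure μ] {M : Measure (ℤ → E)}

lemma IsGMarkovMeasure.enorm_sub_predicted_le (hM : S.IsGMarkovMeasure μ M) (xs : Fin N → K)
    (w : List E) (e : E) :
    ‖M.real (cyl 0 (w ++ [e])) - S.predicted xs M w e‖ₑ ≤
      ∫⁻ x, ENNReal.ofReal (S.cylWeight x w) *
        edist (S.p e (S.wordMap x w)) (S.p e (S.codePoint xs w)) ∂μ := by
  rw [predicted, hM.measureReal_cyl, hM.measureReal_cyl, ← integral_mul_const,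
    ← integral_sub (S.integrable_cylWeight μ _) ((S.integrable_cylWeight μ w).mul_const _)]
  refine (enorm_integral_le_lintegral_enorm _).trans (lintegral_mono fun x ↦ ?_)
  rw [cylWeight_append_singleton, ← mul_sub, enorm_mul,
    Real.enorm_of_nonneg (S.cylWeight_mem_Icc x w).1, edist_eq_enorm_sub]

lemma IsGMarkovMeasure.enorm_variation_le (hM : S.IsGMarkovMeasure μ M) (xs : Fin N → K) (n : ℕ) :
    ‖S.variation xs M n‖ₑ ≤ ∑ e, ∫⁻ x, S.wordMean (n + 1)
      (fun w ↦ edist (S.p e (S.wordMap x w)) (S.p e (S.codePoint xs w))) x ∂μ := by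
  have hmeas (e : E) (w : List E) : Measurable fun x ↦ ENNReal.ofReal (S.cylWeight x w) *
      edist (S.p e (S.wordMap x w)) (S.p e (S.codePoint xs w)) :=
    (S.measurable_cylWeight w).ennreal_ofReal.mul
      (((S.p_meas e).comp (S.measurable_wordMap w)).edist measurable_const)
  calc _ ≤ ∑ w ∈ words E (n + 1), ∑ e, ‖M.real (cyl 0 (w ++ [e])) - S.predicted xs M w e‖ₑ := by
        refine (enorm_sum_le _ _).trans (Finset.sum_le_sum fun w _ ↦ (enorm_sum_le _ _).trans ?_)
        simp only [Real.enorm_abs, le_refl]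
    _ ≤ ∑ w ∈ words E (n + 1), ∑ e, ∫⁻ x, ENNReal.ofReal (S.cylWeight x w) *
          edist (S.p e (S.wordMap x w)) (S.p e (S.codePoint xs w)) ∂μ := by
        gcongr with w _ e
        exact hM.enorm_sub_predicted_le xs w e
    _ = _ := by
        rw [Finset.sum_comm]
        simp only [wordMean, lintegral_finsetSum _ fun w _ ↦ hmeas _ w]

variable [BorelSpace K]

theorem IsGMarkovMeasure.tendsto_variation (hM : S.IsGMarkovMeasure μ M)
    (hDini : ∀ e, DiniOn (S.p e) (S.Ks (S.ι e))) (hxs : ∀ i, xs i ∈ S.Ks i)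
    (hμ : S.adjoint μ = μ) : Tendsto (S.variation xs M) atTop (𝓝 0) := by
  have hV := S.measurable_lyapunov xs
  suffices h : ∀ e, Tendsto (fun n ↦ ∫⁻ x, S.wordMean (n + 1) (fun w ↦
      edist (S.p e (S.wordMap x w)) (S.p e (S.codePoint xs w))) x ∂μ) atTop (𝓝 0) by
    refine tendsto_zero_iff_enorm_tendsto_zero.2 (tendsto_of_tendsto_of_tendsto_of_le_of_le
      tendsto_const_nhds ?_ (fun _ ↦ zero_le) (hM.enorm_variation_le xs))
    simpa only [Finset.sum_const_zero] using tendsto_finsetSum Finset.univ fun e _ ↦ h e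
  refine fun e ↦ ENNReal.tendsto_nhds_zero.2 fun ε hε ↦ ?_
  obtain ⟨L, hLtop, hL⟩ := exists_edist_p_le hDini e (ENNReal.half_pos hε.ne')
  have hlim : Tendsto (fun n ↦ L * (ENNReal.ofReal S.a ^ (n + 1) * S.momentBound xs)) atTop
      (𝓝 0) := by
    have := (ENNReal.tendsto_pow_atTop_nhds_zero_of_lt_one S.ofReal_a_lt_one).comp
      (tendsto_add_atTop_nat 1)
    simpa using ENNReal.Tendsto.const_mul (ENNReal.Tendsto.mul_const this
      (.inr (S.momentBound_ne_top xs))) (.inr hLtop)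
  filter_upwards [ENNReal.tendsto_nhds_zero.1 hlim _ (ENNReal.half_pos hε.ne')] with n hn
  calc _ ≤ ∫⁻ x, (ε / 2 + L * (ENNReal.ofReal S.a ^ (n + 1) * S.lyapunov xs x)) ∂μ :=
        lintegral_mono fun x ↦ wordMean_edist_p_le hL hxs n x
    _ = ε / 2 + L * (ENNReal.ofReal S.a ^ (n + 1) * ∫⁻ x, S.lyapunov xs x ∂μ) := by
        rw [lintegral_add_left measurable_const, lintegral_const, measure_univ, mul_one,
          lintegral_const_mul _ (hV.const_mul _), lintegral_const_mul _ hV]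
    _ ≤ ε / 2 + L * (ENNReal.ofReal S.a ^ (n + 1) * S.momentBound xs) := by
        gcongr
        exact lintegral_lyapunov_le hxs hμ
    _ ≤ ε / 2 + ε / 2 := by gcongr
    _ = ε := ENNReal.add_halves ε

lemma IsGMarkovMeasure.cesaroNull_variation (hM : S.IsGMarkovMeasure μ M)
    (hDini : ∀ e, DiniOn (S.p e) (S.Ks (S.ι e))) (hxs : ∀ i, xs i ∈ S.Ks i)
    (hμ : S.adjoint μ = μ) : CesaroNull (S.variation xs M) :=
  (hM.tendsto_variation hDini hxs hμ).cesaro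

end Variation

end CMS

section FreeEnergy

variable {E : Type*} [Fintype E] [MeasurableSpace E] {u : (ℤ → E) → EReal} {Θ : Measure (ℤ → E)}

lemma freeEnergy_eq_bot (h : negPartInt u Θ = ⊤) : freeEnergy u Θ = ⊥ := by
  rw [freeEnergy, h, EReal.coe_ennreal_top, EReal.sub_top]

lemma pressure_eq_zero (hle : ∀ Λ, IsProbabilityMeasure Λ → ShiftInvariant Λ → freeEnergy u Λ ≤ 0)
    [IsProbabilityMeasure Θ] (hΘ : ShiftInvariant Θ) (hzero : freeEnergy u Θ = 0) :
    pressure u = 0 := by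
  refine le_antisymm (iSup₂_le fun Λ h ↦ hle Λ h.1 h.2) ?_
  rw [← hzero]
  exact le_iSup₂ (f := fun (Λ : Measure (ℤ → E)) (_ : IsProbabilityMeasure Λ ∧ ShiftInvariant Λ) ↦
    freeEnergy u Λ) Θ ⟨inferInstance, hΘ⟩

end FreeEnergy

namespace CMS

variable {K : Type*} [MetricSpace K] [MeasurableSpace K] {N : ℕ} {E : Type*} [Fintype E]
  {S : CMS K N E} {δ : ℝ} {xs : Fin N → K}

lemma integral_sum_p_mul_neg_log (S : CMS K N E) (μ : Measure K) [IsFiniteMeasure μ] :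
    ∫ x, ∑ e, S.p e x * -Real.log (S.p e x) ∂μ =
      -∑ e, ∫ x in S.Ks (S.ι e), S.p e x * Real.log (S.p e x) ∂μ := by
  have hint (e : E) : Integrable (fun x ↦ Real.negMulLog (S.p e x)) μ :=
    integrable_of_mem_Icc (Real.continuous_negMulLog.measurable.comp (S.p_meas e)) fun x ↦
      ⟨Real.negMulLog_nonneg (S.p_nonneg e x) (S.p_le_one e x),
        (Real.negMulLog_le_one_sub_self (S.p_nonneg e x)).trans (sub_le_self 1 (S.p_nonneg e x))⟩
  have hcell (e : E) : ∫ x in S.Ks (S.ι e), S.p e x * Real.log (S.p e x) ∂μ =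
      ∫ x, S.p e x * Real.log (S.p e x) ∂μ :=
    setIntegral_eq_integral_of_forall_compl_eq_zero fun x hx ↦ by rw [S.p_zero e x hx, zero_mul]
  simp only [hcell, ← Finset.sum_neg_distrib, ← integral_neg, mul_neg, ← neg_mul]
  exact integral_finsetSum _ fun e _ ↦ hint e

section Yset

lemma Yset_eq_iInter_preimage (S : CMS K N E) (xs : Fin N → K) :
    S.Yset xs = ⋂ n : ℤ, shiftZ E (-n) ⁻¹' S.Dset xs := by
  have himage (n : ℤ) : shiftZ E n '' S.Dset xs = shiftZ E (-n) ⁻¹' S.Dset xs :=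
    congrFun (Set.image_eq_preimage_of_inverse (f := shiftZ E n) (g := shiftZ E (-n))
      (fun σ ↦ funext fun j ↦ by simp only [shiftZ, neg_add_cancel_right])
      (fun σ ↦ funext fun j ↦ by simp only [shiftZ, add_neg_cancel_right])) _
  simp only [Yset, himage]

lemma Yset_subset_Dset (S : CMS K N E) (xs : Fin N → K) : S.Yset xs ⊆ S.Dset xs := fun σ hσ ↦ by
  rw [Yset_eq_iInter_preimage] at hσ
  simpa [shiftZ_zero] using Set.mem_iInter.1 hσ 0

variable [MeasurableSpace E] {Λ : Measure (ℤ → E)}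

lemma ae_mem_Yset (hinv : ShiftInvariant Λ) (hD : ∀ᵐ σ ∂Λ, σ ∈ S.Dset xs) :
    ∀ᵐ σ ∂Λ, σ ∈ S.Yset xs := by
  simp only [Yset_eq_iInter_preimage, Set.mem_iInter]
  exact ae_all_iff.2 fun n ↦ ae_of_ae_map (measurable_shiftZ (-n)).aemeasurable
    (by rwa [hinv.map_shiftZ])

variable [Nonempty K] [MeasurableSingletonClass E] [BorelSpace K]

section Measurability

variable [CompleteSpace K] [SecondCountableTopology K]

lemma measurableSet_Dset (S : CMS K N E) (xs : Fin N → K) : MeasurableSet (S.Dset xs) := by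
  have hSigmaG : MeasurableSet S.SigmaG := by
    rw [SigmaG, Set.ofPred_forall]
    exact MeasurableSet.iInter fun j ↦ measurableSet_eq_fun
      ((Measurable.of_discrete (f := S.τ)).comp (measurable_pi_apply j))
      ((Measurable.of_discrete (f := S.ι)).comp (measurable_pi_apply (j + 1)))
  exact hSigmaG.inter (measurableSet_exists_tendsto (S.measurable_codeSeq xs))

lemma measurableSet_Yset (S : CMS K N E) (xs : Fin N → K) : MeasurableSet (S.Yset xs) := by
  rw [Yset_eq_iInter_preimage]
  exact MeasurableSet.iInter fun n ↦ measurable_shiftZ (-n) (S.measurableSet_Dset xs)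

lemma ae_mem_Yset_of_negPartInt_ne_top (h : negPartInt (S.energyU xs) Λ ≠ ⊤) :
    ∀ᵐ σ ∂Λ, σ ∈ S.Yset xs := by
  by_contra hY
  have hcompl : Λ (S.Yset xs)ᶜ ≠ 0 := hY
  refine h (top_unique ?_)
  calc ⊤ = ∫⁻ σ, (S.Yset xs)ᶜ.indicator (fun _ ↦ ⊤) σ ∂Λ := by
        rw [lintegral_indicator_const (S.measurableSet_Yset xs).compl, ENNReal.top_mul hcompl]
    _ ≤ _ := lintegral_mono fun σ ↦ by by_cases hσ : σ ∈ S.Yset xs <;> simp [hσ, energyU]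

end Measurability

variable [IsProbabilityMeasure Λ]

lemma integrable_neg_log_p_F (hOpen : ∀ i, IsOpen (S.Ks i)) (hp : S.ProbBddBelow δ)
    (hxs : ∀ i, xs i ∈ S.Ks i) (hD : ∀ᵐ σ ∂Λ, σ ∈ S.Dset xs) :
    Integrable (fun σ ↦ -Real.log (S.p (σ 1) (S.F xs σ))) Λ := by
  have hmeas : Measurable fun q : E × K ↦ -Real.log (S.p q.1 q.2) :=
    measurable_from_prod_countable_right fun e ↦ (S.p_meas e).log.neg
  exact .of_bound (hmeas.comp_aemeasurable
      ((measurable_pi_apply 1).aemeasurable.prodMk (aemeasurable_F hD))).aestronglyMeasurable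
    (-Real.log δ) (hD.mono fun σ hσ ↦ hp.abs_neg_log_p_le _ (F_mem_Ks hOpen hxs hσ))

lemma negPartInt_energyU (hOpen : ∀ i, IsOpen (S.Ks i)) (hp : S.ProbBddBelow δ)
    (hxs : ∀ i, xs i ∈ S.Ks i) (hY : ∀ᵐ σ ∂Λ, σ ∈ S.Yset xs) :
    negPartInt (S.energyU xs) Λ =
      ENNReal.ofReal (∫ σ, -Real.log (S.p (σ 1) (S.F xs σ)) ∂Λ) := by
  rw [ofReal_integral_eq_lintegral_ofReal (integrable_neg_log_p_F hOpen hp hxs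
    (hY.mono fun _ hσ ↦ S.Yset_subset_Dset xs hσ)) (.of_forall fun σ ↦ S.neg_log_p_nonneg _ _)]
  refine lintegral_congr_ae (hY.mono fun σ hσ ↦ ?_)
  have hpos : 0 < S.p (σ 1) (S.F xs σ) :=
    hp.1.trans_le (hp.2 _ _ (F_mem_Ks hOpen hxs (S.Yset_subset_Dset xs hσ)))
  have hu : S.energyU xs σ = (Real.log (S.p (σ 1) (S.F xs σ)) : ℝ) := by
    rw [energyU, if_pos hσ, elog, if_neg hpos.not_ge]
  simp only [hu, EReal.coe_ne_bot, if_false, EReal.toReal_coe]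

lemma freeEnergy_energyU (hOpen : ∀ i, IsOpen (S.Ks i)) (hp : S.ProbBddBelow δ)
    (hxs : ∀ i, xs i ∈ S.Ks i) (hY : ∀ᵐ σ ∂Λ, σ ∈ S.Yset xs) :
    freeEnergy (S.energyU xs) Λ =
      (KSEntropy Λ - ∫ σ, -Real.log (S.p (σ 1) (S.F xs σ)) ∂Λ : ℝ) := by
  rw [freeEnergy, negPartInt_energyU hOpen hp hxs hY, EReal.coe_ennreal_ofReal,
    max_eq_left (integral_nonneg fun σ ↦ S.neg_log_p_nonneg _ _), ← EReal.coe_sub]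

variable [CompleteSpace K] [SecondCountableTopology K]

theorem freeEnergy_energyU_nonpos (hOpen : ∀ i, IsOpen (S.Ks i))
    (hDini : ∀ e, DiniOn (S.p e) (S.Ks (S.ι e))) (hp : S.ProbBddBelow δ)
    (hxs : ∀ i, xs i ∈ S.Ks i) (hinv : ShiftInvariant Λ) :
    freeEnergy (S.energyU xs) Λ ≤ 0 := by
  by_cases htop : negPartInt (S.energyU xs) Λ = ⊤
  · rw [freeEnergy_eq_bot htop]
    exact bot_le
  · have hY := ae_mem_Yset_of_negPartInt_ne_top htop
    rw [freeEnergy_energyU hOpen hp hxs hY]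
    exact_mod_cast sub_nonpos.2 (KSEntropy_le_integral_neg_log_p hOpen hDini hp hxs hinv
      (hY.mono fun _ hσ ↦ S.Yset_subset_Dset xs hσ))

theorem freeEnergy_energyU_eq_zero_iff (hOpen : ∀ i, IsOpen (S.Ks i))
    (hDini : ∀ e, DiniOn (S.p e) (S.Ks (S.ι e))) (hp : S.ProbBddBelow δ)
    (hxs : ∀ i, xs i ∈ S.Ks i) (hinv : ShiftInvariant Λ) :
    freeEnergy (S.energyU xs) Λ = 0 ↔
      (∀ᵐ σ ∂Λ, σ ∈ S.Dset xs) ∧ CesaroNull (S.variation xs Λ) := by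
  have hiff (hD : ∀ᵐ σ ∂Λ, σ ∈ S.Dset xs) :
      freeEnergy (S.energyU xs) Λ = 0 ↔ CesaroNull (S.variation xs Λ) := by
    rw [freeEnergy_energyU hOpen hp hxs (ae_mem_Yset hinv hD), EReal.coe_eq_zero, sub_eq_zero,
      KSEntropy_eq_integral_neg_log_p_iff hOpen hDini hp hxs hinv hD]
  refine ⟨fun hzero ↦ ?_, fun h ↦ (hiff h.1).2 h.2⟩
  have hD : ∀ᵐ σ ∂Λ, σ ∈ S.Dset xs := by
    refine (ae_mem_Yset_of_negPartInt_ne_top fun htop ↦ ?_).mono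
      fun _ hσ ↦ S.Yset_subset_Dset xs hσ
    rw [freeEnergy_eq_bot htop] at hzero
    exact EReal.bot_ne_zero hzero
  exact ⟨hD, (hiff hD).1 hzero⟩

end Yset

section EquilibriumState

variable [Nonempty K] [BorelSpace K] [MeasurableSpace E] [MeasurableSingletonClass E]
  {Λ : Measure (ℤ → E)} [IsProbabilityMeasure Λ]

theorem KSEntropy_eq_neg_sum_integral (hOpen : ∀ i, IsOpen (S.Ks i))
    (hDini : ∀ e, DiniOn (S.p e) (S.Ks (S.ι e))) (hp : S.ProbBddBelow δ)
    (hxs : ∀ i, xs i ∈ S.Ks i) (hinv : ShiftInvariant Λ) (hD : ∀ᵐ σ ∂Λ, σ ∈ S.Dset xs)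
    (hnull : CesaroNull (S.variation xs Λ)) :
    KSEntropy Λ =
      -∑ e, ∫ x in S.Ks (S.ι e), S.p e x * Real.log (S.p e x) ∂(Λ.map (S.F xs)) := by
  have := Measure.isProbabilityMeasure_map (μ := Λ) (aemeasurable_F hD)
  have hbound (e : E) (x : K) : |-Real.log (S.p e x)| ≤ |Real.log δ| := by
    by_cases hx : x ∈ S.Ks (S.ι e)
    · exact (hp.abs_neg_log_p_le e hx).trans (neg_le_abs _)
    · simp [S.p_zero e x hx]
  rw [(KSEntropy_eq_integral_neg_log_p_iff hOpen hDini hp hxs hinv hD).2 hnull,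
    integral_comp_F_eq_integral_map_F hOpen hDini hxs hinv hD hnull
      (Φ := fun e x ↦ -Real.log (S.p e x))
      (fun e ↦ ((continuous_p hOpen hDini e).continuousOn.log fun x hx ↦
        (hp.1.trans_le (hp.2 e x hx)).ne').neg) hbound, integral_sum_p_mul_neg_log]

variable {μ : Measure K} [IsProbabilityMeasure μ]

theorem map_F_eq (hirr : S.IrreducibleGraph) (hOpen : ∀ i, IsOpen (S.Ks i))
    (hDini : ∀ e, DiniOn (S.p e) (S.Ks (S.ι e))) (hp : S.ProbBddBelow δ)
    (hxs : ∀ i, xs i ∈ S.Ks i) (hμ : S.adjoint μ = μ) (hinv : ShiftInvariant Λ)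
    (hD : ∀ᵐ σ ∂Λ, σ ∈ S.Dset xs) (hnull : CesaroNull (S.variation xs Λ)) :
    Λ.map (S.F xs) = μ := by
  have := Measure.isProbabilityMeasure_map (μ := Λ) (aemeasurable_F hD)
  exact invariant_measure_unique hirr hDini hp
    (adjoint_map_F hOpen hDini hp hxs hinv hD hnull) hμ

theorem IsGMarkovMeasure.eq_of_cesaroNull_variation {M : Measure (ℤ → E)}
    (hM : S.IsGMarkovMeasure μ M) (hirr : S.IrreducibleGraph) (hOpen : ∀ i, IsOpen (S.Ks i))
    (hDini : ∀ e, DiniOn (S.p e) (S.Ks (S.ι e))) (hp : S.ProbBddBelow δ)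
    (hxs : ∀ i, xs i ∈ S.Ks i) (hμ : S.adjoint μ = μ) (hinv : ShiftInvariant Λ)
    (hD : ∀ᵐ σ ∂Λ, σ ∈ S.Dset xs) (hnull : CesaroNull (S.variation xs Λ)) : Λ = M := by
  have := hM.1
  refine ext_of_measure_cyl fun m w ↦ (measureReal_eq_measureReal_iff).1 ?_
  rw [hinv.measureReal_cyl, hM.measureReal_cyl,
    measureReal_cyl_eq_integral_map_F hOpen hDini hp hxs hinv hD hnull,
    map_F_eq hirr hOpen hDini hp hxs hμ hinv hD hnull]

end EquilibriumState

end CMS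

theorem cms_irreducible_unique_equilibrium
    {K : Type*} [MetricSpace K] [MeasurableSpace K] [BorelSpace K] [Nonempty K]
    {N : ℕ} {E : Type*} [Fintype E] [MeasurableSpace E] (S : CMS K N E)
    (hirr : S.IrreducibleGraph)
    (hProper : ∀ A : Set K, Bornology.IsBounded A → IsCompact (closure A))
    (hOpen : ∀ i, IsOpen (S.Ks i))
    (hDini : ∀ e, DiniOn (S.p e) (S.Ks (S.ι e)))
    (δ : ℝ) (hδ : 0 < δ) (hp : ∀ e, ∀ x ∈ S.Ks (S.ι e), δ ≤ S.p e x)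
    (hsurj : Function.Surjective S.ι)
    (xs : Fin N → K) (hxs : ∀ i, xs i ∈ S.Ks i) :
    (∃! μ : Measure K, IsProbabilityMeasure μ ∧ S.adjoint μ = μ) ∧
    ∀ μ : Measure K, IsProbabilityMeasure μ → S.adjoint μ = μ →
      ∀ M : Measure (ℤ → E), S.IsGMarkovMeasure μ M →
        (IsEquilibrium (S.energyU xs) M ∧
          ∀ Λ : Measure (ℤ → E), IsEquilibrium (S.energyU xs) Λ → Λ = M) ∧
        pressure (S.energyU xs) = 0 ∧
        Measure.map (S.F xs) M = μ ∧
        KSEntropy M = -∑ e, ∫ x in S.Ks (S.ι e), S.p e x * Real.log (S.p e x) ∂μ := by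
  have : ProperSpace K := properSpace_of_isCompact_closure hProper
  have : SecondCountableTopology K := secondCountable_of_proper
  have hb : S.ProbBddBelow δ := ⟨hδ, hp⟩
  obtain ⟨μ₀, hμ₀, hμ₀_inv⟩ := S.exists_invariant hOpen hDini hb
  refine ⟨⟨μ₀, ⟨hμ₀, hμ₀_inv⟩, fun ν ⟨hν, hν_inv⟩ ↦
    CMS.invariant_measure_unique hirr hDini hb hν_inv hμ₀_inv⟩, fun μ hμ hμ_inv M hM ↦ ?_⟩
  have := hM.1
  have := hM.measurableSingletonClass hb hirr hμ_inv
  have hM_inv := hM.shiftInvariant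
  have hM_code := hM.ae_mem_Dset hxs hμ_inv
  have hM_null := hM.cesaroNull_variation hDini hxs hμ_inv
  have hM_map := CMS.map_F_eq hirr hOpen hDini hb hxs hμ_inv hM_inv hM_code hM_null
  have hM_free := (CMS.freeEnergy_energyU_eq_zero_iff hOpen hDini hb hxs hM_inv).2
    ⟨hM_code, hM_null⟩
  have hpressure : pressure (S.energyU xs) = 0 := pressure_eq_zero
    (fun Λ _ hΛ ↦ CMS.freeEnergy_energyU_nonpos hOpen hDini hb hxs hΛ) hM_inv hM_free
  refine ⟨⟨⟨hM.1, hM_inv, hM_free.trans hpressure.symm⟩, ?_⟩, hpressure, hM_map, ?_⟩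
  · rintro Λ ⟨_, hΛ_inv, hΛ_free⟩
    obtain ⟨hΛ_code, hΛ_null⟩ := (CMS.freeEnergy_energyU_eq_zero_iff hOpen hDini hb hxs hΛ_inv).1
      (hΛ_free.trans hpressure)
    exact hM.eq_of_cesaroNull_variation hirr hOpen hDini hb hxs hμ_inv hΛ_inv hΛ_code hΛ_null
  · rw [CMS.KSEntropy_eq_neg_sum_integral hOpen hDini hb hxs hM_inv hM_code hM_null, hM_map]
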